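/- arXiv:1408.0235 — 3 statements merged into one kernel-verified Lean document; each statement's English description precedes it below -/
import Mathlib

section
/- Let S be a nonempty finite set of positive integers and let d be the GF(2)-dimension attached to S as in the context. Then the set of odd primes p such that χ_p(z) = 1 for every z ∈ S has natural density 2^{-d} in the primes. -/
section Aux

open MeasureTheory Filter Topology Complex Set


noncomputable def fejerK (v : ℝ) : ℝ := Real.sinc (v / 2) ^ 2

lemma fejerK_nonneg (v : ℝ) : 0 ≤ fejerK v := sq_nonneg _

lemma fejerK_continuous : Continuous fejerK := by
  unfold fejerK
  exact (Real.continuous_sinc.comp (continuous_id.div_const 2)).pow 2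

lemma fejerK_le_one (v : ℝ) : fejerK v ≤ 1 := by
  unfold fejerK
  exact (sq_le_one_iff_abs_le_one _).2 (Real.abs_sinc_le_one _)

lemma fejerK_bound (v : ℝ) : fejerK v ≤ 5 * (1 + v ^ 2)⁻¹ := by
  have h1 := fejerK_le_one v
  have h2 : fejerK v * v ^ 2 ≤ 4 := by
    rcases eq_or_ne v 0 with rfl | hv
    · simp
    · have : fejerK v * v ^ 2 = 4 * Real.sin (v / 2) ^ 2 := by
        unfold fejerK
        rw [Real.sinc_of_ne_zero (by simpa using hv)]
        field_simp
        ring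
      rw [this]
      nlinarith [Real.sin_sq_le_one (v / 2)]
  rw [← div_eq_mul_inv, le_div_iff₀ (by positivity)]
  linarith

lemma fejerK_integrable : Integrable fejerK := by
  refine (integrable_inv_one_add_sq.const_mul 5).mono' fejerK_continuous.aestronglyMeasurable ?_
  refine Eventually.of_forall fun v => ?_
  rw [Real.norm_of_nonneg (fejerK_nonneg v)]
  exact fejerK_bound v

lemma fejerK_half (a : ℂ) (ha : a ≠ 0) :
    ∫ t in (0 : ℝ)..1, ((1 - t : ℝ) : ℂ) * cexp (t * a) = (cexp a - 1 - a) / a ^ 2 := by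
  have hd : ∀ t ∈ Set.uIcc (0 : ℝ) 1, HasDerivAt
      (fun t : ℝ => ((1 - t : ℝ) : ℂ) * cexp (t * a) / a + cexp (t * a) / a ^ 2)
      (((1 - t : ℝ) : ℂ) * cexp (t * a)) t := by
    intro t _
    have h0 : HasDerivAt (fun t : ℝ => (t : ℂ)) 1 t := Complex.ofRealCLM.hasDerivAt
    have h1 : HasDerivAt (fun t : ℝ => cexp (t * a)) (cexp (t * a) * (1 * a)) t :=
      (h0.mul_const a).cexp
    have h2 : HasDerivAt (fun t : ℝ => ((1 - t : ℝ) : ℂ)) (-1) t := by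
      simpa using h0.const_sub 1
    convert! ((h2.mul h1).div_const a).add (h1.div_const (a ^ 2)) using 1
    field_simp
    ring
  rw [intervalIntegral.integral_eq_sub_of_hasDerivAt hd]
  · simp
    field_simp
    ring
  · apply Continuous.intervalIntegrable
    fun_prop

lemma fejerK_fourier (v : ℝ) :
    ∫ t in (-1 : ℝ)..1, ((1 - |t| : ℝ) : ℂ) * cexp (-(t * v) * I) = (fejerK v : ℂ) := by
  have hc : Continuous fun t : ℝ => ((1 - |t| : ℝ) : ℂ) * cexp (-(t * v) * I) := by fun_prop
  rw [← intervalIntegral.integral_add_adjacent_intervals (b := 0)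
    (hc.intervalIntegrable _ _) (hc.intervalIntegrable _ _)]
  have e1 : ∫ t in (-1 : ℝ)..0, ((1 - |t| : ℝ) : ℂ) * cexp (-(t * v) * I) =
      ∫ t in (0 : ℝ)..1, ((1 - t : ℝ) : ℂ) * cexp (t * (v * I)) := by
    have := intervalIntegral.integral_comp_neg (a := 0) (b := 1)
      (fun t : ℝ => ((1 - |t| : ℝ) : ℂ) * cexp (-(t * v) * I))
    rw [neg_zero] at this
    rw [← this]
    refine intervalIntegral.integral_congr fun t ht => ?_
    rw [Set.uIcc_of_le zero_le_one] at ht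
    simp only [abs_neg, abs_of_nonneg ht.1]
    congr 2
    push_cast
    ring
  have e2 : ∫ t in (0 : ℝ)..1, ((1 - |t| : ℝ) : ℂ) * cexp (-(t * v) * I) =
      ∫ t in (0 : ℝ)..1, ((1 - t : ℝ) : ℂ) * cexp (t * (-(v * I))) := by
    refine intervalIntegral.integral_congr fun t ht => ?_
    rw [Set.uIcc_of_le zero_le_one] at ht
    simp only [abs_of_nonneg ht.1]
    congr 2
    ring
  rw [e1, e2]
  rcases eq_or_ne v 0 with rfl | hv
  · simp only [fejerK]
    have h1 : ∫ t in (0 : ℝ)..1, ((1 - t : ℝ) : ℂ) = 1 / 2 := by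
      rw [intervalIntegral.integral_ofReal, intervalIntegral.integral_sub (by simp) (by simp),
        integral_id]
      norm_num
    simp only [ofReal_zero, zero_mul, neg_zero, mul_zero, Complex.exp_zero, mul_one, h1]
    norm_num
  · have hvI : (v : ℂ) * I ≠ 0 := by simp [hv]
    rw [fejerK_half _ hvI, fejerK_half _ (neg_ne_zero.2 hvI)]
    have hcos : Complex.cos v = 1 - 2 * Complex.sin (v / 2) ^ 2 := by
      have := Complex.cos_sq' ((v : ℂ) / 2)
      have h2 := Complex.cos_two_mul ((v : ℂ) / 2)
      rw [mul_div_cancel₀ _ two_ne_zero] at h2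
      rw [h2, this]; ring
    have hexp : cexp (v * I) + cexp (-(v * I)) = 2 * Complex.cos v := by
      rw [Complex.cos]
      ring_nf
    have hvc : (v : ℂ) ≠ 0 := by exact_mod_cast hv
    have : (fejerK v : ℂ) = 4 * Complex.sin (v / 2) ^ 2 / v ^ 2 := by
      unfold fejerK
      rw [Real.sinc_of_ne_zero (by simpa using hv)]
      push_cast
      field_simp
      ring
    rw [this, neg_sq, ← add_div, mul_pow, I_sq]
    have : cexp (v * I) - 1 - v * I + (cexp (-(v * I)) - 1 - -(v * I)) =
      -4 * Complex.sin (v / 2) ^ 2 := by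
      linear_combination hexp + 2 * hcos
    rw [this]
    field_simp


/-- Fubini step. -/
lemma wi_fubini {h : ℝ → ℝ} (hm : Measurable h) {C : ℝ} (hC : ∀ u, |h u| ≤ C) {G : ℂ → ℂ}
    (hG : ∀ w : ℂ, 0 < w.re → ∫ u in Ioi (0 : ℝ), (h u : ℂ) * cexp (-w * u) = G w)
    (T y : ℝ) {ε : ℝ} (hε : 0 < ε) :
    ∫ u in Ioi (0 : ℝ), (h u : ℂ) * cexp (-ε * u) * (fejerK (T * (u - y)) : ℂ) =
      ∫ t in (-1 : ℝ)..1, ((1 - |t| : ℝ) : ℂ) * cexp (t * T * y * I) * G (ε + t * T * I) := by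
  have hpt : ∀ u : ℝ, (h u : ℂ) * cexp (-ε * u) * (fejerK (T * (u - y)) : ℂ) =
      ∫ t in Ioc (-1 : ℝ) 1, ((1 - |t| : ℝ) : ℂ) * cexp (t * T * y * I) *
        ((h u : ℂ) * cexp (-(ε + t * T * I) * u)) := by
    intro u
    rw [← fejerK_fourier, intervalIntegral.integral_of_le (by norm_num), ← integral_const_mul]
    refine setIntegral_congr_fun measurableSet_Ioc fun t _ => ?_
    have : cexp (-ε * u) * cexp (-(t * ((T * (u - y) : ℝ) : ℂ)) * I) =
        cexp (t * T * y * I) * cexp (-(ε + t * T * I) * u) := by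
      rw [← Complex.exp_add, ← Complex.exp_add]
      congr 1
      push_cast
      ring
    linear_combination (h u : ℂ) * ((1 - |t| : ℝ) : ℂ) * this
  simp_rw [hpt]
  rw [integral_integral_swap, intervalIntegral.integral_of_le (by norm_num)]
  · refine setIntegral_congr_fun measurableSet_Ioc fun t _ => ?_
    rw [integral_const_mul, hG _ (by simpa using hε)]
  · have hC0 : 0 ≤ C := (abs_nonneg _).trans (hC 0)
    have hi1 : Integrable (fun u : ℝ => C * Real.exp (-ε * u)) (volume.restrict (Ioi 0)) :=
      (integrableOn_exp_mul_Ioi (neg_lt_zero.2 hε) 0).const_mul C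
    have hi2 : Integrable (fun _ : ℝ => (1 : ℝ)) (volume.restrict (Ioc (-1) 1)) :=
      integrable_const _
    refine (hi1.mul_prod hi2).mono' ?_ ?_
    · apply Measurable.aestronglyMeasurable
      unfold Function.uncurry
      fun_prop
    · rw [Measure.prod_restrict]
      refine ae_restrict_of_forall_mem (measurableSet_Ioi.prod measurableSet_Ioc) ?_
      rintro ⟨u, t⟩ ⟨hu, ht⟩
      simp only [Function.uncurry, norm_mul, Complex.norm_exp, Complex.norm_real, mul_one]
      have ht1 : |t| ≤ 1 := abs_le.2 ⟨ht.1.le, ht.2⟩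
      have hr : (t * T * y * I : ℂ).re = 0 := by simp
      have hr2 : (-(ε + t * T * I) * u : ℂ).re = -ε * u := by simp
      rw [hr, hr2, Real.exp_zero, mul_one, Real.norm_of_nonneg (by linarith)]
      have := hC u
      have h1 : (1 - |t|) ≤ 1 := by linarith [abs_nonneg t]
      have h2 : 0 ≤ |h u| * Real.exp (-ε * u) := by positivity
      calc (1 - |t|) * (‖h u‖ * Real.exp (-ε * u)) ≤ 1 * (|h u| * Real.exp (-ε * u)) :=
            mul_le_mul_of_nonneg_right h1 h2
        _ ≤ _ := by rw [one_mul]; gcongr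

lemma fejerK_comp_integrable {T : ℝ} (hT : 0 < T) (y : ℝ) :
    Integrable fun u => fejerK (T * (u - y)) := by
  have := (fejerK_integrable.comp_mul_left' hT.ne').comp_sub_right y
  exact this

/-- Limit `ε → 0`. -/
lemma wi_limit {h : ℝ → ℝ} (hm : Measurable h) {C : ℝ} (hC : ∀ u, |h u| ≤ C) {G : ℂ → ℂ}
    (hGc : ContinuousOn G {w | 0 ≤ w.re})
    (hG : ∀ w : ℂ, 0 < w.re → ∫ u in Ioi (0 : ℝ), (h u : ℂ) * cexp (-w * u) = G w)
    {T : ℝ} (hT : 0 < T) (y : ℝ) :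
    ∫ u in Ioi (0 : ℝ), (h u : ℂ) * (fejerK (T * (u - y)) : ℂ) =
      ∫ t in (-1 : ℝ)..1, ((1 - |t| : ℝ) : ℂ) * cexp (t * T * y * I) * G (t * T * I) := by
  have hC0 : 0 ≤ C := (abs_nonneg _).trans (hC 0)
  have l1 : Tendsto (fun ε : ℝ => ∫ u in Ioi (0 : ℝ),
      (h u : ℂ) * cexp (-ε * u) * (fejerK (T * (u - y)) : ℂ)) (𝓝[>] 0)
      (𝓝 (∫ u in Ioi (0 : ℝ), (h u : ℂ) * (fejerK (T * (u - y)) : ℂ))) := by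
    refine tendsto_integral_filter_of_dominated_convergence
      (fun u => C * fejerK (T * (u - y))) ?_ ?_ ?_ ?_
    · refine Eventually.of_forall fun ε => Measurable.aestronglyMeasurable ?_
      have := fejerK_continuous.measurable
      fun_prop
    · filter_upwards [self_mem_nhdsWithin] with ε hε
      refine ae_restrict_of_forall_mem measurableSet_Ioi fun u hu => ?_
      rw [norm_mul, norm_mul, Complex.norm_exp, Complex.norm_real, Complex.norm_real,
        Real.norm_of_nonneg (fejerK_nonneg _)]
      have hr2 : (-ε * u : ℂ).re = -ε * u := by simp
      rw [hr2]
      have : Real.exp (-ε * u) ≤ 1 := Real.exp_le_one_iff.2 (by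
        have := mul_pos (show 0 < ε from hε) (show 0 < u from hu)
        linarith)
      have hK := fejerK_nonneg (T * (u - y))
      gcongr
      calc ‖h u‖ * Real.exp (-ε * u) ≤ C * 1 := by
            gcongr
            exact hC u
        _ = C := mul_one _
    · exact ((fejerK_comp_integrable hT y).const_mul C).integrableOn
    · refine Eventually.of_forall fun u => ?_
      have : Continuous fun ε : ℝ => (h u : ℂ) * cexp (-ε * u) * (fejerK (T * (u - y)) : ℂ) := by
        fun_prop
      have := (this.tendsto 0).mono_left (nhdsWithin_le_nhds (s := Ioi (0 : ℝ)))
      simpa using this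
  have l2 : Tendsto (fun ε : ℝ => ∫ t in (-1 : ℝ)..1,
      ((1 - |t| : ℝ) : ℂ) * cexp (t * T * y * I) * G (ε + t * T * I)) (𝓝[>] 0)
      (𝓝 (∫ t in (-1 : ℝ)..1, ((1 - |t| : ℝ) : ℂ) * cexp (t * T * y * I) * G (t * T * I))) := by
    have hcont : ContinuousOn (fun p : ℝ × ℝ => G (p.1 + p.2 * T * I)) (Ici 0 ×ˢ univ) := by
      refine hGc.comp (by fun_prop) ?_
      rintro ⟨a, b⟩ ⟨ha, -⟩
      simpa using ha
    obtain ⟨D, hD⟩ := (isCompact_Icc.prod isCompact_Icc :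
      IsCompact (Icc (0 : ℝ) 1 ×ˢ Icc (-1 : ℝ) 1)).exists_bound_of_continuousOn
      (hcont.mono (prod_mono (fun x hx => hx.1) (subset_univ _)))
    refine intervalIntegral.tendsto_integral_filter_of_dominated_convergence
      (fun t => D) ?_ ?_ ?_ ?_
    · filter_upwards [self_mem_nhdsWithin] with ε hε
      apply Continuous.aestronglyMeasurable
      have : Continuous fun t : ℝ => G (ε + t * T * I) := by
        refine hGc.comp_continuous (by fun_prop) fun t => ?_
        simpa using (le_of_lt hε : (0 : ℝ) ≤ ε)
      exact Continuous.mul (by fun_prop) this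
    · filter_upwards [Ioc_mem_nhdsGT (show (0 : ℝ) < 1 by norm_num)] with ε hε
      refine Eventually.of_forall fun t ht => ?_
      rw [uIoc_of_le (by norm_num)] at ht
      have ht1 : |t| ≤ 1 := abs_le.2 ⟨ht.1.le, ht.2⟩
      have hr : (t * T * y * I : ℂ).re = 0 := by simp
      rw [norm_mul, norm_mul, Complex.norm_exp, hr, Real.exp_zero, Complex.norm_real,
        Real.norm_of_nonneg (by linarith), mul_one]
      have hb := hD (ε, t) ⟨⟨hε.1.le, hε.2⟩, ⟨ht.1.le, ht.2⟩⟩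
      simp only at hb
      calc (1 - |t|) * ‖G (ε + t * T * I)‖ ≤ 1 * ‖G (ε + t * T * I)‖ := by
            gcongr
            linarith [abs_nonneg t]
        _ ≤ D := by rw [one_mul]; exact hb
    · exact intervalIntegrable_const
    · refine Eventually.of_forall fun t ht => ?_
      refine Tendsto.const_mul _ ?_
      have h1 : ContinuousWithinAt (fun ε : ℝ => G (ε + t * T * I)) (Ici 0) 0 := by
        have := hcont.comp (f := fun ε : ℝ => (ε, t)) (s := Ici 0) (by fun_prop)
          (fun x hx => ⟨hx, mem_univ _⟩)
        exact this 0 self_mem_Ici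
      have h2 := (h1.mono Ioi_subset_Ici_self).tendsto
      simpa using h2
  refine tendsto_nhds_unique l1 (l2.congr' ?_)
  filter_upwards [self_mem_nhdsWithin] with ε hε
  exact (wi_fubini hm hC hG T y hε).symm

/-- Riemann-Lebesgue step. -/
lemma wi_tendsto {h : ℝ → ℝ} (hm : Measurable h) {C : ℝ} (hC : ∀ u, |h u| ≤ C) {G : ℂ → ℂ}
    (hGc : ContinuousOn G {w | 0 ≤ w.re})
    (hG : ∀ w : ℂ, 0 < w.re → ∫ u in Ioi (0 : ℝ), (h u : ℂ) * cexp (-w * u) = G w)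
    {T : ℝ} (hT : 0 < T) :
    Tendsto (fun y => ∫ u in Ioi (0 : ℝ), h u * fejerK (T * (u - y))) atTop (𝓝 0) := by
  have key := Real.tendsto_integral_exp_smul_cocompact
    ((Ioc (-1 : ℝ) 1).indicator fun t : ℝ => ((1 - |t| : ℝ) : ℂ) * G (t * T * I))
  have hy : Tendsto (fun y : ℝ => -(T / (2 * Real.pi)) * y) atTop (cocompact ℝ) := by
    refine (Tendsto.const_mul_atTop_of_neg ?_ tendsto_id).mono_right atBot_le_cocompact
    have := Real.pi_pos
    have : 0 < T / (2 * Real.pi) := by positivity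
    linarith
  have := key.comp hy
  have h3 : Tendsto (fun y : ℝ => ((∫ u in Ioi (0 : ℝ), h u * fejerK (T * (u - y)) : ℝ) : ℂ))
      atTop (𝓝 0) := by
    refine this.congr fun y => ?_
    rw [← integral_complex_ofReal]
    push_cast
    rw [wi_limit hm hC hGc hG hT y, intervalIntegral.integral_of_le (by norm_num),
      ← integral_indicator measurableSet_Ioc]
    simp only [Function.comp]
    congr 1
    ext t
    by_cases ht : t ∈ Ioc (-1 : ℝ) 1
    · rw [indicator_of_mem ht, indicator_of_mem ht, Circle.smul_def, Real.fourierChar_apply,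
        smul_eq_mul]
      have : (2 * Real.pi * -(t * (-(T / (2 * Real.pi)) * y)) : ℝ) = t * T * y := by
        have := Real.pi_pos
        field_simp
      rw [this]
      push_cast
      ring
    · rw [indicator_of_notMem ht, indicator_of_notMem ht, smul_zero]
  have := (Complex.continuous_re.tendsto 0).comp h3
  simpa [Function.comp_def] using this


lemma wi_smoothed {B : ℝ → ℝ} (hm : Measurable B) {C c : ℝ} (hB0 : ∀ u, 0 ≤ B u)
    (hC : ∀ u, B u ≤ C) (hneg : ∀ u ≤ 0, B u = 0) {G : ℂ → ℂ}
    (hGc : ContinuousOn G {w | 0 ≤ w.re})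
    (hG : ∀ w : ℂ, 0 < w.re →
      ∫ u in Ioi (0 : ℝ), ((B u - c : ℝ) : ℂ) * cexp (-w * u) = G w)
    {T : ℝ} (hT : 0 < T) :
    Tendsto (fun y => ∫ v, B (y + v / T) * fejerK v) atTop (𝓝 (c * ∫ v, fejerK v)) := by
  have hbd : ∀ u, |B u - c| ≤ C + |c| := fun u => by
    have := abs_sub (B u) c
    rw [abs_of_nonneg (hB0 u)] at this
    linarith [hC u]
  have h1 := (wi_tendsto (h := fun u => B u - c) (hm.sub_const c) hbd hGc hG hT).const_mul T
  rw [mul_zero] at h1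
  have hsub : ∀ (f : ℝ → ℝ) (y : ℝ), T * ∫ u in Ioi (0 : ℝ), f u * fejerK (T * (u - y)) =
      ∫ v, (Ioi (0 : ℝ)).indicator f (y + v / T) * fejerK v := by
    intro f y
    rw [← integral_indicator measurableSet_Ioi]
    have e1 := integral_add_left_eq_self (μ := volume)
      ((Ioi (0 : ℝ)).indicator fun u => f u * fejerK (T * (u - y))) y
    have e2 := Measure.integral_comp_div
      (fun w => (Ioi (0 : ℝ)).indicator (fun u => f u * fejerK (T * (u - y))) (y + w)) T
    rw [e1, abs_of_pos hT, smul_eq_mul] at e2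
    rw [← e2]
    congr 1
    ext v
    by_cases hv : y + v / T ∈ Ioi (0 : ℝ)
    · rw [indicator_of_mem hv, indicator_of_mem hv]
      congr 2
      field_simp
      ring
    · rw [indicator_of_notMem hv, indicator_of_notMem hv, zero_mul]
  simp_rw [hsub] at h1
  have h2 : Tendsto (fun y : ℝ => ∫ v, (Ioi (0 : ℝ)).indicator (fun _ => c) (y + v / T) * fejerK v)
      atTop (𝓝 (∫ v, c * fejerK v)) := by
    refine tendsto_integral_filter_of_dominated_convergence (fun v => |c| * fejerK v) ?_ ?_ ?_ ?_
    · refine Eventually.of_forall fun y => Measurable.aestronglyMeasurable ?_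
      have := fejerK_continuous.measurable
      have h3 : Measurable ((Ioi (0 : ℝ)).indicator fun _ => c) :=
        measurable_const.indicator measurableSet_Ioi
      fun_prop
    · refine Eventually.of_forall fun y => Eventually.of_forall fun v => ?_
      rw [norm_mul, Real.norm_of_nonneg (fejerK_nonneg v)]
      have := fejerK_nonneg v
      gcongr
      exact norm_indicator_le_norm_self (fun _ => c) _
    · exact fejerK_integrable.const_mul _
    · refine Eventually.of_forall fun v => ?_
      refine tendsto_const_nhds.congr' ?_
      filter_upwards [eventually_gt_atTop (-(v / T))] with y hy
      rw [indicator_of_mem (show y + v / T ∈ Ioi (0 : ℝ) from by simp only [mem_Ioi]; linarith)]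
  rw [integral_const_mul] at h2
  have h3 := h1.add h2
  rw [zero_add] at h3
  refine h3.congr fun y => ?_
  have hm1 : Measurable ((Ioi (0 : ℝ)).indicator fun u => B u - c) :=
    (hm.sub_const c).indicator measurableSet_Ioi
  have hm2 : Measurable ((Ioi (0 : ℝ)).indicator fun _ => c) :=
    measurable_const.indicator measurableSet_Ioi
  rw [← integral_add]
  · congr 1
    ext v
    by_cases hv : y + v / T ∈ Ioi (0 : ℝ)
    · rw [indicator_of_mem hv, indicator_of_mem hv]
      ring
    · rw [indicator_of_notMem hv, indicator_of_notMem hv, hneg _ (not_lt.1 hv)]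
      ring
  · refine fejerK_integrable.bdd_mul (c := C + |c|)
      (by exact (hm1.comp (by fun_prop)).aestronglyMeasurable) ?_
    refine Eventually.of_forall fun v => ?_
    exact (norm_indicator_le_norm_self (fun u => B u - c) _).trans (hbd _)
  · refine fejerK_integrable.bdd_mul (c := |c|)
      (by exact (hm2.comp (by fun_prop)).aestronglyMeasurable) ?_
    refine Eventually.of_forall fun v => ?_
    exact (norm_indicator_le_norm_self (fun _ => c) _)

lemma fejerK_integral_pos : 0 < ∫ v, fejerK v := by
  refine integral_pos_of_integrable_nonneg_nonzero (x := 0) fejerK_continuous fejerK_integrable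
    fejerK_nonneg ?_
  simp [fejerK]

lemma fejerK_window :
    Tendsto (fun R : ℝ => ∫ v in Icc (-R) R, fejerK v) atTop (𝓝 (∫ v, fejerK v)) := by
  have := intervalIntegral_tendsto_integral fejerK_integrable tendsto_neg_atTop_atBot
    (tendsto_id (α := ℝ) (x := atTop))
  refine this.congr' ?_
  filter_upwards [eventually_ge_atTop 0] with R hR
  rw [integral_Icc_eq_integral_Ioc, intervalIntegral.integral_of_le (by simp; linarith)]
  rfl

theorem wiener_ikehara_aux {B : ℝ → ℝ} (hm : Measurable B) {C c : ℝ} (hB0 : ∀ u, 0 ≤ B u)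
    (hC : ∀ u, B u ≤ C) (hneg : ∀ u ≤ 0, B u = 0)
    (hmono : ∀ u v, u ≤ v → B u * Real.exp (u - v) ≤ B v) {G : ℂ → ℂ}
    (hGc : ContinuousOn G {w | 0 ≤ w.re})
    (hG : ∀ w : ℂ, 0 < w.re →
      ∫ u in Ioi (0 : ℝ), ((B u - c : ℝ) : ℂ) * cexp (-w * u) = G w) :
    Tendsto B atTop (𝓝 c) := by
  set κ := ∫ v, fejerK v with hκ
  have hκ0 : 0 < κ := fejerK_integral_pos
  have hwin := fejerK_window
  rw [← hκ] at hwin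
  have hInt : ∀ T y, Integrable fun v => B (y + v / T) * fejerK v := fun T y => by
    refine fejerK_integrable.bdd_mul (c := C)
      (by exact (hm.comp (by fun_prop)).aestronglyMeasurable) ?_
    refine Eventually.of_forall fun v => ?_
    rw [Real.norm_of_nonneg (hB0 _)]
    exact hC _
  have hexp : Tendsto (fun R : ℝ => Real.exp (2 / R)) atTop (𝓝 1) := by
    have : Tendsto (fun R : ℝ => 2 / R) atTop (𝓝 0) := tendsto_const_nhds.div_atTop tendsto_id
    simpa [Function.comp_def] using (Real.continuous_exp.tendsto 0).comp this
  rw [tendsto_order]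
  constructor
  · intro a ha
    -- choose R
    have hl : Tendsto (fun R : ℝ => (c * κ - C * (κ - ∫ v in Icc (-R) R, fejerK v)) -
        a * (Real.exp (2 / R) * ∫ v in Icc (-R) R, fejerK v)) atTop
        (𝓝 ((c * κ - C * (κ - κ)) - a * (1 * κ))) :=
      ((hwin.const_sub κ).const_mul C |>.const_sub (c * κ)).sub ((hexp.mul hwin).const_mul a)
    have hpos : 0 < (c * κ - C * (κ - κ)) - a * (1 * κ) := by nlinarith
    obtain ⟨R, hR, hR0⟩ := ((hl.eventually_const_lt hpos).and (eventually_gt_atTop 0)).exists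
    set W := ∫ v in Icc (-R) R, fejerK v with hW
    have hT : 0 < R ^ 2 := by positivity
    have hs := wi_smoothed hm hB0 hC hneg hGc hG hT
    have hs2 : Tendsto (fun y => ∫ v, B (y - 1 / R + v / R ^ 2) * fejerK v) atTop (𝓝 (c * κ)) := by
      refine hs.comp (tendsto_atTop_add_const_right _ _ tendsto_id)
    have hev := hs2.eventually_const_lt (show C * (κ - W) + a * (Real.exp (2 / R) * W) < c * κ by
      linarith)
    filter_upwards [hev] with y hy
    have hup : ∫ v, B (y - 1 / R + v / R ^ 2) * fejerK v ≤
        C * (κ - W) + B y * (Real.exp (2 / R) * W) := by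
      rw [← integral_add_compl measurableSet_Icc (hInt (R ^ 2) (y - 1 / R)) (s := Icc (-R) R)]
      have hcompl : κ - W = ∫ v in (Icc (-R) R)ᶜ, fejerK v := by
        rw [hκ, hW, ← integral_add_compl measurableSet_Icc fejerK_integrable (s := Icc (-R) R)]
        ring
      rw [hcompl, add_comm, ← integral_const_mul, ← mul_assoc, ← integral_const_mul]
      refine add_le_add (setIntegral_mono_on (hInt _ _).integrableOn
        (fejerK_integrable.const_mul _).integrableOn measurableSet_Icc.compl fun v hv => ?_)
        (setIntegral_mono_on (hInt _ _).integrableOn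
        (fejerK_integrable.const_mul _).integrableOn measurableSet_Icc fun v hv => ?_)
      · have := fejerK_nonneg v
        gcongr
        exact hC _
      · have := fejerK_nonneg v
        gcongr
        have e1 : v / R ^ 2 ≤ 1 / R := by
          rw [div_le_div_iff₀ hT hR0]; nlinarith [hv.2]
        have e2 : -(1 / R) ≤ v / R ^ 2 := by
          rw [← neg_div, div_le_div_iff₀ hR0 hT]; nlinarith [hv.1]
        have := hmono (y - 1 / R + v / R ^ 2) y (by linarith)
        rw [← le_div_iff₀ (Real.exp_pos _), div_eq_mul_inv (B y), ← Real.exp_neg] at this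
        refine this.trans ?_
        have := hB0 y
        gcongr
        have : 2 / R = 1 / R + 1 / R := by ring
        linarith
    have hlt : a * (Real.exp (2 / R) * W) < B y * (Real.exp (2 / R) * W) := by linarith
    have hW0 : 0 ≤ W := integral_nonneg fejerK_nonneg
    exact lt_of_mul_lt_mul_right hlt (by positivity)
  · intro a ha
    have hl : Tendsto (fun R : ℝ => a * ((Real.exp (2 / R))⁻¹ * ∫ v in Icc (-R) R, fejerK v)) atTop
        (𝓝 (a * (1⁻¹ * κ))) :=
      ((hexp.inv₀ one_ne_zero).mul hwin).const_mul a
    have hpos : c * κ < a * (1⁻¹ * κ) := by nlinarith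
    obtain ⟨R, hR, hR0⟩ := ((hl.eventually_const_lt hpos).and (eventually_gt_atTop 0)).exists
    set W := ∫ v in Icc (-R) R, fejerK v with hW
    have hT : 0 < R ^ 2 := by positivity
    have hs := wi_smoothed hm hB0 hC hneg hGc hG hT
    have hs2 : Tendsto (fun y => ∫ v, B (y + 1 / R + v / R ^ 2) * fejerK v) atTop (𝓝 (c * κ)) := by
      refine hs.comp (tendsto_atTop_add_const_right _ _ tendsto_id)
    have hev := hs2.eventually_lt_const hR
    filter_upwards [hev] with y hy
    have hlow : B y * ((Real.exp (2 / R))⁻¹ * W) ≤ ∫ v, B (y + 1 / R + v / R ^ 2) * fejerK v := by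
      refine le_trans ?_ (setIntegral_le_integral (s := Icc (-R) R) (hInt _ _)
        (Eventually.of_forall fun v => mul_nonneg (hB0 _) (fejerK_nonneg v)))
      rw [← mul_assoc, ← integral_const_mul]
      refine setIntegral_mono_on 
        (fejerK_integrable.const_mul _).integrableOn (hInt _ _).integrableOn
          measurableSet_Icc fun v hv => ?_
      have := fejerK_nonneg v
      gcongr
      have e1 : v / R ^ 2 ≤ 1 / R := by
        rw [div_le_div_iff₀ hT hR0]; nlinarith [hv.2]
      have e2 : -(1 / R) ≤ v / R ^ 2 := by
        rw [← neg_div, div_le_div_iff₀ hR0 hT]; nlinarith [hv.1]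
      refine le_trans ?_ (hmono y (y + 1 / R + v / R ^ 2) (by linarith))
      have := hB0 y
      rw [← Real.exp_neg]
      gcongr
      have : 2 / R = 1 / R + 1 / R := by ring
      linarith
    have hW0 : 0 ≤ W := integral_nonneg fejerK_nonneg
    exact lt_of_mul_lt_mul_right (hlow.trans_lt hy) (by positivity)


/-- The Chebyshev function of a residue class. -/
noncomputable def psiRC {q : ℕ} (a : ZMod q) (x : ℝ) : ℝ :=
  ∑ n ∈ Finset.Icc 1 ⌊x⌋₊, ArithmeticFunction.vonMangoldt.residueClass a n

open ArithmeticFunction.vonMangoldt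

lemma psiRC_nonneg {q : ℕ} (a : ZMod q) (x : ℝ) : 0 ≤ psiRC a x :=
  Finset.sum_nonneg fun n _ => residueClass_nonneg a n

lemma psiRC_le_psi {q : ℕ} (a : ZMod q) (x : ℝ) : psiRC a x ≤ Chebyshev.psi x := by
  unfold psiRC Chebyshev.psi
  exact Finset.sum_le_sum fun n _ => residueClass_le a n

lemma psiRC_mono {q : ℕ} (a : ZMod q) : Monotone (psiRC a) := by
  intro x y hxy
  refine Finset.sum_le_sum_of_subset_of_nonneg
    (Finset.Icc_subset_Icc_right (Nat.floor_le_floor hxy)) fun n _ _ => residueClass_nonneg a n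

lemma psiRC_laplace {q : ℕ} [NeZero q] {a : ZMod q} (w : ℂ) (hw : 0 < w.re) :
    ∫ u in Ioi (0 : ℝ), ((psiRC a (Real.exp u) * Real.exp (-u) : ℝ) : ℂ) * cexp (-w * u) =
      LSeries (fun n => (residueClass a n : ℂ)) (1 + w) / (1 + w) := by
  have hne : (1 + w) ≠ 0 := fun h => by
    have := congrArg Complex.re h
    simp at this
    linarith
  have hO : (fun n : ℕ ↦ ∑ k ∈ Finset.Icc 1 n, residueClass a k) =O[atTop]
      fun n ↦ (n : ℝ) ^ (1 : ℝ) := by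
    refine Asymptotics.IsBigO.of_bound (Real.log 4 + 4) (Eventually.of_forall fun n => ?_)
    have h1 := psiRC_nonneg a n
    have h2 := (psiRC_le_psi a n).trans (Chebyshev.psi_le_const_mul_self (Nat.cast_nonneg n))
    simp only [psiRC, Nat.floor_natCast] at h1 h2
    rw [Real.norm_of_nonneg h1, Real.rpow_one, Real.norm_of_nonneg (Nat.cast_nonneg n)]
    exact h2
  rw [LSeries_eq_mul_integral_of_nonneg (residueClass a) zero_le_one (s := 1 + w) (by simpa) hO
    (residueClass_nonneg a), mul_div_cancel_left₀ _ hne]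
  have himg : Ioi (1 : ℝ) = Real.exp '' Ioi 0 := by
    ext x
    simp only [mem_Ioi, mem_image]
    constructor
    · intro hx
      exact ⟨Real.log x, Real.log_pos hx, Real.exp_log (by linarith)⟩
    · rintro ⟨u, hu, rfl⟩
      exact Real.one_lt_exp_iff.2 hu
  rw [himg, integral_image_eq_integral_abs_deriv_smul measurableSet_Ioi
    (fun x _ => (Real.hasDerivAt_exp x).hasDerivWithinAt) Real.exp_injective.injOn]
  refine setIntegral_congr_fun measurableSet_Ioi fun u _ => ?_
  simp only [abs_of_pos (Real.exp_pos u), psiRC]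
  rw [Complex.cpow_def_of_ne_zero (by simp), ← Complex.ofReal_log (Real.exp_pos u).le,
    Real.log_exp, Complex.real_smul]
  push_cast
  have : cexp (-u) * cexp (-w * u) = cexp u * cexp (u * -(1 + w + 1)) := by
    rw [← Complex.exp_add, ← Complex.exp_add]
    congr 1
    ring
  linear_combination (∑ k ∈ Finset.Icc 1 ⌊Real.exp u⌋₊, (residueClass a k : ℂ)) * this

theorem psiRC_tendsto {q : ℕ} [NeZero q] {a : ZMod q} (ha : IsUnit a) :
    Tendsto (fun x : ℝ => psiRC a x / x) atTop (𝓝 (q.totient : ℝ)⁻¹) := by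
  set c : ℝ := (q.totient : ℝ)⁻¹ with hc
  set B : ℝ → ℝ := fun u => psiRC a (Real.exp u) * Real.exp (-u) with hB
  have hm : Measurable B :=
    ((psiRC_mono a).measurable.comp Real.measurable_exp).mul (by fun_prop)
  have hB0 : ∀ u, 0 ≤ B u := fun u => mul_nonneg (psiRC_nonneg a _) (Real.exp_pos _).le
  have hBC : ∀ u, B u ≤ Real.log 4 + 4 := fun u => by
    have := (psiRC_le_psi a _).trans (Chebyshev.psi_le_const_mul_self (Real.exp_pos u).le)
    simp only [hB]
    rw [Real.exp_neg, ← div_eq_mul_inv, div_le_iff₀ (Real.exp_pos u)]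
    exact this
  have hneg : ∀ u ≤ 0, B u = 0 := fun u hu => by
    have h1 := (psiRC_le_psi a (Real.exp u)).trans_eq
      (Chebyshev.psi_eq_zero_of_le_one (Real.exp_le_one_iff.2 hu))
    simp only [hB, le_antisymm h1 (psiRC_nonneg a _), zero_mul]
  have hmono : ∀ u v, u ≤ v → B u * Real.exp (u - v) ≤ B v := fun u v huv => by
    simp only [hB]
    rw [mul_assoc, ← Real.exp_add, show -u + (u - v) = -v by ring]
    have := psiRC_mono a (Real.exp_le_exp.2 huv)
    gcongr
  have hcon := continuousOn_LFunctionResidueClassAux a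
  have hre : ∀ w : ℂ, 0 ≤ w.re → (1 + w) ≠ 0 := fun w hw h => by
    have := congrArg Complex.re h
    simp at this
    linarith
  have hlim := wiener_ikehara_aux (c := c)
    (G := fun w => (LFunctionResidueClassAux a (1 + w) - c) / (1 + w)) hm hB0 hBC hneg hmono ?_ ?_
  · have := hlim.comp Real.tendsto_log_atTop
    refine this.congr' ?_
    filter_upwards [eventually_gt_atTop 0] with x hx
    simp only [Function.comp, hB]
    rw [Real.exp_neg, Real.exp_log hx, div_eq_mul_inv]
  · refine ContinuousOn.div (ContinuousOn.sub (hcon.comp (by fun_prop) ?_) continuousOn_const)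
      (by fun_prop) (fun w hw => hre w hw)
    intro w hw
    simpa using hw
  · intro w hw
    have hw0 : w ≠ 0 := fun h => by simp [h] at hw
    have h1 := hre w hw.le
    have haux := eqOn_LFunctionResidueClassAux ha (show (1 + w) ∈ {s : ℂ | 1 < s.re} by simpa)
    simp only at haux
    have hexpint : IntegrableOn (fun u : ℝ => cexp (-w * u)) (Ioi 0) := 
      integrableOn_exp_mul_complex_Ioi (by simpa using hw) 0
    have hval : ∫ u in Ioi (0 : ℝ), cexp (-w * u) = 1 / w := by
      rw [integral_exp_mul_complex_Ioi (by simpa using hw)]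
      simp
    have hBint : IntegrableOn (fun u : ℝ => (B u : ℂ) * cexp (-w * u)) (Ioi 0) := by
      refine Integrable.bdd_mul (c := Real.log 4 + 4) hexpint
        (by exact (Complex.measurable_ofReal.comp hm).aestronglyMeasurable) ?_
      refine Eventually.of_forall fun u => ?_
      rw [Complex.norm_real, Real.norm_of_nonneg (hB0 u)]
      exact hBC u
    have : ∀ u : ℝ, ((B u - c : ℝ) : ℂ) * cexp (-w * u) =
        (B u : ℂ) * cexp (-w * u) - c * cexp (-w * u) := fun u => by push_cast; ring
    simp_rw [this]
    rw [integral_sub hBint (hexpint.const_mul _), integral_const_mul, hval, psiRC_laplace w hw,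
      haux]
    simp only [hc]
    push_cast
    rw [add_sub_cancel_left]
    field_simp
    ring


lemma pi_log_sub_theta_tendsto :
    Tendsto (fun n : ℕ => ((Nat.primeCounting n : ℝ) * Real.log n - Chebyshev.theta n) / n)
      atTop (𝓝 0) := by
  have h1 := Chebyshev.primeCounting_sub_theta_div_log_isBigO
  have h2 : (fun x : ℝ => ((Nat.primeCounting ⌊x⌋₊ : ℝ) - Chebyshev.theta x / Real.log x) *
      (Real.log x / x)) =O[atTop] fun x : ℝ => x / Real.log x ^ 2 * (Real.log x / x) :=
    h1.mul (Asymptotics.isBigO_refl _ _)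
  have h3 : Tendsto (fun x : ℝ => x / Real.log x ^ 2 * (Real.log x / x)) atTop (𝓝 0) := by
    refine Real.tendsto_log_atTop.inv_tendsto_atTop.congr' ?_
    filter_upwards [eventually_gt_atTop 1] with x hx
    have := Real.log_pos hx
    have hx0 : x ≠ 0 := by linarith
    simp only [Pi.inv_apply]
    field_simp
  have h4 := (h2.trans_tendsto h3).comp tendsto_natCast_atTop_atTop
  refine h4.congr' ?_
  filter_upwards [eventually_gt_atTop 1] with n hn
  have := Real.log_pos (show (1 : ℝ) < n by exact_mod_cast hn)
  simp only [Function.comp, Nat.floor_natCast]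
  field_simp

lemma psi_sub_theta_tendsto :
    Tendsto (fun n : ℕ => (Chebyshev.psi n - Chebyshev.theta n) / n) atTop (𝓝 0) := by
  have h1 := Chebyshev.isBigO_psi_sub_theta_sqrt
  have h2 : (fun x : ℝ => (Chebyshev.psi x - Chebyshev.theta x) * x⁻¹) =O[atTop]
      fun x : ℝ => √x * x⁻¹ :=
    h1.mul (Asymptotics.isBigO_refl _ _)
  have h3 : Tendsto (fun x : ℝ => √x * x⁻¹) atTop (𝓝 0) := by
    refine Real.tendsto_sqrt_atTop.inv_tendsto_atTop.congr' ?_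
    filter_upwards [eventually_gt_atTop 1] with x hx
    simp only [Pi.inv_apply]
    have h : 0 < √x := Real.sqrt_pos.2 (by linarith)
    have : x⁻¹ = (√x)⁻¹ * (√x)⁻¹ := by
      rw [← mul_inv, Real.mul_self_sqrt (by linarith)]
    rw [this]
    field_simp
  have h4 := (h2.trans_tendsto h3).comp tendsto_natCast_atTop_atTop
  refine h4.congr fun n => ?_
  simp only [Function.comp, div_eq_mul_inv]

open Classical in
/-- From `ψ_P(n) ~ c n` to `π_P(n) ~ c n / log n`. -/
lemma count_of_psi (P : ℕ → Prop) {c : ℝ}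
    (h : Tendsto (fun n : ℕ => (∑ k ∈ Finset.Ioc 0 n with P k,
      ArithmeticFunction.vonMangoldt k) / n) atTop (𝓝 c)) :
    Tendsto (fun n : ℕ => (((Finset.Ioc 0 n).filter (fun p => p.Prime ∧ P p)).card : ℝ) *
      Real.log n / n) atTop (𝓝 c) := by
  set θP : ℕ → ℝ := fun n => ∑ p ∈ Finset.Ioc 0 n with p.Prime ∧ P p, Real.log p with hθ
  have hdiff1 : ∀ n : ℕ, 0 ≤ (((Finset.Ioc 0 n).filter (fun p => p.Prime ∧ P p)).card : ℝ) *
      Real.log n - θP n ∧ (((Finset.Ioc 0 n).filter (fun p => p.Prime ∧ P p)).card : ℝ) *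
      Real.log n - θP n ≤ (Nat.primeCounting n : ℝ) * Real.log n - Chebyshev.theta n := by
    intro n
    have e1 : (((Finset.Ioc 0 n).filter (fun p => p.Prime ∧ P p)).card : ℝ) *
      Real.log n - θP n = ∑ p ∈ Finset.Ioc 0 n with p.Prime ∧ P p, (Real.log n - Real.log p) := by
      rw [Finset.sum_sub_distrib, Finset.sum_const, nsmul_eq_mul]
    have e2 : (Nat.primeCounting n : ℝ) * Real.log n - Chebyshev.theta n =
        ∑ p ∈ Finset.Ioc 0 n with p.Prime, (Real.log n - Real.log p) := by
      have e3 : Nat.primesLE n = (Finset.Ioc 0 n).filter Nat.Prime := by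
        ext p
        simp only [Nat.mem_primesLE, Finset.mem_filter, Finset.mem_Ioc]
        constructor
        · rintro ⟨h1, h2⟩; exact ⟨⟨h2.pos, h1⟩, h2⟩
        · rintro ⟨h1, h2⟩; exact ⟨h1.2, h2⟩
      rw [Finset.sum_sub_distrib, Finset.sum_const, nsmul_eq_mul, Chebyshev.theta,
        Nat.floor_natCast, ← Nat.primesLE_card_eq_primeCounting, e3]
    have hnn : ∀ p ∈ Finset.Ioc 0 n, 0 ≤ Real.log n - Real.log p := fun p hp => by
      rw [Finset.mem_Ioc] at hp
      rw [sub_nonneg]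
      exact Real.log_le_log (by exact_mod_cast hp.1) (by exact_mod_cast hp.2)
    rw [e1, e2]
    refine ⟨Finset.sum_nonneg fun p hp => hnn p (Finset.mem_filter.1 hp).1,
      Finset.sum_le_sum_of_subset_of_nonneg ?_ fun p hp _ => hnn p (Finset.mem_filter.1 hp).1⟩
    intro p hp
    simp only [Finset.mem_filter] at hp ⊢
    tauto
  have hdiff2 : ∀ n : ℕ, 0 ≤ (∑ k ∈ Finset.Ioc 0 n with P k,
      ArithmeticFunction.vonMangoldt k) - θP n ∧ (∑ k ∈ Finset.Ioc 0 n with P k,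
      ArithmeticFunction.vonMangoldt k) - θP n ≤ Chebyshev.psi n - Chebyshev.theta n := by
    intro n
    have e1 : (∑ k ∈ Finset.Ioc 0 n with P k,
      ArithmeticFunction.vonMangoldt k) - θP n = ∑ k ∈ Finset.Ioc 0 n with ¬ k.Prime,
        if P k then ArithmeticFunction.vonMangoldt k else 0 := by
      simp only [hθ, Finset.sum_filter]
      rw [← Finset.sum_sub_distrib]
      refine Finset.sum_congr rfl fun k _ => ?_
      by_cases h1 : k.Prime <;> by_cases h2 : P k <;>
        simp [h1, h2, ArithmeticFunction.vonMangoldt_apply_prime]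
    rw [e1, Chebyshev.psi_sub_theta_eq_sum_not_prime, Nat.floor_natCast]
    refine ⟨Finset.sum_nonneg fun k _ => ?_, Finset.sum_le_sum fun k _ => ?_⟩
    · split_ifs
      exacts [ArithmeticFunction.vonMangoldt_nonneg, le_rfl]
    · split_ifs
      exacts [le_rfl, ArithmeticFunction.vonMangoldt_nonneg]
  have t1 : Tendsto (fun n : ℕ => ((((Finset.Ioc 0 n).filter (fun p => p.Prime ∧ P p)).card : ℝ) *
      Real.log n - θP n) / n) atTop (𝓝 0) :=
    squeeze_zero (fun n => div_nonneg (hdiff1 n).1 (Nat.cast_nonneg n))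
      (fun n => div_le_div_of_nonneg_right (hdiff1 n).2 (Nat.cast_nonneg n))
      pi_log_sub_theta_tendsto
  have t2 : Tendsto (fun n : ℕ => ((∑ k ∈ Finset.Ioc 0 n with P k,
      ArithmeticFunction.vonMangoldt k) - θP n) / n) atTop (𝓝 0) :=
    squeeze_zero (fun n => div_nonneg (hdiff2 n).1 (Nat.cast_nonneg n))
      (fun n => div_le_div_of_nonneg_right (hdiff2 n).2 (Nat.cast_nonneg n))
      psi_sub_theta_tendsto
  have := (h.add t1).sub t2
  simp only [add_zero, sub_zero] at this
  refine this.congr fun n => ?_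
  ring

open Classical in
/-- Natural density of primes in a union of invertible residue classes. -/
theorem density_residue_union {q : ℕ} [NeZero q] (H : Finset (ZMod q)) (hH : ∀ a ∈ H, IsUnit a) :
    Tendsto (fun n : ℕ =>
      (((Finset.Ioc 0 n).filter (fun p : ℕ => p.Prime ∧ (p : ZMod q) ∈ H)).card : ℝ) /
      (((Finset.Ioc 0 n).filter (fun p => p.Prime)).card : ℝ))
      atTop (𝓝 ((H.card : ℝ) / q.totient)) := by
  have key : ∀ {r : ℕ} [NeZero r] (K : Finset (ZMod r)) (_ : ∀ a ∈ K, IsUnit a),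
      Tendsto (fun n : ℕ =>
        (((Finset.Ioc 0 n).filter (fun p : ℕ => p.Prime ∧ (p : ZMod r) ∈ K)).card : ℝ) *
      Real.log n / n) atTop (𝓝 ((K.card : ℝ) / r.totient)) := by
    intro r _ K hK
    suffices hsuff : Tendsto (fun n : ℕ => (∑ k ∈ (Finset.Ioc 0 n).filter (fun k : ℕ => (k : ZMod r) ∈ K),
        ArithmeticFunction.vonMangoldt k) / n) atTop (𝓝 ((K.card : ℝ) / r.totient)) by
      convert count_of_psi (fun k : ℕ => (k : ZMod r) ∈ K) (c := (K.card : ℝ) / r.totient) ?_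
      convert hsuff
    have hs : Tendsto (fun n : ℕ => ∑ a ∈ K, psiRC a (n : ℝ) / (n : ℝ)) atTop
        (𝓝 (∑ a ∈ K, (r.totient : ℝ)⁻¹)) :=
      tendsto_finsetSum _ fun a ha => (psiRC_tendsto (hK a ha)).comp tendsto_natCast_atTop_atTop
    rw [Finset.sum_const, nsmul_eq_mul, ← div_eq_mul_inv] at hs
    refine hs.congr fun n => ?_
    rw [← Finset.sum_div]
    congr 1
    simp only [psiRC, Nat.floor_natCast]
    rw [Finset.sum_comm, Finset.sum_filter]
    refine Finset.sum_congr rfl fun k _ => ?_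
    simp only [Set.indicator, Set.mem_setOf_eq]
    rw [Finset.sum_ite_eq]
  have h1 := key H hH
  have h2 := key (r := 1) {1} (by simp)
  have h3 := h1.div h2 (by simp)
  simp only [Finset.card_singleton, Nat.totient_one, Nat.cast_one, div_one] at h3
  refine h3.congr' ?_
  filter_upwards [eventually_gt_atTop 1] with n hn
  have hl := Real.log_pos (show (1 : ℝ) < n by exact_mod_cast hn)
  have hall : ∀ p : ℕ, (p : ZMod 1) ∈ ({1} : Finset (ZMod 1)) := fun p => by
    rw [Finset.mem_singleton]; exact Subsingleton.elim _ _
  simp only [hall, and_true, Pi.div_apply]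
  have hn0 : (n : ℝ) ≠ 0 := by positivity
  have hne : Real.log n / n ≠ 0 := by positivity
  have e : ∀ a b : ℝ, (a * Real.log n / n) / (b * Real.log n / n) = a / b := fun a b => by
    rw [mul_div_assoc a, mul_div_assoc b, mul_div_mul_right _ _ hne]
  exact e _ _


/-- Additive version of a sign. -/
def sgnE (x : ℤ) : ZMod 2 := if x = 1 then 0 else 1

theorem sgnE_mul {x y : ℤ} (hx : x = 1 ∨ x = -1) (hy : y = 1 ∨ y = -1) :
    sgnE (x * y) = sgnE x + sgnE y := by
  rcases hx with rfl | rfl <;> rcases hy with rfl | rfl <;> decide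

theorem sgnE_eq_zero {x : ℤ} : sgnE x = 0 ↔ x = 1 := by
  unfold sgnE; split_ifs with h <;> simp [h]

theorem jac_pm {z n : ℕ} (h : Nat.Coprime n z) : jacobiSym z n = 1 ∨ jacobiSym z n = -1 :=
  jacobiSym.eq_one_or_neg_one (by rw [Int.gcd_natCast_natCast]; exact h.symm)

theorem sgnE_jac_factor (n : ℕ) (T : Finset ℕ) : ∀ z : ℕ, z ≠ 0 → Nat.Coprime n z →
    z.primeFactors ⊆ T →
    sgnE (jacobiSym z n) = ∑ r ∈ T, ((z.factorization r : ℕ) : ZMod 2) * sgnE (jacobiSym r n) := by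
  intro z
  induction z using induction_on_primes with
  | zero => intro h; exact absurd rfl h
  | one => intro _ _ _; simp [sgnE]
  | prime_mul p a hp ih =>
    intro h0 hc hT
    have ha : a ≠ 0 := fun h => h0 (by simp [h])
    have hc1 := Nat.Coprime.coprime_mul_right_right hc
    have hc2 := Nat.Coprime.coprime_mul_left_right hc
    have hpT : p ∈ T := hT (by simp [hp, ha, hp.ne_zero])
    rw [Nat.cast_mul, jacobiSym.mul_left, sgnE_mul (jac_pm hc1) (jac_pm hc2),
      ih ha hc2 ((Nat.primeFactors_mono (Dvd.intro_left p rfl) h0).trans hT),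
      Nat.factorization_mul hp.ne_zero ha, hp.factorization]
    simp only [Finsupp.add_apply, Nat.cast_add, add_mul, Finset.sum_add_distrib]
    congr 1
    rw [Finset.sum_eq_single p]
    · simp
    · intro b _ hb; simp [hb, Finsupp.single_apply, Ne.symm hb]
    · intro h; exact absurd hpT h

theorem jac_mod {M q n : ℕ} (hq : 4 * q ∣ M) (hn : Odd n) :
    jacobiSym q (n % M) = jacobiSym q n := by
  have h4 : 2 ∣ M := (Dvd.dvd.mul_right (by norm_num) q).trans hq
  have ho : Odd (n % M) := hn.mod_even (even_iff_two_dvd.2 h4)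
  rw [jacobiSym.mod_right' q ho, jacobiSym.mod_right' q hn, Nat.mod_mod_of_dvd _ hq]

/-- The homomorphism recording all the quadratic symbols of the primes in `A`. -/
theorem exists_phi {M : ℕ} [NeZero M] (A : Finset ℕ) (hA : ∀ q ∈ A, q.Prime)
    (hM : ∀ q ∈ A, 4 * q ∣ M) (h2 : 8 ∣ M) :
    ∃ Φ : (ZMod M)ˣ →* Multiplicative ({q // q ∈ A} → ZMod 2), Function.Surjective Φ ∧
      ∀ (n : ℕ) (u : (ZMod M)ˣ), (n : ZMod M) = u → ∀ q : {q // q ∈ A},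
        (Φ u).toAdd q = sgnE (jacobiSym q.1 n) := by
  have hodd : ∀ n : ℕ, Nat.Coprime n M → Odd n := fun n hn => by
    have : Nat.Coprime n 2 := Nat.Coprime.coprime_dvd_right ((by norm_num : 2 ∣ 8).trans h2) hn
    exact Nat.coprime_two_right.1 this
  have hcop : ∀ (n q : ℕ), q ∈ A → Nat.Coprime n M → Nat.Coprime n q := fun n q hq hn =>
    Nat.Coprime.coprime_dvd_right ((Dvd.intro_left 4 rfl).trans (hM q hq)) hn
  have hval : ∀ (n : ℕ) (u : (ZMod M)ˣ), (n : ZMod M) = u → Nat.Coprime n M := fun n u h => by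
    rw [← ZMod.isUnit_iff_coprime, h]; exact u.isUnit
  have hv : ∀ u : (ZMod M)ˣ, (((u : ZMod M).val : ℕ) : ZMod M) = u := fun u => by simp
  have hwell : ∀ (n : ℕ) (u : (ZMod M)ˣ), (n : ZMod M) = u → ∀ q ∈ A,
      jacobiSym q (u : ZMod M).val = jacobiSym q n := fun n u h q hq => by
    rw [← h, ZMod.val_natCast, jac_mod (hM q hq) (hodd n (hval n u h))]
  let Φ : (ZMod M)ˣ →* Multiplicative ({q // q ∈ A} → ZMod 2) := MonoidHom.mk'
    (fun u => Multiplicative.ofAdd fun q => sgnE (jacobiSym q.1 (u : ZMod M).val)) (by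
      intro u v
      rw [← ofAdd_add]
      congr 1
      funext q
      have hu := hval _ u (hv u)
      have hw := hval _ v (hv v)
      rw [hwell ((u : ZMod M).val * (v : ZMod M).val) (u * v) (by simp) q.1 q.2]
      rw [jacobiSym.mul_right' _ (hodd _ hu).pos.ne' (hodd _ hw).pos.ne']
      exact sgnE_mul (jac_pm (hcop _ _ q.2 hu)) (jac_pm (hcop _ _ q.2 hw)))
  refine ⟨Φ, ?_, ?_⟩
  swap
  · intro n u h q
    change sgnE (jacobiSym q.1 (u : ZMod M).val) = _
    rw [hwell n u h q.1 q.2]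
  intro x
  -- Chinese remainder theorem
  have hloc : ∀ r : ℕ, ∃ b : ℕ, r.Prime → (r = 2 → b % 4 = 1) ∧ Nat.Coprime b r ∧
      ∀ hr : r ∈ A, ∀ a : ℕ, a % 4 = 1 → (a ≡ b [MOD (if r = 2 then 8 else r)]) →
        sgnE (jacobiSym r a) = x.toAdd ⟨r, hr⟩ := by
    intro r
    by_cases hrA : r ∈ A
    swap
    · exact ⟨1, fun _ => ⟨fun _ => rfl, Nat.coprime_one_left r, fun h => absurd h hrA⟩⟩
    have hx2 : x.toAdd ⟨r, hrA⟩ = 0 ∨ x.toAdd ⟨r, hrA⟩ = 1 := by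
      generalize x.toAdd ⟨r, hrA⟩ = y
      revert y; decide
    by_cases hr2 : r = 2
    · subst hr2
      rcases hx2 with hx | hx
      · refine ⟨1, fun _ => ⟨fun _ => rfl, by norm_num, fun hr a ha hab => ?_⟩⟩
        rw [if_pos rfl] at hab
        have hab' : a % 8 = 1 := hab
        rw [hx, sgnE_eq_zero, Nat.cast_ofNat, jacobiSym.at_two (Nat.odd_iff.2 (by omega)),
          ZMod.χ₈_nat_mod_eight, hab']
        decide
      · refine ⟨5, fun _ => ⟨fun _ => rfl, by norm_num, fun hr a ha hab => ?_⟩⟩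
        rw [if_pos rfl] at hab
        have hab' : a % 8 = 5 := hab
        rw [hx, Nat.cast_ofNat, jacobiSym.at_two (Nat.odd_iff.2 (by omega)),
          ZMod.χ₈_nat_mod_eight, hab']
        decide
    · have hrp := hA r hrA
      haveI : Fact r.Prime := ⟨hrp⟩
      have hro : Odd r := hrp.odd_of_ne_two hr2
      have hred : ∀ a b : ℕ, a % 4 = 1 → (a ≡ b [MOD (if r = 2 then 8 else r)]) →
          jacobiSym r a = legendreSym r (b : ℤ) := by
        intro a b ha hab
        rw [if_neg hr2] at hab
        rw [← jacobiSym.quadratic_reciprocity_one_mod_four ha hro, jacobiSym.legendreSym.to_jacobiSym]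
        apply jacobiSym.mod_left'
        exact_mod_cast hab
      rcases hx2 with hx | hx
      · refine ⟨1, fun _ => ⟨fun h => absurd h hr2, Nat.coprime_one_left r, fun hr a ha hab => ?_⟩⟩
        rw [hx, hred a 1 ha hab, sgnE_eq_zero]
        simp
      · obtain ⟨c, hc⟩ := FiniteField.exists_nonsquare (F := ZMod r)
          (by rw [ZMod.ringChar_zmod_n]; exact hr2)
        have hc' : legendreSym r ((c.val : ℕ) : ℤ) = -1 := by
          rw [legendreSym.eq_neg_one_iff']; simpa using hc
        refine ⟨c.val, fun _ => ⟨fun h => absurd h hr2, ?_, fun hr a ha hab => ?_⟩⟩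
        · rw [← ZMod.isUnit_iff_coprime, ZMod.natCast_val, ZMod.cast_id, isUnit_iff_ne_zero]
          rintro rfl
          exact hc (IsSquare.zero)
        · rw [hx, hred a _ ha hab, hc']
          decide
  choose b hb using hloc
  have hM0 : M ≠ 0 := NeZero.ne M
  obtain ⟨a, ha⟩ := Nat.chineseRemainderOfFinset b (fun r => if r = 2 then 8 else r)
    M.primeFactors (by
      intro r hr
      have := (Nat.prime_of_mem_primeFactors hr).ne_zero
      split_ifs <;> simp_all) (by
      intro r hr s hs hrs
      have hrp := Nat.prime_of_mem_primeFactors hr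
      have hsp := Nat.prime_of_mem_primeFactors hs
      have hc := (Nat.coprime_primes hrp hsp).2 hrs
      simp only [Function.onFun]
      split_ifs with h1 h2 h2
      · exact absurd (h1.trans h2.symm) hrs
      · rw [h1] at hc
        exact Nat.Coprime.pow_left 3 hc
      · rw [h2] at hc
        exact Nat.Coprime.pow_right 3 hc
      · exact hc)
  have h2M : 2 ∈ M.primeFactors := by
    simp [hM0, Nat.prime_two]; exact (by norm_num : 2 ∣ 8).trans h2
  have ha4 : a % 4 = 1 := by
    have h := ha 2 h2M
    rw [if_pos rfl] at h
    have h' := (hb 2 Nat.prime_two).1 rfl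
    have h'' : a % 8 = b 2 % 8 := h
    omega
  have hac : Nat.Coprime a M := by
    rw [Nat.coprime_comm]
    refine Nat.Coprime.symm (Nat.Coprime.symm (Nat.coprime_of_dvd fun r hrp hrM hra => ?_))
    have h := ha r (Nat.mem_primeFactors.2 ⟨hrp, hrM, hM0⟩)
    have h3 : a ≡ b r [MOD r] := by
      refine h.of_dvd ?_
      split_ifs with h2
      · rw [h2]; norm_num
      · exact dvd_rfl
    have h4 : r ∣ b r := (h3.dvd_iff dvd_rfl).1 hra
    have h5 := (hb r hrp).2.1
    exact hrp.one_lt.ne' (Nat.eq_one_of_dvd_coprimes h5 h4 dvd_rfl)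
  refine ⟨ZMod.unitOfCoprime a hac, ?_⟩
  apply Multiplicative.toAdd.injective
  funext q
  change sgnE (jacobiSym q.1 ((ZMod.unitOfCoprime a hac : (ZMod M)ˣ) : ZMod M).val) = _
  rw [hwell a _ (by simp) q.1 q.2]
  have hqp := hA q.1 q.2
  exact (hb q.1 hqp).2.2 q.2 a ha4 (ha q.1 (Nat.mem_primeFactors.2
    ⟨hqp, (Dvd.intro_left 4 rfl).trans (hM q.1 q.2), hM0⟩))


/-- index of the annihilator -/
theorem card_annihilator {ι κ : Type} [Fintype ι] [Fintype κ] [DecidableEq κ]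
    (V : Matrix ι κ (ZMod 2)) :
    Nat.card (LinearMap.ker V.mulVecLin) * 2 ^ (Module.finrank (ZMod 2)
      (Submodule.span (ZMod 2) (Set.range V))) = Nat.card (κ → ZMod 2) := by
  have h1 := V.rank_eq_finrank_span_row
  have h2 := LinearMap.finrank_range_add_finrank_ker V.mulVecLin
  have h3 : Module.finrank (ZMod 2) (Submodule.span (ZMod 2) (Set.range V)) =
    Module.finrank (ZMod 2) (LinearMap.range V.mulVecLin) := h1.symm
  rw [Module.natCard_eq_pow_finrank (K := ZMod 2), h3,
    Module.natCard_eq_pow_finrank (K := ZMod 2) (V := κ → ZMod 2), ← h2]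
  simp [pow_add, mul_comm]

theorem card_comap {G : Type} [Group G] [Finite G] {κ : Type} [Fintype κ]
    (Φ : G →* Multiplicative (κ → ZMod 2)) (hΦ : Function.Surjective Φ)
    (N : Submodule (ZMod 2) (κ → ZMod 2)) (k : ℕ)
    (hN : Nat.card N * k = Nat.card (κ → ZMod 2)) :
    Nat.card ((AddSubgroup.toSubgroup N.toAddSubgroup).comap Φ) * k = Nat.card G := by
  have h1 := Subgroup.card_mul_index ((AddSubgroup.toSubgroup N.toAddSubgroup).comap Φ)
  rw [Subgroup.index_comap_of_surjective _ hΦ] at h1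
  have h2 := Subgroup.card_mul_index (AddSubgroup.toSubgroup N.toAddSubgroup)
  have h3 : Nat.card (AddSubgroup.toSubgroup N.toAddSubgroup) = Nat.card N := rfl
  have h4 : Nat.card (Multiplicative (κ → ZMod 2)) = Nat.card (κ → ZMod 2) := rfl
  rw [h3, h4, ← hN] at h2
  have h5 : 0 < Nat.card N := Nat.card_pos
  rw [Nat.eq_of_mul_eq_mul_left h5 h2] at h1
  exact h1

open Classical in
theorem density_main (S : Finset ℕ)
    (hpos : ∀ z ∈ S, 0 < z)
    (A : Finset ℕ) (hA : ∀ q : ℕ, q ∈ A ↔ q.Prime ∧ ∃ z ∈ S, Odd (Nat.factorization z q))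
    (d : ℕ)
    (hd : d = Module.finrank (ZMod 2) ↥(Submodule.span (ZMod 2)
      ((fun z : ℕ => fun q : {q : ℕ // q ∈ A} => ((Nat.factorization z q.1 : ℕ) : ZMod 2)) ''
        (S : Set ℕ)))) :
    Filter.Tendsto (fun x : ℕ =>
        (({p : ℕ | (∃ hp : Fact p.Prime, p ≠ 2 ∧ ∀ z ∈ S, @legendreSym p hp (z : ℤ) = 1) ∧
            p ≤ x}.ncard : ℝ)) / ({p : ℕ | p.Prime ∧ p ≤ x}.ncard : ℝ))
      Filter.atTop (nhds ((2 : ℝ) ^ (-(d : ℤ)))) := by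
  set M : ℕ := 8 * ∏ z ∈ S, z with hMdef
  have hM0 : M ≠ 0 := by
    have : ∏ z ∈ S, z ≠ 0 := Finset.prod_ne_zero_iff.2 fun z hz => (hpos z hz).ne'
    omega
  have : NeZero M := ⟨hM0⟩
  have hzM : ∀ z ∈ S, 8 * z ∣ M := fun z hz => mul_dvd_mul_left 8 (Finset.dvd_prod_of_mem _ hz)
  have hAz : ∀ q ∈ A, 4 * q ∣ M := fun q hq => by
    obtain ⟨_, z, hz, ho⟩ := (hA q).1 hq
    have hqz : q ∣ z := Nat.dvd_of_factorization_pos ho.pos.ne'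
    exact (mul_dvd_mul (by norm_num) hqz).trans (hzM z hz)
  obtain ⟨Φ, hΦs, hΦ⟩ := exists_phi (M := M) A (fun q hq => ((hA q).1 hq).1) hAz
    (Dvd.intro _ rfl)
  let V : Matrix {z // z ∈ S} {q // q ∈ A} (ZMod 2) :=
    fun z q => ((Nat.factorization z.1 q.1 : ℕ) : ZMod 2)
  let N : Submodule (ZMod 2) ({q // q ∈ A} → ZMod 2) := LinearMap.ker V.mulVecLin
  let K : Subgroup (ZMod M)ˣ := (AddSubgroup.toSubgroup N.toAddSubgroup).comap Φ
  have hrange : Set.range V =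
      ((fun z : ℕ => fun q : {q : ℕ // q ∈ A} => ((Nat.factorization z q.1 : ℕ) : ZMod 2)) ''
        (S : Set ℕ)) := by
    ext w
    constructor
    · rintro ⟨z, rfl⟩; exact ⟨z.1, z.2, rfl⟩
    · rintro ⟨z, hz, rfl⟩; exact ⟨⟨z, hz⟩, rfl⟩
  have hKcard : Nat.card K * 2 ^ d = M.totient := by
    have h := card_annihilator V
    rw [hrange, ← hd] at h
    have h' := card_comap Φ hΦs N _ h
    rwa [Nat.card_eq_fintype_card (α := (ZMod M)ˣ), ZMod.card_units_eq_totient] at h'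
  let H : Finset (ZMod M) := (Finset.univ.filter (fun u : (ZMod M)ˣ => u ∈ K)).image Units.val
  have hHcard : H.card = Nat.card K := by
    rw [Finset.card_image_of_injective _ Units.val_injective, ← Fintype.card_subtype,
      Nat.card_eq_fintype_card]
  have hmain := density_residue_union H (by
    intro a ha
    obtain ⟨u, _, rfl⟩ := Finset.mem_image.1 ha
    exact u.isUnit)
  have hlim : (H.card : ℝ) / M.totient = (2 : ℝ) ^ (-(d : ℤ)) := by
    have hpos' : 0 < Nat.card K := Nat.card_pos
    rw [hHcard, ← hKcard, zpow_neg, zpow_natCast]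
    push_cast
    have : (Nat.card K : ℝ) ≠ 0 := by exact_mod_cast hpos'.ne'
    field_simp
  rw [hlim] at hmain
  -- characterization of good primes
  have hgood : ∀ p : ℕ, (∃ hp : Fact p.Prime, p ≠ 2 ∧ ∀ z ∈ S, @legendreSym p hp (z : ℤ) = 1) ↔
      p.Prime ∧ (p : ZMod M) ∈ H := by
    intro p
    have hmemK : ∀ u : (ZMod M)ˣ, p.Prime → (p : ZMod M) = u →
        (u ∈ K ↔ ∀ z ∈ S, jacobiSym z p = 1) := by
      intro u hp hpu
      have hcM : Nat.Coprime p M := by rw [← ZMod.isUnit_iff_coprime, hpu]; exact u.isUnit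
      have hsum : ∀ z : {z // z ∈ S}, V.mulVecLin (Φ u).toAdd z = sgnE (jacobiSym z.1 p) := by
        intro z
        rw [sgnE_jac_factor p (z.1.primeFactors ∪ A) z.1 (hpos z.1 z.2).ne'
          (Nat.Coprime.coprime_dvd_right ((Dvd.intro_left 8 rfl).trans (hzM z.1 z.2)) hcM)
          Finset.subset_union_left]
        rw [← Finset.sum_subset Finset.subset_union_right]
        · rw [Matrix.mulVecLin_apply, Matrix.mulVec, dotProduct, ← Finset.sum_coe_sort A]
          refine Finset.sum_congr rfl fun q _ => ?_
          rw [hΦ p u hpu q]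
        · intro r hr hrA
          have hrp : r.Prime := by
            rcases Finset.mem_union.1 hr with h | h
            · exact Nat.prime_of_mem_primeFactors h
            · exact absurd h hrA
          have : ¬ Odd (Nat.factorization z.1 r) := fun h => hrA ((hA r).2 ⟨hrp, z.1, z.2, h⟩)
          rw [Nat.not_odd_iff_even] at this
          rw [(ZMod.natCast_eq_zero_iff_even).2 this, zero_mul]
      have h1 : u ∈ K ↔ V.mulVecLin (Φ u).toAdd = 0 := Iff.rfl
      rw [h1, funext_iff]
      constructor
      · intro h z hz
        have := h ⟨z, hz⟩
        rw [hsum] at this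
        exact sgnE_eq_zero.1 this
      · intro h z
        rw [hsum]
        exact sgnE_eq_zero.2 (h z.1 z.2)
    constructor
    · rintro ⟨hp, hp2, h⟩
      refine ⟨hp.out, ?_⟩
      have hcop : Nat.Coprime p M := by
        rw [hp.out.coprime_iff_not_dvd, hMdef, hp.out.dvd_mul, not_or]
        constructor
        · intro h8
          have : p ∣ 2 ^ 3 := h8
          exact hp2 ((Nat.prime_dvd_prime_iff_eq hp.out Nat.prime_two).1
            (hp.out.dvd_of_dvd_pow this))
        · rw [Prime.dvd_finsetProd_iff hp.out.prime]
          rintro ⟨z, hz, hpz⟩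
          have := h z hz
          rw [(legendreSym.eq_zero_iff p z).2 (by
            rw [Int.cast_natCast, ZMod.natCast_eq_zero_iff]; exact hpz)] at this
          exact zero_ne_one this
      refine Finset.mem_image.2 ⟨ZMod.unitOfCoprime p hcop, ?_, by simp⟩
      rw [Finset.mem_filter]
      refine ⟨Finset.mem_univ _, (hmemK _ hp.out (by simp)).2 fun z hz => ?_⟩
      rw [← jacobiSym.legendreSym.to_jacobiSym]
      exact h z hz
    · rintro ⟨hp, hH⟩
      obtain ⟨u, hu, hup⟩ := Finset.mem_image.1 hH
      have hcM : Nat.Coprime p M := by rw [← ZMod.isUnit_iff_coprime, ← hup]; exact u.isUnit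
      refine ⟨⟨hp⟩, ?_, ?_⟩
      · rintro rfl
        have h2 : 2 ∣ M := (Dvd.intro _ rfl : 8 ∣ M) |> (by norm_num : 2 ∣ 8).trans
        exact (Nat.Prime.coprime_iff_not_dvd hp).1 hcM h2
      · intro z hz
        haveI : Fact p.Prime := ⟨hp⟩
        rw [jacobiSym.legendreSym.to_jacobiSym]
        exact (hmemK u hp hup.symm).1 (Finset.mem_filter.1 hu).2 z hz
  refine hmain.congr fun n => ?_
  congr 2
  · rw [← Set.ncard_coe_finset]
    congr 1
    ext p
    simp only [Finset.coe_filter, Finset.mem_Ioc, Set.mem_ofPred_eq, hgood]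
    constructor
    · rintro ⟨h1, h2⟩; exact ⟨h2, h1.2⟩
    · rintro ⟨h1, h2⟩; exact ⟨⟨h1.1.pos, h2⟩, h1⟩
  · rw [← Set.ncard_coe_finset]
    congr 1
    ext p
    simp only [Finset.coe_filter, Finset.mem_Ioc, Set.mem_ofPred_eq]
    constructor
    · rintro ⟨h1, h2⟩; exact ⟨h2, h1.2⟩
    · rintro ⟨h1, h2⟩; exact ⟨⟨h1.pos, h2⟩, h1⟩

end Aux

/-- Theorem 4.9: if `S` is a nonempty finite set of positive integers, `A` the set of primes
dividing some element of `S` with odd multiplicity, and `d` the GF(2)-dimension of the span of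
the mod-2 multiplicity vectors of the elements of `S` in `GF(2)^A`, then the set of (odd) primes
`p` for which `S` is a set of quadratic residues has natural density `2 ^ (-d)` in the primes. -/
theorem density_setOf_forall_legendreSym_eq_one (S : Finset ℕ) (hS : S.Nonempty)
    (hpos : ∀ z ∈ S, 0 < z)
    (A : Finset ℕ) (hA : ∀ q : ℕ, q ∈ A ↔ q.Prime ∧ ∃ z ∈ S, Odd (Nat.factorization z q))
    (d : ℕ)
    (hd : d = Module.finrank (ZMod 2) ↥(Submodule.span (ZMod 2)
      ((fun z : ℕ => fun q : {q : ℕ // q ∈ A} => ((Nat.factorization z q.1 : ℕ) : ZMod 2)) ''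
        (S : Set ℕ)))) :
    Filter.Tendsto (fun x : ℕ =>
        (({p : ℕ | (∃ hp : Fact p.Prime, p ≠ 2 ∧ ∀ z ∈ S, @legendreSym p hp (z : ℤ) = 1) ∧
            p ≤ x}.ncard : ℝ)) / ({p : ℕ | p.Prime ∧ p ≤ x}.ncard : ℝ))
      Filter.atTop (nhds ((2 : ℝ) ^ (-(d : ℤ)))) := by
  exact density_main S hpos A hA d hd
end

section
/- Let S be a nonempty finite set of positive integers such that for every subset T of S of odd cardinality the product ∏_{z ∈ T} z is not a perfect square, and let d be the GF(2)-dimension attached to S as in the context. Then the set of odd primes p such that χ_p(z) = -1 for every z ∈ S has natural density 2^{-d} in the primes. -/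
open MeasureTheory Filter Topology

lemma tauber_final (B K : ℝ → ℝ) (M A : ℝ) (hBm : Measurable B) (hB0 : ∀ u, 0 ≤ B u)
    (hBM : ∀ u, B u ≤ M)
    (hmono : ∀ u w, u ≤ w → B u * Real.exp u ≤ B w * Real.exp w)
    (hK0 : ∀ u, 0 ≤ K u) (hKi : Integrable K) (hI : 0 < ∫ u, K u)
    (hlim : ∀ l : ℝ, 0 < l →
      Tendsto (fun v => ∫ w, B (v - w / l) * K w) atTop (𝓝 (A * ∫ u, K u))) :
    Tendsto B atTop (𝓝 A) := by
  set I := ∫ u, K u with hIdef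
  set m : ℝ → ℝ := fun R => ∫ u in Set.Ioc (-R) R, K u with hm
  have hmI : Tendsto m atTop (𝓝 I) := by
    have := intervalIntegral_tendsto_integral hKi tendsto_neg_atTop_atBot tendsto_id
    refine this.congr' ?_
    filter_upwards [eventually_ge_atTop 0] with R hR
    rw [intervalIntegral.integral_of_le (by simp; linarith)]; rfl
  have hint : ∀ v l : ℝ, Integrable (fun w => B (v - w / l) * K w) := by
    intro v l
    refine hKi.bdd_mul (c := M) ?_ ?_
    · exact (hBm.comp (by fun_prop)).aestronglyMeasurable
    · refine Eventually.of_forall fun w => ?_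
      rw [Real.norm_eq_abs, abs_of_nonneg (hB0 _)]; exact hBM _
  have hstep : ∀ u w c : ℝ, u ≤ w → w ≤ u + c → B u ≤ B w * Real.exp c := by
    intro u w c h1 h2
    have h3 := hmono u w h1
    have h4 : Real.exp w ≤ Real.exp c * Real.exp u := by
      rw [← Real.exp_add]; exact Real.exp_le_exp.2 (by linarith)
    have h5 : B u * Real.exp u ≤ (B w * Real.exp c) * Real.exp u := by
      calc _ ≤ _ := h3
        _ ≤ B w * (Real.exp c * Real.exp u) := mul_le_mul_of_nonneg_left h4 (hB0 _)
        _ = _ := by ring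
    exact le_of_mul_le_mul_right h5 (Real.exp_pos _)
  have hwin : ∀ R w : ℝ, 0 < R → w ∈ Set.Ioc (-R) R → |w / (R ^ 2)| ≤ 1 / R := by
    intro R w hR hw
    rw [abs_div, abs_of_pos (by positivity : 0 < R ^ 2), div_le_div_iff₀ (by positivity) hR]
    have : |w| ≤ R := abs_le.2 ⟨hw.1.le, hw.2⟩
    nlinarith
  have hexp : Tendsto (fun R : ℝ => Real.exp (2 * (1 / R))) atTop (𝓝 1) := by
    have : Tendsto (fun R : ℝ => 2 * (1 / R)) atTop (𝓝 (2 * 0)) := by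
      simpa using (tendsto_inv_atTop_zero (𝕜 := ℝ)).const_mul 2
    simpa [Function.comp_def] using (Real.continuous_exp.tendsto _).comp this
  have hmpos : ∀ᶠ R in atTop, 0 < m R := hmI.eventually (lt_mem_nhds hI)
  -- upper bound
  have hup : ∀ R v : ℝ, 0 < R → B v * m R ≤
      (∫ w, B (v + 1 / R - w / R ^ 2) * K w) * Real.exp (2 * (1 / R)) := by
    intro R v hR
    have h1 : ∫ w in Set.Ioc (-R) R, B (v + 1 / R - w / R ^ 2) * K w ≤
        ∫ w, B (v + 1 / R - w / R ^ 2) * K w :=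
      setIntegral_le_integral (hint _ _)
        (Eventually.of_forall fun w => mul_nonneg (hB0 _) (hK0 _))
    have h2 : B v * m R ≤ ∫ w in Set.Ioc (-R) R,
        (B (v + 1 / R - w / R ^ 2) * K w) * Real.exp (2 * (1 / R)) := by
      rw [hm, ← integral_const_mul]
      refine setIntegral_mono_on (hKi.const_mul _).integrableOn
        ((hint _ _).mul_const _).integrableOn measurableSet_Ioc ?_
      intro w hw
      have := abs_le.1 (hwin R w hR hw)
      have h3 := hstep v (v + 1 / R - w / R ^ 2) (2 * (1 / R)) (by linarith) (by linarith)
      calc _ ≤ _ := mul_le_mul_of_nonneg_right h3 (hK0 w)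
        _ = _ := by ring
    rw [integral_mul_const] at h2
    exact h2.trans (mul_le_mul_of_nonneg_right h1 (Real.exp_pos _).le)
  -- lower bound
  have hlow : ∀ R v : ℝ, 0 < R → ∫ w, B (v + -(1 / R) - w / R ^ 2) * K w ≤
      B v * Real.exp (2 * (1 / R)) * m R + M * (I - m R) := by
    intro R v hR
    rw [← integral_add_compl (measurableSet_Ioc (a := -R) (b := R)) (hint _ _)]
    have h1 : ∫ w in Set.Ioc (-R) R, B (v + -(1 / R) - w / R ^ 2) * K w ≤
        B v * Real.exp (2 * (1 / R)) * m R := by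
      rw [hm, ← integral_const_mul]
      refine setIntegral_mono_on (hint _ _).integrableOn (hKi.const_mul _).integrableOn
        measurableSet_Ioc ?_
      intro w hw
      have := abs_le.1 (hwin R w hR hw)
      exact mul_le_mul_of_nonneg_right
        (hstep (v + -(1 / R) - w / R ^ 2) v (2 * (1 / R)) (by linarith) (by linarith)) (hK0 w)
    have h2 : ∫ w in (Set.Ioc (-R) R)ᶜ, B (v + -(1 / R) - w / R ^ 2) * K w ≤
        M * (I - m R) := by
      have h3 : I - m R = ∫ w in (Set.Ioc (-R) R)ᶜ, K w := by
        rw [hIdef, hm, ← integral_add_compl (measurableSet_Ioc (a := -R) (b := R)) hKi]; ring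
      rw [h3, ← integral_const_mul]
      exact setIntegral_mono_on (hint _ _).integrableOn (hKi.const_mul _).integrableOn
        measurableSet_Ioc.compl fun w _ => mul_le_mul_of_nonneg_right (hBM _) (hK0 w)
    linarith
  have hshift : ∀ R c : ℝ, 0 < R →
      Tendsto (fun v => ∫ w, B (v + c - w / R ^ 2) * K w) atTop (𝓝 (A * I)) := by
    intro R c hR
    exact (hlim (R ^ 2) (by positivity)).comp (tendsto_atTop_add_const_right _ c tendsto_id)
  refine tendsto_order.2 ⟨fun b hb => ?_, fun b hb => ?_⟩
  · have t1 : Tendsto (fun R => b * Real.exp (2 * (1 / R)) * m R + M * (I - m R)) atTop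
        (𝓝 (b * 1 * I + M * (I - I))) :=
      ((hexp.const_mul b).mul hmI).add ((hmI.const_sub I).const_mul M)
    have t2 : b * 1 * I + M * (I - I) < A * I := by nlinarith
    obtain ⟨R, hR1, hR2, hR3⟩ := ((t1.eventually (gt_mem_nhds t2)).and
      (hmpos.and (eventually_gt_atTop 0))).exists
    filter_upwards [(hshift R (-(1 / R)) hR3).eventually (lt_mem_nhds hR1)] with v hv
    have h1 := hlow R v hR3
    have h2 : b * (Real.exp (2 * (1 / R)) * m R) < B v * (Real.exp (2 * (1 / R)) * m R) := by
      linarith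
    exact lt_of_mul_lt_mul_right h2 (mul_pos (Real.exp_pos _) hR2).le
  · have t1 : Tendsto (fun R => b * m R) atTop (𝓝 (b * I)) := hmI.const_mul b
    have t1' : Tendsto (fun R => A * I * Real.exp (2 * (1 / R))) atTop (𝓝 (A * I * 1)) :=
      hexp.const_mul _
    have t2 : A * I * 1 < b * I := by nlinarith
    obtain ⟨R, hR1, hR2, hR3⟩ := ((t1'.eventually_lt t1 t2).and
      (hmpos.and (eventually_gt_atTop 0))).exists
    have t3 := (hshift R (1 / R) hR3).mul_const (Real.exp (2 * (1 / R)))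
    filter_upwards [t3.eventually (gt_mem_nhds hR1)] with v hv
    have h1 := hup R v hR3
    exact lt_of_mul_lt_mul_right (h1.trans_lt hv) hR2.le
/-- The Fejer kernel (with an irrelevant value at `0`). -/
noncomputable def fejK (u : ℝ) : ℝ := 2 * (1 - Real.cos u) / u ^ 2

lemma fejK_nonneg (u : ℝ) : 0 ≤ fejK u := by
  unfold fejK
  have := Real.cos_le_one u
  have h : 0 ≤ 1 - Real.cos u := by linarith
  positivity

lemma fejK_measurable : Measurable fejK := by
  unfold fejK
  fun_prop

lemma fejK_le (u : ℝ) : fejK u ≤ 8 * (1 + u ^ 2)⁻¹ := by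
  unfold fejK
  rw [← div_eq_mul_inv]
  rcases eq_or_ne u 0 with rfl | hu
  · simp
  have h1 := Real.one_sub_sq_div_two_le_cos (x := u)
  have h2 := Real.neg_one_le_cos u
  have h0 : 0 < u ^ 2 := by positivity
  rw [div_le_div_iff₀ h0 (by positivity)]
  rcases le_total (u ^ 2) 1 with h | h <;> nlinarith

lemma fejK_integrable : Integrable fejK := by
  refine (integrable_inv_one_add_sq.const_mul 8).mono' fejK_measurable.aestronglyMeasurable ?_
  refine Eventually.of_forall fun u => ?_
  rw [Real.norm_eq_abs, abs_of_nonneg (fejK_nonneg u)]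
  exact fejK_le u

lemma fejK_integral_pos : 0 < ∫ u, fejK u := by
  rw [integral_pos_iff_support_of_nonneg fejK_nonneg fejK_integrable]
  have h : Set.Ioo (0 : ℝ) 1 ⊆ Function.support fejK := by
    intro u hu
    have h1 : Real.cos u < 1 := by
      have := Real.cos_lt_cos_of_nonneg_of_le_pi (x := 0) (y := u) le_rfl
        (by linarith [hu.2, Real.pi_gt_three]) hu.1
      simpa using this
    have h2 : 0 < fejK u := by
      unfold fejK
      have := hu.1
      have : 0 < 1 - Real.cos u := by linarith
      positivity
    exact h2.ne'
  refine lt_of_lt_of_le ?_ (measure_mono h)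
  simp

lemma fejK_eq_aux (l u : ℝ) (hl : 0 < l) (hu : u ≠ 0) :
    ((l * fejK (l * u) : ℝ) : ℂ) =
      ∫ t in (-l)..l, ((1 - |t| / l : ℝ) : ℂ) * Complex.exp (Complex.I * t * u) := by
  set c : ℂ := Complex.I * u with hc
  have hc0 : c ≠ 0 := by simp [hc, hu]
  have hl0 : (l : ℂ) ≠ 0 := by exact_mod_cast hl.ne'
  have hcont : Continuous fun t : ℝ =>
      ((1 - |t| / l : ℝ) : ℂ) * Complex.exp (Complex.I * t * u) := by fun_prop
  have hE : ∀ t : ℝ, HasDerivAt (fun t : ℝ => Complex.exp (c * t)) (Complex.exp (c * t) * c) t := by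
    intro t
    have := ((hasDerivAt_id (t : ℂ)).const_mul c).cexp.comp_ofReal
    simpa using this
  have hid : ∀ t : ℝ, HasDerivAt (fun t : ℝ => (t : ℂ)) 1 t := fun t =>
    (hasDerivAt_id (t : ℂ)).comp_ofReal
  have e1 : ∫ t in (0 : ℝ)..l, ((1 - |t| / l : ℝ) : ℂ) * Complex.exp (Complex.I * t * u) =
      Complex.exp (c * l) / (l * c ^ 2) - (1 / c + 1 / (l * c ^ 2)) := by
    have h : ∀ t ∈ Set.uIcc 0 l, HasDerivAt
        (fun t : ℝ => (1 - (t : ℂ) / l) * Complex.exp (c * t) / c +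
          Complex.exp (c * t) / (l * c ^ 2))
        (((1 - |t| / l : ℝ) : ℂ) * Complex.exp (Complex.I * t * u)) t := by
      intro t ht
      rw [Set.uIcc_of_le hl.le] at ht
      have h1 := ((((hid t).div_const (l : ℂ)).const_sub 1).mul (hE t)).div_const c
      have h2 := h1.add ((hE t).div_const (l * c ^ 2))
      convert! h2 using 1
      rw [abs_of_nonneg ht.1]
      have : Complex.I * t * u = c * t := by rw [hc]; ring
      rw [this]; push_cast
      field_simp
      ring
    rw [intervalIntegral.integral_eq_sub_of_hasDerivAt h (hcont.intervalIntegrable _ _)]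
    simp [hl0]
  have e2 : ∫ t in (-l)..(0 : ℝ), ((1 - |t| / l : ℝ) : ℂ) * Complex.exp (Complex.I * t * u) =
      (1 / c - 1 / (l * c ^ 2)) + Complex.exp (-(c * l)) / (l * c ^ 2) := by
    have h : ∀ t ∈ Set.uIcc (-l) 0, HasDerivAt
        (fun t : ℝ => (1 + (t : ℂ) / l) * Complex.exp (c * t) / c -
          Complex.exp (c * t) / (l * c ^ 2))
        (((1 - |t| / l : ℝ) : ℂ) * Complex.exp (Complex.I * t * u)) t := by
      intro t ht
      rw [Set.uIcc_of_le (by linarith)] at ht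
      have h1 := ((((hid t).div_const (l : ℂ)).const_add 1).mul (hE t)).div_const c
      have h2 := h1.sub ((hE t).div_const (l * c ^ 2))
      convert! h2 using 1
      rw [abs_of_nonpos ht.2]
      have : Complex.I * t * u = c * t := by rw [hc]; ring
      rw [this]; push_cast
      field_simp
      ring
    rw [intervalIntegral.integral_eq_sub_of_hasDerivAt h (hcont.intervalIntegrable _ _)]
    simp [hl0]
  rw [← intervalIntegral.integral_add_adjacent_intervals (b := 0)
    (hcont.intervalIntegrable _ _) (hcont.intervalIntegrable _ _), e1, e2]
  have hcos : Complex.exp (c * l) + Complex.exp (-(c * l)) = 2 * Complex.cos (l * u) := by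
    rw [Complex.two_cos, hc]; congr 2 <;> ring
  have hc2 : c ^ 2 = -(u : ℂ) ^ 2 := by rw [hc, mul_pow, Complex.I_sq]; ring
  have hu0 : (u : ℂ) ≠ 0 := by exact_mod_cast hu
  have : (1 / c - 1 / (l * c ^ 2)) + Complex.exp (-(c * l)) / (l * c ^ 2) +
      (Complex.exp (c * l) / (l * c ^ 2) - (1 / c + 1 / (l * c ^ 2))) =
      ((Complex.exp (c * l) + Complex.exp (-(c * l))) - 2) / (l * c ^ 2) := by
    field_simp; ring
  rw [this, hcos, hc2]
  unfold fejK
  push_cast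
  field_simp
  ring
/-- First step: smoothed identity on the line `Re s = 1 + δ`. -/
lemma smoothed_eq (B : ℝ → ℝ) (M A : ℝ) (hBm : Measurable B) (hB : ∀ u, |B u - A| ≤ M)
    (H : ℂ → ℂ)
    (hH : ∀ s : ℂ, 1 < s.re →
      ∫ u in Set.Ioi (0 : ℝ), ((B u - A : ℝ) : ℂ) * Complex.exp (-(s - 1) * u) = H s)
    (l δ v : ℝ) (hl : 0 < l) (hδ : 0 < δ) :
    ∫ u in Set.Ioi (0 : ℝ), (((B u - A) * Real.exp (-δ * u) * (l * fejK (l * (v - u))) : ℝ) : ℂ) =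
      ∫ t in (-l)..l, ((1 - |t| / l : ℝ) : ℂ) * Complex.exp (Complex.I * t * v) *
        H (1 + δ + Complex.I * t) := by
  have hll : -l ≤ l := by linarith
  set F : ℝ → ℝ → ℂ := fun t u => (((1 - |t| / l : ℝ) : ℂ) * Complex.exp (Complex.I * t * v)) *
    (((B u - A : ℝ) : ℂ) * Complex.exp (-((1 + δ + Complex.I * t) - 1) * u)) with hF
  have hR : ∫ t in (-l)..l, ((1 - |t| / l : ℝ) : ℂ) * Complex.exp (Complex.I * t * v) *
        H (1 + δ + Complex.I * t) = ∫ t in (-l)..l, ∫ u in Set.Ioi (0 : ℝ), F t u := by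
    refine intervalIntegral.integral_congr fun t _ => ?_
    simp only [hF]
    rw [integral_const_mul, hH]
    simp [hδ]
  have hint : Integrable (Function.uncurry F)
      ((volume.restrict (Set.Ioc (-l) l)).prod (volume.restrict (Set.Ioi (0 : ℝ)))) := by
    have hb : Integrable (fun z : ℝ × ℝ => (1 : ℝ) * (M * Real.exp (-δ * z.2)))
        ((volume.restrict (Set.Ioc (-l) l)).prod (volume.restrict (Set.Ioi (0 : ℝ)))) := by
      refine Integrable.mul_prod (f := fun _ : ℝ => (1 : ℝ))
        (g := fun u : ℝ => M * Real.exp (-δ * u)) (integrable_const _) ?_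
      exact (integrableOn_exp_mul_Ioi (by linarith) 0).const_mul M
    refine hb.mono' ?_ ?_
    · apply Measurable.aestronglyMeasurable
      simp only [hF, Function.uncurry_def]
      fun_prop
    · rw [Measure.prod_restrict]
      refine (ae_restrict_iff' (measurableSet_Ioc.prod measurableSet_Ioi)).2
        (Eventually.of_forall ?_)
      rintro ⟨t, u⟩ ⟨ht, hu⟩
      simp only [Function.uncurry_apply_pair, hF, norm_mul, Complex.norm_real, Complex.norm_exp,
        Real.norm_eq_abs]
      have h1 : |1 - |t| / l| ≤ 1 := by
        have : |t| ≤ l := abs_le.2 ⟨ht.1.le, ht.2⟩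
        have h2 : |t| / l ≤ 1 := (div_le_one hl).2 this
        have h3 : 0 ≤ |t| / l := by positivity
        rw [abs_le]; constructor <;> linarith
      have h4 : Real.exp (Complex.I * t * v).re = 1 := by simp
      have h5 : (-((1 + (δ : ℂ) + Complex.I * t) - 1) * u).re = -δ * u := by simp
      rw [h4, h5, mul_one]
      gcongr
      exact hB u
  rw [hR, intervalIntegral.integral_of_le hll, integral_integral_swap hint]
  have hne : ∀ᵐ u : ℝ ∂(volume.restrict (Set.Ioi (0 : ℝ))), u ≠ v :=
    ae_restrict_of_ae (by simp [ae_iff])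
  refine integral_congr_ae ?_
  filter_upwards [hne] with u hu
  rw [← intervalIntegral.integral_of_le hll]
  have hvu : v - u ≠ 0 := sub_ne_zero.2 hu.symm
  rw [Complex.ofReal_mul, fejK_eq_aux l (v - u) hl hvu, ← intervalIntegral.integral_const_mul]
  refine intervalIntegral.integral_congr fun t _ => ?_
  simp only [hF]
  push_cast
  have e : Complex.exp (Complex.I * t * v) * Complex.exp (-((1 + δ + Complex.I * t) - 1) * u) =
      Complex.exp (-δ * u) * Complex.exp (Complex.I * t * (v - u)) := by
    rw [← Complex.exp_add, ← Complex.exp_add]; congr 1; ring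
  linear_combination (-(1 - ((|t| : ℝ) : ℂ) / l) * (B u - A)) * e

/-- Second step: let `δ → 0`. -/
lemma smoothed_eq_zero (B : ℝ → ℝ) (M A : ℝ) (hBm : Measurable B) (hB : ∀ u, |B u - A| ≤ M)
    (H : ℂ → ℂ) (hHc : ContinuousOn H {s | 1 ≤ s.re})
    (hH : ∀ s : ℂ, 1 < s.re →
      ∫ u in Set.Ioi (0 : ℝ), ((B u - A : ℝ) : ℂ) * Complex.exp (-(s - 1) * u) = H s)
    (l v : ℝ) (hl : 0 < l) :
    ∫ u in Set.Ioi (0 : ℝ), (((B u - A) * (l * fejK (l * (v - u))) : ℝ) : ℂ) =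
      ∫ t in (-l)..l, ((1 - |t| / l : ℝ) : ℂ) * Complex.exp (Complex.I * t * v) *
        H (1 + Complex.I * t) := by
  have hll : -l ≤ l := by linarith
  set ν : Filter ℝ := 𝓝[>] 0
  have hsmall : ∀ᶠ δ : ℝ in ν, δ ∈ Set.Ioc (0 : ℝ) 1 := Ioc_mem_nhdsGT one_pos
  have hKint : Integrable (fun u => M * (l * fejK (l * (v - u)))) := by
    have h1 : Integrable (fun u => fejK (l * u)) := fejK_integrable.comp_mul_left' hl.ne'
    have h2 := (h1.comp_sub_left v)
    exact (h2.const_mul l).const_mul M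
  have L : Tendsto (fun δ : ℝ => ∫ u in Set.Ioi (0 : ℝ),
      (((B u - A) * Real.exp (-δ * u) * (l * fejK (l * (v - u))) : ℝ) : ℂ)) ν
      (𝓝 (∫ u in Set.Ioi (0 : ℝ), (((B u - A) * (l * fejK (l * (v - u))) : ℝ) : ℂ))) := by
    refine tendsto_integral_filter_of_dominated_convergence
      (fun u => M * (l * fejK (l * (v - u)))) ?_ ?_ hKint.integrableOn ?_
    · refine Eventually.of_forall fun δ => ?_
      apply Measurable.aestronglyMeasurable
      have := fejK_measurable
      fun_prop
    · filter_upwards [hsmall] with δ hδ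
      refine (ae_restrict_iff' measurableSet_Ioi).2 (Eventually.of_forall fun u hu => ?_)
      have hK : 0 ≤ l * fejK (l * (v - u)) := mul_nonneg hl.le (fejK_nonneg _)
      rw [Complex.norm_real, Real.norm_eq_abs, abs_mul, abs_mul, abs_of_nonneg hK, Real.abs_exp]
      refine mul_le_mul_of_nonneg_right ?_ hK
      have h1 : Real.exp (-δ * u) ≤ 1 := by
        rw [Real.exp_le_one_iff]
        have := mul_pos hδ.1 hu
        linarith
      calc _ ≤ M * 1 := by
            gcongr
            · exact (abs_nonneg _).trans (hB u)
            · exact hB u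
        _ = M := mul_one M
    · refine Eventually.of_forall fun u => ?_
      have h : Continuous fun δ : ℝ =>
        (((B u - A) * Real.exp (-δ * u) * (l * fejK (l * (v - u))) : ℝ) : ℂ) := by fun_prop
      have := (h.tendsto 0).mono_left (nhdsWithin_le_nhds (s := Set.Ioi 0))
      simpa using this
  have R : Tendsto (fun δ : ℝ => ∫ t in (-l)..l,
      ((1 - |t| / l : ℝ) : ℂ) * Complex.exp (Complex.I * t * v) * H (1 + δ + Complex.I * t)) ν
      (𝓝 (∫ t in (-l)..l, ((1 - |t| / l : ℝ) : ℂ) * Complex.exp (Complex.I * t * v) *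
        H (1 + Complex.I * t))) := by
    have hco : ContinuousOn (fun z : ℝ × ℝ => H (1 + z.1 + Complex.I * z.2))
        (Set.Icc 0 1 ×ˢ Set.Icc (-l) l) := by
      refine hHc.comp (by fun_prop) ?_
      rintro ⟨δ, t⟩ ⟨hδ, _⟩
      simp only [Set.mem_ofPred_eq, Complex.add_re, Complex.one_re, Complex.ofReal_re,
        Complex.mul_re, Complex.I_re, Complex.I_im, Complex.ofReal_im]
      have := hδ.1
      simp only at this
      linarith
    obtain ⟨C, hC⟩ := (isCompact_Icc.prod isCompact_Icc).exists_bound_of_continuousOn hco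
    have hcw : Continuous fun t : ℝ =>
        ((1 - |t| / l : ℝ) : ℂ) * Complex.exp (Complex.I * t * v) := by fun_prop
    have hci : ∀ δ ∈ Set.Icc (0 : ℝ) 1, ContinuousOn (fun t : ℝ =>
        ((1 - |t| / l : ℝ) : ℂ) * Complex.exp (Complex.I * t * v) * H (1 + δ + Complex.I * t))
        (Set.Icc (-l) l) := by
      intro δ hδ
      refine hcw.continuousOn.mul ?_
      exact hco.comp (f := fun t : ℝ => (δ, t)) (by fun_prop) fun t ht => ⟨hδ, ht⟩
    refine intervalIntegral.tendsto_integral_filter_of_dominated_convergence (fun _ => 1 * C)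
      ?_ ?_ (by simp) ?_
    · filter_upwards [hsmall] with δ hδ
      rw [Set.uIoc_of_le hll]
      exact ((hci δ ⟨hδ.1.le, hδ.2⟩).mono Set.Ioc_subset_Icc_self).aestronglyMeasurable
        measurableSet_Ioc
    · filter_upwards [hsmall] with δ hδ
      refine Eventually.of_forall fun t ht => ?_
      rw [Set.uIoc_of_le hll] at ht
      have h1 : |1 - |t| / l| ≤ 1 := by
        have : |t| ≤ l := abs_le.2 ⟨ht.1.le, ht.2⟩
        have h2 : |t| / l ≤ 1 := (div_le_one hl).2 this
        have h3 : 0 ≤ |t| / l := by positivity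
        rw [abs_le]; constructor <;> linarith
      have h4 : Real.exp (Complex.I * t * v).re = 1 := by simp
      rw [norm_mul, norm_mul, Complex.norm_real, Complex.norm_exp, Real.norm_eq_abs, h4, mul_one]
      have h5 := hC (δ, t) ⟨⟨hδ.1.le, hδ.2⟩, ht.1.le, ht.2⟩
      gcongr
    · refine Eventually.of_forall fun t ht => ?_
      rw [Set.uIoc_of_le hll] at ht
      refine Tendsto.const_mul _ ?_
      have h1 : ContinuousWithinAt H {s | 1 ≤ s.re} (1 + Complex.I * t) :=
        hHc _ (by simp)
      refine h1.tendsto.comp (tendsto_nhdsWithin_iff.2 ⟨?_, ?_⟩)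
      · have h : Continuous fun δ : ℝ => (1 + δ + Complex.I * t : ℂ) := by fun_prop
        have := (h.tendsto 0).mono_left (nhdsWithin_le_nhds (s := Set.Ioi 0))
        simpa using this
      · filter_upwards [hsmall] with δ hδ
        have := hδ.1
        simp
        linarith
  refine tendsto_nhds_unique L (R.congr' ?_)
  filter_upwards [hsmall] with δ hδ
  exact (smoothed_eq B M A hBm hB H hH l δ v hl hδ.1).symm

/-- Third step: Riemann-Lebesgue. -/
lemma smoothed_tendsto (H : ℂ → ℂ) (l : ℝ) (hl : 0 < l) :
    Tendsto (fun v : ℝ => ∫ t in (-l)..l,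
      ((1 - |t| / l : ℝ) : ℂ) * Complex.exp (Complex.I * t * v) * H (1 + Complex.I * t))
      atTop (𝓝 0) := by
  have hll : -l ≤ l := by linarith
  set f : ℝ → ℂ := (Set.Ioc (-l) l).indicator
    (fun t => ((1 - |t| / l : ℝ) : ℂ) * H (1 + Complex.I * t)) with hf
  have h := Real.tendsto_integral_exp_smul_cocompact f
  have h2 : Tendsto (fun v : ℝ => -(v / (2 * Real.pi))) atTop (cocompact ℝ) := by
    refine Tendsto.mono_right ?_ atBot_le_cocompact
    exact tendsto_neg_atTop_atBot.comp (tendsto_id.atTop_div_const (by positivity))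
  refine (h.comp h2).congr fun v => ?_
  rw [intervalIntegral.integral_of_le hll, ← integral_indicator measurableSet_Ioc]
  refine integral_congr_ae (Eventually.of_forall fun t => ?_)
  simp only [hf, Set.indicator]
  split_ifs
  · rw [Circle.smul_def, Real.fourierChar_apply, smul_eq_mul]
    have : (Real.pi : ℂ) ≠ 0 := by exact_mod_cast Real.pi_ne_zero
    have e : ((2 * Real.pi * -(t * -(v / (2 * Real.pi))) : ℝ) : ℂ) * Complex.I =
        Complex.I * t * v := by
      push_cast; field_simp
    rw [e]; ring
  · simp

lemma smoothed_limit (B : ℝ → ℝ) (M A : ℝ) (hBm : Measurable B) (hB : ∀ u, |B u - A| ≤ M)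
    (hBneg : ∀ u ≤ 0, B u = 0)
    (H : ℂ → ℂ) (hHc : ContinuousOn H {s | 1 ≤ s.re})
    (hH : ∀ s : ℂ, 1 < s.re →
      ∫ u in Set.Ioi (0 : ℝ), ((B u - A : ℝ) : ℂ) * Complex.exp (-(s - 1) * u) = H s)
    (l : ℝ) (hl : 0 < l) :
    Tendsto (fun v => ∫ w, B (v - w / l) * fejK w) atTop (𝓝 (A * ∫ u, fejK u)) := by
  have h1 : Tendsto (fun v : ℝ => ∫ u in Set.Ioi (0 : ℝ), (B u - A) * (l * fejK (l * (v - u))))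
      atTop (𝓝 0) := by
    have h := smoothed_tendsto H l hl
    have h' : Tendsto (fun v : ℝ => ((∫ u in Set.Ioi (0 : ℝ),
        (B u - A) * (l * fejK (l * (v - u))) : ℝ) : ℂ)) atTop (𝓝 ((0 : ℝ) : ℂ)) := by
      rw [Complex.ofReal_zero]
      refine h.congr fun v => ?_
      rw [← smoothed_eq_zero B M A hBm hB H hHc hH l v hl, ← integral_complex_ofReal]
    simpa [Function.comp_def] using (Complex.continuous_re.tendsto _).comp h'
  have h2 : ∀ v : ℝ, ∫ u in Set.Ioi (0 : ℝ), (B u - A) * (l * fejK (l * (v - u))) =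
      ∫ w, (B (v - w / l) - (Set.Iio (l * v)).indicator (fun _ => A) w) * fejK w := by
    intro v
    rw [← integral_indicator measurableSet_Ioi]
    set g : ℝ → ℝ := (Set.Ioi (0 : ℝ)).indicator
      (fun u => (B u - A) * (l * fejK (l * (v - u)))) with hg
    have e1 : ∫ u, g u = ∫ u, g (v - u) := (integral_sub_left_eq_self g volume v).symm
    have e2 := Measure.integral_comp_div (fun u => g (v - u)) l
    rw [abs_of_pos hl, smul_eq_mul] at e2
    have e3 : ∫ u, g u = ∫ w, l⁻¹ * g (v - w / l) := by
      rw [integral_const_mul, e2, e1]; field_simp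
    rw [e3]
    refine integral_congr_ae (Eventually.of_forall fun w => ?_)
    simp only [hg, Set.indicator, Set.mem_Ioi, Set.mem_Iio]
    have hiff : 0 < v - w / l ↔ w < l * v := by
      rw [sub_pos, div_lt_iff₀ hl, mul_comm]
    by_cases hw : w < l * v
    · rw [if_pos hw, if_pos (hiff.2 hw)]
      have : l * (v - (v - w / l)) = w := by field_simp; ring
      rw [this]; field_simp
    · have h0 : ¬ 0 < v - w / l := fun h => hw (hiff.1 h)
      rw [if_neg hw, if_neg h0, hBneg _ (not_lt.1 h0)]; simp
  have hb : ∀ v : ℝ, Integrable (fun w => B (v - w / l) * fejK w) := by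
    intro v
    refine fejK_integrable.bdd_mul (c := M + |A|) ?_ ?_
    · exact (hBm.comp (by fun_prop)).aestronglyMeasurable
    · refine Eventually.of_forall fun w => ?_
      rw [Real.norm_eq_abs]
      have := abs_add_le (B (v - w / l) - A) A
      rw [sub_add_cancel] at this
      linarith [hB (v - w / l)]
  have hind : ∀ v : ℝ, Integrable (fun w => (Set.Iio (l * v)).indicator (fun _ => A) w * fejK w) := by
    intro v
    refine fejK_integrable.bdd_mul (c := |A|) ?_ ?_
    · exact (measurable_const.indicator measurableSet_Iio).aestronglyMeasurable
    · refine Eventually.of_forall fun w => ?_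
      simp only [Set.indicator]; split_ifs <;> simp
  have h3 : Tendsto (fun v : ℝ => ∫ w, (Set.Iio (l * v)).indicator (fun _ => A) w * fejK w) atTop
      (𝓝 (∫ w, A * fejK w)) := by
    refine tendsto_integral_filter_of_dominated_convergence (fun w => |A| * fejK w) ?_ ?_
      (fejK_integrable.const_mul _) ?_
    · exact Eventually.of_forall fun v => (hind v).aestronglyMeasurable
    · refine Eventually.of_forall fun v => Eventually.of_forall fun w => ?_
      rw [norm_mul, Real.norm_eq_abs, Real.norm_eq_abs, abs_of_nonneg (fejK_nonneg w)]
      refine mul_le_mul_of_nonneg_right ?_ (fejK_nonneg w)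
      simp only [Set.indicator]; split_ifs <;> simp
    · refine Eventually.of_forall fun w => ?_
      refine tendsto_const_nhds.congr' ?_
      filter_upwards [eventually_gt_atTop (w / l)] with v hv
      have : w < l * v := by rwa [div_lt_iff₀ hl, mul_comm] at hv
      simp [Set.indicator, this]
  rw [integral_const_mul] at h3
  have h4 := h1.add h3
  rw [zero_add] at h4
  refine h4.congr fun v => ?_
  rw [h2, ← integral_add ?_ (hind v)]
  · refine integral_congr_ae (Eventually.of_forall fun w => ?_)
    simp only; ring
  · refine ((hb v).sub (hind v)).congr (Eventually.of_forall fun w => ?_)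
    simp only [Pi.sub_apply]; ring
/-- A version of the Wiener-Ikehara theorem (with a Chebyshev bound as hypothesis). -/
theorem wiener_ikehara_aux_s7 (a : ℕ → ℝ) (ha0 : ∀ n, 0 ≤ a n) (ha1 : a 1 = 0) (C : ℝ)
    (hC : ∀ x : ℝ, 0 ≤ x → ∑ k ∈ Finset.Icc 1 ⌊x⌋₊, a k ≤ C * x) (A : ℝ)
    (G : ℂ → ℂ) (hG : ContinuousOn G {s | 1 ≤ s.re})
    (hGeq : ∀ s : ℂ, 1 < s.re → LSeries (fun n => (a n : ℂ)) s = A / (s - 1) + G s) :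
    Tendsto (fun x : ℕ => (∑ k ∈ Finset.Icc 1 x, a k) / (x : ℝ)) atTop (𝓝 A) := by
  set P : ℝ → ℝ := fun x => ∑ k ∈ Finset.Icc 1 ⌊x⌋₊, a k with hP
  have hPmono : Monotone P := by
    intro x y hxy
    refine Finset.sum_le_sum_of_subset_of_nonneg ?_ fun _ _ _ => ha0 _
    exact Finset.Icc_subset_Icc le_rfl (Nat.floor_le_floor hxy)
  have hP0 : ∀ x, 0 ≤ P x := fun x => Finset.sum_nonneg fun _ _ => ha0 _
  set B : ℝ → ℝ := fun u => Real.exp (-u) * P (Real.exp u) with hBdef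
  have hBm : Measurable B := by
    have := hPmono.measurable
    fun_prop
  have hB0 : ∀ u, 0 ≤ B u := fun u => mul_nonneg (Real.exp_pos _).le (hP0 _)
  have hBM : ∀ u, B u ≤ C := by
    intro u
    have h1 := hC (Real.exp u) (Real.exp_pos u).le
    calc B u ≤ Real.exp (-u) * (C * Real.exp u) :=
          mul_le_mul_of_nonneg_left h1 (Real.exp_pos _).le
      _ = C * (Real.exp (-u) * Real.exp u) := by ring
      _ = C := by rw [← Real.exp_add]; simp
  have hBe : ∀ u, B u * Real.exp u = P (Real.exp u) := by
    intro u
    simp only [hBdef]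
    rw [mul_right_comm, ← Real.exp_add]; simp
  have hmono : ∀ u w, u ≤ w → B u * Real.exp u ≤ B w * Real.exp w := by
    intro u w h
    rw [hBe, hBe]
    exact hPmono (Real.exp_le_exp.2 h)
  have hBneg : ∀ u ≤ 0, B u = 0 := by
    intro u hu
    have h1 : ⌊Real.exp u⌋₊ ≤ 1 := by
      have h2 : Real.exp u ≤ 1 := Real.exp_le_one_iff.2 hu
      have := Nat.floor_le_floor h2
      simpa using this
    have : P (Real.exp u) = 0 := by
      refine Finset.sum_eq_zero fun k hk => ?_
      rw [Finset.mem_Icc] at hk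
      have : k = 1 := by omega
      rw [this, ha1]
    simp [hBdef, this]
  have hBA : ∀ u, |B u - A| ≤ C + |A| := by
    intro u
    have := abs_sub (B u) A
    rw [abs_of_nonneg (hB0 u)] at this
    linarith [hBM u]
  set H : ℂ → ℂ := fun s => (G s - A) / s with hHdef
  have hHc : ContinuousOn H {s | 1 ≤ s.re} := by
    refine (hG.sub continuousOn_const).div continuousOn_id ?_
    intro s hs h0
    have h0 : s = 0 := h0
    rw [h0] at hs
    norm_num at hs
  have hint : ∀ s : ℂ, 1 < s.re →
      IntegrableOn (fun u : ℝ => Complex.exp (-(s - 1) * u)) (Set.Ioi 0) := by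
    intro s hs
    exact integrableOn_exp_mul_complex_Ioi (by simpa using hs) 0
  have hH : ∀ s : ℂ, 1 < s.re →
      ∫ u in Set.Ioi (0 : ℝ), ((B u - A : ℝ) : ℂ) * Complex.exp (-(s - 1) * u) = H s := by
    intro s hs
    have hs0 : s ≠ 0 := by rintro rfl; norm_num at hs
    have hs1 : s - 1 ≠ 0 := by
      intro h
      have : s = 1 := sub_eq_zero.1 h
      rw [this] at hs; norm_num at hs
    have i1 : IntegrableOn (fun u : ℝ => (B u : ℂ) * Complex.exp (-(s - 1) * u)) (Set.Ioi 0) := by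
      refine (hint s hs).bdd_mul (c := C) ?_ ?_
      · exact (Complex.measurable_ofReal.comp hBm).aestronglyMeasurable
      · refine Eventually.of_forall fun u => ?_
        rw [Complex.norm_real, Real.norm_eq_abs, abs_of_nonneg (hB0 u)]
        exact hBM u
    have e1 : ∫ u in Set.Ioi (0 : ℝ), Complex.exp (-(s - 1) * u) = 1 / (s - 1) := by
      rw [integral_exp_mul_complex_Ioi (by simpa using hs)]
      simp only [Complex.ofReal_zero, mul_zero, Complex.exp_zero]
      rw [neg_div_neg_eq]
    have e2 : ∫ u in Set.Ioi (0 : ℝ), (B u : ℂ) * Complex.exp (-(s - 1) * u) =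
        LSeries (fun n => (a n : ℂ)) s / s := by
      have hO : (fun n : ℕ => ∑ k ∈ Finset.Icc 1 n, a k) =O[atTop] fun n => (n : ℝ) ^ (1 : ℝ) := by
        refine Asymptotics.IsBigO.of_bound C (Eventually.of_forall fun n => ?_)
        have h1 := hC n (Nat.cast_nonneg n)
        rw [Nat.floor_natCast] at h1
        rw [Real.norm_eq_abs, abs_of_nonneg (Finset.sum_nonneg fun _ _ => ha0 _), Real.rpow_one,
          Real.norm_eq_abs, Nat.abs_cast]
        exact h1
      rw [LSeries_eq_mul_integral_of_nonneg a zero_le_one hs hO ha0, mul_div_cancel_left₀ _ hs0]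
      have himg : Real.exp '' (Set.Ioi 0) = Set.Ioi 1 := by
        ext y
        constructor
        · rintro ⟨x, hx, rfl⟩
          exact Real.one_lt_exp_iff.2 hx
        · intro hy
          exact ⟨Real.log y, Real.log_pos hy, Real.exp_log (lt_trans one_pos hy)⟩
      rw [← himg, integral_image_eq_integral_abs_deriv_smul measurableSet_Ioi
        (fun x _ => (Real.hasDerivAt_exp x).hasDerivWithinAt) Real.exp_injective.injOn]
      refine setIntegral_congr_fun measurableSet_Ioi fun u _ => ?_
      simp only [hBdef, hP]
      rw [abs_of_pos (Real.exp_pos u), Complex.real_smul]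
      have h1 : ((Real.exp u : ℝ) : ℂ) ^ (-(s + 1)) = Complex.exp (-(s + 1) * u) := by
        rw [Complex.cpow_def_of_ne_zero (by exact_mod_cast (Real.exp_pos u).ne'),
          ← Complex.ofReal_log (Real.exp_pos u).le, Real.log_exp]
        congr 1; ring
      rw [h1]
      push_cast
      have h2 : Complex.exp (-u) * Complex.exp (-(s - 1) * u) =
          Complex.exp u * Complex.exp (-(s + 1) * u) := by
        rw [← Complex.exp_add, ← Complex.exp_add]; congr 1; ring
      linear_combination (∑ k ∈ Finset.Icc 1 ⌊Real.exp u⌋₊, (a k : ℂ)) * h2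
    have e3 : ∫ u in Set.Ioi (0 : ℝ), ((B u - A : ℝ) : ℂ) * Complex.exp (-(s - 1) * u) =
        (∫ u in Set.Ioi (0 : ℝ), (B u : ℂ) * Complex.exp (-(s - 1) * u)) -
        ∫ u in Set.Ioi (0 : ℝ), (A : ℂ) * Complex.exp (-(s - 1) * u) := by
      rw [← integral_sub i1 ((hint s hs).const_mul _)]
      refine integral_congr_ae (Eventually.of_forall fun u => ?_)
      simp only; push_cast; ring
    rw [e3, integral_const_mul, e1, e2, hGeq s hs]
    simp only [hHdef]
    field_simp
    ring
  have key := tauber_final B fejK C A hBm hB0 hBM hmono fejK_nonneg fejK_integrable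
    fejK_integral_pos fun l hl => smoothed_limit B (C + |A|) A hBm hBA hBneg H hHc hH l hl
  have hlog : Tendsto (fun n : ℕ => Real.log n) atTop atTop :=
    Real.tendsto_log_atTop.comp tendsto_natCast_atTop_atTop
  refine (key.comp hlog).congr' ?_
  filter_upwards [eventually_gt_atTop 0] with n hn
  have hn' : (0 : ℝ) < n := by exact_mod_cast hn
  simp only [Function.comp, hBdef, hP]
  rw [Real.exp_neg, Real.exp_log hn', Nat.floor_natCast]
  field_simp

open ArithmeticFunction in
/-- The prime number theorem in arithmetic progressions, for the von Mangoldt function. -/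
theorem pnt_ap {q : ℕ} [NeZero q] {a : ZMod q} (ha : IsUnit a) :
    Tendsto (fun x : ℕ => (∑ k ∈ Finset.Icc 1 x, vonMangoldt.residueClass a k) / (x : ℝ)) atTop
      (𝓝 ((q.totient : ℝ)⁻¹)) := by
  refine wiener_ikehara_aux_s7 _ (vonMangoldt.residueClass_nonneg a) ?_ (Real.log 4 + 4) ?_ _
    (vonMangoldt.LFunctionResidueClassAux a) (vonMangoldt.continuousOn_LFunctionResidueClassAux a) ?_
  · simp [vonMangoldt.residueClass, Set.indicator]
  · intro x hx
    refine le_trans ?_ (Chebyshev.psi_le_const_mul_self hx)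
    exact Finset.sum_le_sum fun k _ => vonMangoldt.residueClass_le a k
  · intro s hs
    rw [vonMangoldt.eqOn_LFunctionResidueClassAux ha hs]
    push_cast
    ring
open ArithmeticFunction in
lemma avg_vonMangoldt {N : ℕ} [NeZero N] (g : ZMod N → ℝ) (hg0 : ∀ a, ¬ IsUnit a → g a = 0)
    (hgs : ∑ a, g a = 0) :
    Tendsto (fun x : ℕ => (∑ k ∈ Finset.Icc 1 x, g k * vonMangoldt k) / (x : ℝ)) atTop (𝓝 0) := by
  have h1 : Tendsto (fun x : ℕ => ∑ a : ZMod N,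
      g a * ((∑ k ∈ Finset.Icc 1 x, vonMangoldt.residueClass a k) / (x : ℝ))) atTop
      (𝓝 (∑ a : ZMod N, g a * ((N.totient : ℝ)⁻¹))) := by
    refine tendsto_finsetSum _ fun a _ => ?_
    by_cases ha : IsUnit a
    · exact (pnt_ap ha).const_mul _
    · simp [hg0 a ha]
  rw [← Finset.sum_mul, hgs, zero_mul] at h1
  refine h1.congr fun x => ?_
  simp_rw [← mul_div_assoc, ← Finset.sum_div, Finset.mul_sum]
  rw [Finset.sum_comm]
  congr 1
  refine Finset.sum_congr rfl fun k _ => ?_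
  simp only [vonMangoldt.residueClass, Set.indicator, Set.mem_ofPred_eq, mul_ite, mul_zero]
  simp

open ArithmeticFunction Chebyshev in
lemma avg_primes {N : ℕ} [NeZero N] (g : ZMod N → ℝ) (hg0 : ∀ a, ¬ IsUnit a → g a = 0)
    (hgs : ∑ a, g a = 0) (hg1 : ∀ a, |g a| ≤ 1) :
    Tendsto (fun x : ℕ => (∑ p ∈ Nat.primesLE x, g p) / (Nat.primeCounting x : ℝ))
      atTop (𝓝 0) := by
  have b1 := (avg_vonMangoldt g hg0 hgs).abs
  rw [abs_zero] at b1
  have b2 : Tendsto (fun x : ℕ => (psi x - theta x) / (x : ℝ)) atTop (𝓝 0) := by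
    have h := isBigO_psi_sub_theta_sqrt
    have h2 : (Real.sqrt) =o[atTop] (fun x : ℝ => x) := by
      refine Asymptotics.isLittleO_of_tendsto' ?_ ?_
      · filter_upwards [eventually_gt_atTop (0 : ℝ)] with x hx h
        exact absurd h hx.ne'
      · have := tendsto_inv_atTop_zero.comp Real.tendsto_sqrt_atTop
        refine this.congr fun x => ?_
        simp [Real.sqrt_div_self']
    exact (h.trans_isLittleO h2).tendsto_div_nhds_zero.comp tendsto_natCast_atTop_atTop
  have b3 : Tendsto (fun x : ℕ => (Nat.primeCounting x * Real.log x - theta x) / (x : ℝ)) atTop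
      (𝓝 0) := by
    have h := primeCounting_sub_theta_div_log_isBigO
    have h2 : (fun x : ℝ => x / Real.log x ^ 2) =o[atTop] (fun x : ℝ => x / Real.log x) := by
      refine Asymptotics.isLittleO_of_tendsto' ?_ ?_
      · filter_upwards [eventually_gt_atTop 1] with x hx hx0
        have := Real.log_pos hx
        have : 0 < x / Real.log x := by positivity
        exact absurd hx0 this.ne'
      · refine Tendsto.congr' ?_ (tendsto_inv_atTop_zero.comp Real.tendsto_log_atTop)
        filter_upwards [eventually_gt_atTop 1] with x hx
        have := Real.log_pos hx
        simp only [Function.comp]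
        field_simp
    have h3 := ((h.trans_isLittleO h2).tendsto_div_nhds_zero).comp
      (tendsto_natCast_atTop_atTop (R := ℝ))
    refine h3.congr' ?_
    filter_upwards [eventually_gt_atTop 1] with x hx
    have hx1 : (1 : ℝ) < x := by exact_mod_cast hx
    have := Real.log_pos hx1
    simp only [Function.comp, Nat.floor_natCast]
    field_simp
  have b4 : ∀ᶠ x : ℕ in atTop, (1 / 2 : ℝ) * x ≤ Nat.primeCounting x * Real.log x := by
    have h : Tendsto (fun x : ℕ => Real.log (x + 1) / (x + 1 : ℝ)) atTop (𝓝 0) := by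
      have h1 := Real.isLittleO_log_id_atTop.tendsto_div_nhds_zero
      have h2 : Tendsto (fun x : ℕ => (x + 1 : ℝ)) atTop atTop :=
        tendsto_atTop_add_const_right _ _ tendsto_natCast_atTop_atTop
      exact h1.comp h2
    have hl2 : (0.6 : ℝ) < Real.log 2 := by linarith [Real.log_two_gt_d9]
    filter_upwards [h.eventually (gt_mem_nhds (by norm_num : (0 : ℝ) < 0.05)),
      eventually_ge_atTop 1] with x hx hx1
    have hx1 : (1 : ℝ) ≤ x := by exact_mod_cast hx1
    have h3 := psi_le_primeCounting_mul_log x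
    have h4 := psi_ge x
    rw [div_lt_iff₀ (by positivity)] at hx
    nlinarith
  have hsum := ((b1.add b2).add b3).const_mul 2
  simp only [add_zero, mul_zero] at hsum
  refine squeeze_zero_norm' ?_ hsum
  filter_upwards [b4, eventually_gt_atTop 1] with x hx hx1
  have hx1 : (1 : ℝ) < x := by exact_mod_cast hx1
  have hlog := Real.log_pos hx1
  set Sg := ∑ p ∈ Nat.primesLE x, g p with hSg
  set D := ∑ k ∈ Finset.Icc 1 x, g k * vonMangoldt k with hD
  have hprime : ∀ p ∈ Nat.primesLE x, p.Prime ∧ p ≤ x := by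
    intro p hp
    rw [Nat.mem_primesLE] at hp
    exact ⟨hp.2, hp.1⟩
  have c1 : |Sg * Real.log x - ∑ p ∈ Nat.primesLE x, g p * Real.log p| ≤
      Nat.primeCounting x * Real.log x - theta x := by
    rw [theta_eq_sum_primesLE_log, ← Nat.primesLE_card_eq_primeCounting, hSg, Finset.sum_mul,
      ← Finset.sum_sub_distrib, ← nsmul_eq_mul, ← Finset.sum_const, ← Finset.sum_sub_distrib]
    refine (Finset.abs_sum_le_sum_abs _ _).trans (Finset.sum_le_sum fun p hp => ?_)
    obtain ⟨hp1, hp2⟩ := hprime p hp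
    have : Real.log p ≤ Real.log x :=
      Real.log_le_log (by exact_mod_cast hp1.pos) (by exact_mod_cast hp2)
    rw [← mul_sub, abs_mul, abs_of_nonneg (sub_nonneg.2 this)]
    have h1 := mul_le_mul_of_nonneg_right (hg1 p) (sub_nonneg.2 this)
    linarith
  have c2 : |D - ∑ p ∈ Nat.primesLE x, g p * Real.log p| ≤ psi x - theta x := by
    rw [psi_sub_theta_eq_sum_not_prime, Nat.floor_natCast]
    have e1 : ∑ p ∈ Nat.primesLE x, g p * Real.log p =
        ∑ k ∈ Finset.Icc 1 x with k.Prime, g k * vonMangoldt k := by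
      refine Finset.sum_congr ?_ fun p hp => ?_
      · ext p
        simp only [Nat.mem_primesLE, Finset.mem_filter, Finset.mem_Icc]
        constructor
        · rintro ⟨h1, h2⟩; exact ⟨⟨h2.one_le, h1⟩, h2⟩
        · rintro ⟨⟨_, h1⟩, h2⟩; exact ⟨h1, h2⟩
      · rw [Finset.mem_filter] at hp
        rw [vonMangoldt_apply_prime hp.2]
    have e2 : D - ∑ p ∈ Nat.primesLE x, g p * Real.log p =
        ∑ k ∈ Finset.Icc 1 x with ¬ k.Prime, g k * vonMangoldt k := by
      rw [e1, hD, ← Finset.sum_filter_add_sum_filter_not (Finset.Icc 1 x) (fun k => k.Prime)]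
      ring
    rw [e2]
    refine (Finset.abs_sum_le_sum_abs _ _).trans ?_
    have : Finset.Icc 1 x = Finset.Ioc 0 x := rfl
    rw [this]
    refine Finset.sum_le_sum fun k _ => ?_
    rw [abs_mul, abs_of_nonneg (vonMangoldt_nonneg (n := k))]
    have h1 := mul_le_mul_of_nonneg_right (hg1 k) (vonMangoldt_nonneg (n := k))
    linarith
  have hpi : 0 < (Nat.primeCounting x : ℝ) := by
    have : 0 < (Nat.primeCounting x : ℝ) * Real.log x := by linarith
    exact pos_of_mul_pos_left this hlog.le
  have c3 : |Sg| * Real.log x ≤ |D| + (psi x - theta x) +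
      (Nat.primeCounting x * Real.log x - theta x) := by
    have h0 : |Sg| * Real.log x = |Sg * Real.log x| := by rw [abs_mul, abs_of_pos hlog]
    rw [h0]
    have h1 := abs_le.1 c1
    have h2 := abs_le.1 c2
    have h3 := abs_le.1 (le_refl |D|)
    rw [abs_le]
    constructor <;> linarith [h1.1, h1.2, h2.1, h2.2, h3.1, h3.2]
  rw [Real.norm_eq_abs, abs_div, abs_of_pos hpi, abs_div, Nat.abs_cast, ← add_div, ← add_div,
    ← mul_div_assoc, div_le_div_iff₀ hpi (by linarith)]
  have h5 : |Sg| * x * (1 / 2) * Real.log x ≤ (|D| + (psi x - theta x) +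
      (Nat.primeCounting x * Real.log x - theta x)) * Nat.primeCounting x * Real.log x := by
    have hc := (mul_nonneg (abs_nonneg Sg) hlog.le).trans c3
    calc _ = (|Sg| * Real.log x) * ((1 / 2) * x) := by ring
      _ ≤ (|D| + (psi x - theta x) + (Nat.primeCounting x * Real.log x - theta x)) *
          (Nat.primeCounting x * Real.log x) := by gcongr
      _ = _ := by ring
  have h6 := le_of_mul_le_mul_right h5 hlog
  linarith

lemma isSquare_of_even_factorization {n : ℕ} (hn : 0 < n) (h : ∀ q : ℕ, q.Prime → Even (n.factorization q)) :
    IsSquare n := by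
  obtain ⟨a, b, hab, hs⟩ := Nat.sq_mul_squarefree n
  rcases eq_or_ne a 1 with rfl | ha1
  · exact ⟨b, by rw [← hab]; ring⟩
  obtain ⟨q, hq, hqa⟩ := Nat.exists_prime_and_dvd ha1
  have ha0 : a ≠ 0 := hs.ne_zero
  have hb0 : b ≠ 0 := by rintro rfl; simp at hab; omega
  have h1 : a.factorization q = 1 := by
    have h2 := hs.natFactorization_le_one q
    have h3 := (hq.dvd_iff_one_le_factorization ha0).1 hqa
    omega
  have h4 := h q hq
  rw [← hab, Nat.factorization_mul (pow_ne_zero 2 hb0) ha0, Nat.factorization_pow] at h4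
  simp [h1] at h4

lemma even_factorization_of_isSquare {n : ℕ} (h : IsSquare n) (q : ℕ) :
    Even (n.factorization q) := by
  obtain ⟨r, rfl⟩ := h
  rw [← sq, Nat.factorization_pow]
  simp

lemma isSquare_iff_even_factorization {n : ℕ} (hn : 0 < n) :
    IsSquare n ↔ ∀ q : ℕ, q.Prime → Even (n.factorization q) :=
  ⟨fun h q _ => even_factorization_of_isSquare h q, isSquare_of_even_factorization hn⟩

open NumberTheorySymbols in
lemma exists_jacobiSym_eq_neg_one {n : ℕ} (hn : 0 < n) (h : ¬ IsSquare n) :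
    ∃ b : ℕ, Nat.Coprime b (4 * n) ∧ jacobiSym n b = -1 := by
  rw [isSquare_iff_even_factorization hn] at h
  push Not at h
  obtain ⟨q, hq, hodd⟩ := h
  rw [Nat.not_even_iff_odd] at hodd
  set k := n.factorization q with hk
  obtain ⟨m, hm, hqm⟩ : ∃ m, n = q ^ k * m ∧ ¬ q ∣ m :=
    ⟨n / q ^ k, (Nat.mul_div_cancel' (Nat.ordProj_dvd n q)).symm, Nat.not_dvd_ordCompl hq hn.ne'⟩
  have hm0 : 0 < m := Nat.pos_of_ne_zero (by rintro rfl; simp at hqm)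
  -- it suffices to find b
  suffices H : ∃ b : ℕ, b % (4 * m) = 1 % (4 * m) ∧ Nat.Coprime b q ∧ jacobiSym q b = -1 by
    obtain ⟨b, h1, h2, h3⟩ := H
    have hc : Nat.Coprime b (4 * m) := by
      have : Nat.ModEq (4 * m) b 1 := h1
      have h5 := this.gcd_eq
      rw [Nat.Coprime, h5, Nat.gcd_one_left]
    have hodd2 : Odd b := (Nat.coprime_two_right).1 (hc.coprime_dvd_right ⟨2 * m, by ring⟩)
    refine ⟨b, ?_, ?_⟩
    · rw [hm]
      have : Nat.Coprime b (q ^ k) := h2.pow_right k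
      have := this.mul_right hc
      convert this using 1; ring
    · rw [hm]
      push_cast
      rw [jacobiSym.mul_left, jacobiSym.pow_left, h3, hodd.neg_one_pow]
      have : jacobiSym m b = 1 := by
        rw [show ((m : ℕ) : ℤ) = ((m : ℕ) : ℤ) from rfl, jacobiSym.mod_right' m hodd2, h1,
          ← jacobiSym.mod_right' m odd_one, jacobiSym.one_right]
      rw [this]; norm_num
  rcases hq.eq_two_or_odd' with rfl | hqodd
  · have hc : Nat.Coprime 8 m := by
      rw [show 8 = 2 ^ 3 by norm_num]
      exact Nat.Coprime.pow_left 3 ((Nat.prime_two.coprime_iff_not_dvd).2 hqm)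
    obtain ⟨b, hb1, hb2⟩ := Nat.chineseRemainder hc 5 1
    have hb1' : b % 8 = 5 := hb1
    have hbo : Odd b := by rw [Nat.odd_iff]; omega
    refine ⟨b, ?_, (Nat.coprime_two_right).2 hbo, ?_⟩
    · have h4 : Nat.ModEq 4 b 1 := by unfold Nat.ModEq; omega
      have hc4 : Nat.Coprime 4 m := hc.coprime_dvd_left (by norm_num)
      exact (Nat.modEq_and_modEq_iff_modEq_mul hc4).1 ⟨h4, hb2⟩
    · rw [Nat.cast_ofNat, jacobiSym.at_two hbo, ZMod.χ₈_nat_mod_eight, hb1']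
      decide
  · haveI : Fact q.Prime := ⟨hq⟩
    have hq2 : q ≠ 2 := by rintro rfl; exact absurd hqodd (by decide)
    obtain ⟨c, hc⟩ := FiniteField.exists_nonsquare (F := ZMod q) (by rwa [ZMod.ringChar_zmod_n])
    have hcop : Nat.Coprime (4 * m) q := by
      refine Nat.Coprime.mul_left ?_ ((hq.coprime_iff_not_dvd).2 hqm).symm
      rw [show 4 = 2 ^ 2 by norm_num]
      exact Nat.Coprime.pow_left 2 ((Nat.coprime_two_left).2 hqodd)
    obtain ⟨b, hb1, hb2⟩ := Nat.chineseRemainder hcop 1 c.val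
    have hbc : (b : ZMod q) = c := by
      have := (ZMod.natCast_eq_natCast_iff b c.val q).2 hb2
      rwa [ZMod.natCast_val, ZMod.cast_id] at this
    have hb4 : b % 4 = 1 := by
      have : Nat.ModEq 4 b 1 := hb1.of_dvd ⟨m, rfl⟩
      exact this
    refine ⟨b, hb1, ?_, ?_⟩
    · rw [Nat.coprime_comm, hq.coprime_iff_not_dvd, ← ZMod.natCast_eq_zero_iff, hbc]
      rintro rfl
      exact hc (IsSquare.zero)
    · rw [jacobiSym.quadratic_reciprocity_one_mod_four' hqodd hb4]
      apply (ZMod.nonsquare_iff_jacobiSym_eq_neg_one (a := b) (p := q)).2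
      rwa [Int.cast_natCast, hbc]

lemma bounded_div_primeCounting {f : ℕ → ℝ} {C : ℝ} (hf : ∀ x, |f x| ≤ C) :
    Tendsto (fun x : ℕ => f x / (Nat.primeCounting x : ℝ)) atTop (𝓝 0) := by
  have h1 : Tendsto (fun x : ℕ => (Nat.primeCounting x : ℝ)) atTop atTop :=
    tendsto_natCast_atTop_atTop.comp Nat.tendsto_primeCounting
  have h2 : Tendsto (fun x : ℕ => C / (Nat.primeCounting x : ℝ)) atTop (𝓝 0) :=
    tendsto_const_nhds.div_atTop h1
  refine squeeze_zero_norm (fun x => ?_) h2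
  rw [norm_div, Real.norm_eq_abs, Real.norm_natCast]
  exact div_le_div_of_nonneg_right (hf x) (Nat.cast_nonneg _)

lemma avg_congr {f g : ℕ → ℝ} {l C : ℝ} (B : Finset ℕ) (hfg : ∀ p, p.Prime → p ∉ B → f p = g p)
    (hf : ∀ p, |f p - g p| ≤ C)
    (h : Tendsto (fun x : ℕ => (∑ p ∈ Nat.primesLE x, g p) / (Nat.primeCounting x : ℝ))
      atTop (𝓝 l)) :
    Tendsto (fun x : ℕ => (∑ p ∈ Nat.primesLE x, f p) / (Nat.primeCounting x : ℝ))
      atTop (𝓝 l) := by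
  have hC : 0 ≤ C := (abs_nonneg _).trans (hf 0)
  have h1 : ∀ x : ℕ, |∑ p ∈ Nat.primesLE x, (f p - g p)| ≤ B.card * C := by
    intro x
    have : ∑ p ∈ Nat.primesLE x, (f p - g p) = ∑ p ∈ (Nat.primesLE x).filter (· ∈ B), (f p - g p) := by
      rw [Finset.sum_filter]
      refine Finset.sum_congr rfl fun p hp => ?_
      split_ifs with hB
      · rfl
      · rw [hfg p (Nat.mem_primesLE.1 hp).2 hB, sub_self]
    rw [this]
    refine (Finset.abs_sum_le_sum_abs _ _).trans ((Finset.sum_le_card_nsmul _ _ C fun p _ => hf p).trans ?_)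
    rw [nsmul_eq_mul]
    refine mul_le_mul_of_nonneg_right ?_ hC
    exact_mod_cast Finset.card_le_card fun p hp => (Finset.mem_filter.1 hp).2
  have h2 := (bounded_div_primeCounting h1).add h
  rw [zero_add] at h2
  refine h2.congr fun x => ?_
  rw [← add_div, Finset.sum_sub_distrib]
  congr 1
  ring

lemma avg_one : Tendsto (fun x : ℕ => (∑ p ∈ Nat.primesLE x, (1 : ℝ)) / (Nat.primeCounting x : ℝ))
      atTop (𝓝 1) := by
  refine tendsto_const_nhds.congr' ?_
  have := Nat.tendsto_primeCounting.eventually_gt_atTop 0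
  filter_upwards [this] with x hx
  rw [Finset.sum_const, Nat.primesLE_card_eq_primeCounting, nsmul_eq_mul, mul_one, div_self]
  exact_mod_cast hx.ne'

lemma abs_jacobiSym_le (a : ℤ) (b : ℕ) : |(jacobiSym a b : ℝ)| ≤ 1 := by
  rcases jacobiSym.trichotomy a b with h | h | h <;> simp [h]

lemma avg_jacobi_square {n : ℕ} (hn : 0 < n) (h : IsSquare n) :
    Tendsto (fun x : ℕ => (∑ p ∈ Nat.primesLE x, (jacobiSym n p : ℝ)) / (Nat.primeCounting x : ℝ))
      atTop (𝓝 1) := by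
  obtain ⟨r, rfl⟩ := h
  refine avg_congr (C := 2) (r * r).primeFactors ?_ ?_ avg_one
  · intro p hp hpn
    have hnd : ¬ p ∣ r := fun hd => hpn (Nat.mem_primeFactors.2 ⟨hp, hd.mul_right r, hn.ne'⟩)
    have : jacobiSym ((r : ℤ) ^ 2) p = 1 := by
      apply jacobiSym.sq_one'
      rw [Int.gcd_natCast_natCast]
      exact ((hp.coprime_iff_not_dvd).2 hnd).symm
    push_cast
    rw [← sq, this, Int.cast_one]
  · intro p
    have := abs_le.1 (abs_jacobiSym_le ((r * r : ℕ) : ℤ) p)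
    rw [abs_le]
    constructor <;> linarith

lemma avg_jacobi_nonsquare {n : ℕ} (hn : 0 < n) (h : ¬ IsSquare n) :
    Tendsto (fun x : ℕ => (∑ p ∈ Nat.primesLE x, (jacobiSym n p : ℝ)) / (Nat.primeCounting x : ℝ))
      atTop (𝓝 0) := by
  classical
  have hN : NeZero (4 * n) := ⟨by omega⟩
  set g : ZMod (4 * n) → ℝ := fun a => if IsUnit a then (jacobiSym n a.val : ℝ) else 0 with hg
  have hodd : ∀ k : ℕ, Nat.Coprime k (4 * n) → Odd k := fun k hk =>
    (Nat.coprime_two_right).1 (hk.coprime_dvd_right ⟨2 * n, by ring⟩)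
  have hgk : ∀ k : ℕ, Nat.Coprime k (4 * n) → g k = jacobiSym n k := by
    intro k hk
    simp only [hg]
    rw [if_pos ((ZMod.isUnit_iff_coprime k (4 * n)).2 hk), ZMod.val_natCast,
      ← jacobiSym.mod_right' n (hodd k hk)]
  have hg0 : ∀ a, ¬ IsUnit a → g a = 0 := fun a ha => if_neg ha
  have hg1 : ∀ a, |g a| ≤ 1 := by
    intro a
    simp only [hg]
    split_ifs
    · exact abs_jacobiSym_le _ _
    · simp
  have hgs : ∑ a, g a = 0 := by
    obtain ⟨b, hbc, hb⟩ := exists_jacobiSym_eq_neg_one hn h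
    have hbu := (ZMod.isUnit_iff_coprime b (4 * n)).2 hbc
    obtain ⟨u, hu⟩ := hbu
    have hmul : ∀ a, g (u * a) = - g a := by
      intro a
      by_cases ha : IsUnit a
      · have hav : ((a.val : ℕ) : ZMod (4 * n)) = a := ZMod.natCast_zmod_val a
        have hac : Nat.Coprime a.val (4 * n) := by
          rw [← ZMod.isUnit_iff_coprime, hav]; exact ha
        have e : (u : ZMod (4 * n)) * a = ((b * a.val : ℕ) : ZMod (4 * n)) := by
          rw [Nat.cast_mul, hav, hu]
        rw [e, hgk _ (Nat.Coprime.mul_left hbc hac)]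
        conv_rhs => rw [← hav, hgk _ hac]
        rw [jacobiSym.mul_right' _ (by rintro rfl; exact absurd (hodd 0 hbc) (by decide))
          (by intro h0; rw [h0] at hac; exact absurd (hodd 0 hac) (by decide)), hb]
        push_cast; ring
      · rw [hg0 a ha, hg0, neg_zero]
        rwa [Units.isUnit_units_mul]
    have := Equiv.sum_comp (Units.mulLeft u) g
    simp only [Units.mulLeft_apply, hmul, Finset.sum_neg_distrib] at this
    linarith
  refine avg_congr (C := 2) (4 * n).primeFactors ?_ ?_ (avg_primes g hg0 hgs hg1)
  · intro p hp hpn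
    rw [hgk]
    rw [hp.coprime_iff_not_dvd]
    exact fun hd => hpn (Nat.mem_primeFactors.2 ⟨hp, hd, by omega⟩)
  · intro p
    have h1 := abs_le.1 (abs_jacobiSym_le (n : ℤ) p)
    have h2 := abs_le.1 (hg1 p)
    rw [abs_le]
    constructor <;> linarith

open Classical in
lemma card_square_subsets (S : Finset ℕ)
    (hpos : ∀ z ∈ S, 0 < z)
    (A : Finset ℕ) (hA : ∀ q : ℕ, q ∈ A ↔ q.Prime ∧ ∃ z ∈ S, Odd (Nat.factorization z q)) :
    (S.powerset.filter (fun T => IsSquare (∏ z ∈ T, z))).card *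
      2 ^ (Module.finrank (ZMod 2) ↥(Submodule.span (ZMod 2)
      ((fun z : ℕ => fun q : {q : ℕ // q ∈ A} => ((Nat.factorization z q.1 : ℕ) : ZMod 2)) ''
        (S : Set ℕ)))) = 2 ^ S.card := by
  set v : ℕ → {q : ℕ // q ∈ A} → ZMod 2 :=
    fun z q => ((Nat.factorization z q.1 : ℕ) : ZMod 2) with hv
  set L : (S → ZMod 2) →ₗ[ZMod 2] ({q : ℕ // q ∈ A} → ZMod 2) :=
    Fintype.linearCombination (ZMod 2) (fun z : S => v z) with hL
  have hrange : LinearMap.range L = Submodule.span (ZMod 2) (v '' (S : Set ℕ)) := by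
    rw [hL, Fintype.range_linearCombination]
    congr 1
    ext w
    simp
  have hrn := LinearMap.finrank_range_add_finrank_ker L
  rw [hrange, Module.finrank_fintype_fun_eq_card, Fintype.card_coe] at hrn
  have hker : Fintype.card (LinearMap.ker L) = 2 ^ Module.finrank (ZMod 2) (LinearMap.ker L) := by
    rw [Module.card_eq_pow_finrank (K := ZMod 2), ZMod.card]
  have hbij : (S.powerset.filter (fun T => IsSquare (∏ z ∈ T, z))).card
      = Fintype.card (LinearMap.ker L) := by
    rw [Fintype.card_eq_nat_card]
    change _ = Nat.card ((LinearMap.ker L : Set (S → ZMod 2)))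
    rw [Nat.card_coe_set_eq, ← Set.ncard_coe_finset]
    have key : ∀ T ⊆ S, (IsSquare (∏ z ∈ T, z) ↔
        L (fun z => if (z : ℕ) ∈ T then 1 else 0) = 0) := by
      intro T hT
      have hp : 0 < ∏ z ∈ T, z := Finset.prod_pos fun z hz => hpos z (hT hz)
      have hval : ∀ q, L (fun z => if (z : ℕ) ∈ T then 1 else 0) q
          = (((∏ z ∈ T, z).factorization q.1 : ℕ) : ZMod 2) := by
        intro q
        rw [Nat.factorization_prod fun z hz => (hpos z (hT hz)).ne']
        rw [hL, Fintype.linearCombination_apply, Finset.sum_apply, Finset.univ_eq_attach]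
        simp only [Pi.smul_apply, hv, smul_eq_mul, ite_mul, one_mul, zero_mul]
        rw [Finset.sum_attach S (fun z => if z ∈ T then ((Nat.factorization z q.1 : ℕ) : ZMod 2) else 0),
          ← Finset.sum_filter, Finset.filter_mem_eq_inter, Finset.inter_eq_right.2 hT]
        simp
      rw [isSquare_iff_even_factorization hp]
      constructor
      · intro h
        ext q
        rw [hval, Pi.zero_apply, ZMod.natCast_eq_zero_iff_even]
        exact h q.1 ((hA q.1).1 q.2).1
      · intro h q hq
        by_cases hqA : q ∈ A
        · rw [← ZMod.natCast_eq_zero_iff_even, ← hval ⟨q, hqA⟩, h]; rfl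
        · rw [Nat.factorization_prod fun z hz => (hpos z (hT hz)).ne', Finsupp.finset_sum_apply]
          refine Finset.even_sum _ fun z hz => ?_
          by_contra hne
          exact hqA ((hA q).2 ⟨hq, z, hT hz, Nat.not_even_iff_odd.1 hne⟩)
    refine Set.ncard_congr (fun T _ => fun z => if (z : ℕ) ∈ T then 1 else 0) ?_ ?_ ?_
    · intro T hT
      simp only [Finset.coe_filter, Finset.mem_powerset, Set.mem_setOf_eq] at hT
      exact (key T hT.1).1 hT.2
    · intro T T' hT hT' he
      simp only [Finset.coe_filter, Finset.mem_powerset, Set.mem_setOf_eq] at hT hT'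
      ext z
      by_cases hz : z ∈ S
      · have := congrFun he ⟨z, hz⟩
        by_cases h1 : z ∈ T <;> by_cases h2 : z ∈ T' <;> simp_all
      · exact ⟨fun h => absurd (hT.1 h) hz, fun h => absurd (hT'.1 h) hz⟩
    · intro c hc
      have e : (fun z : S => if (z : ℕ) ∈ S.filter (fun z => ∃ hz : z ∈ S, c ⟨z, hz⟩ = 1) then (1 : ZMod 2) else 0) = c := by
        ext z
        have h01 : ∀ t : ZMod 2, t = 0 ∨ t = 1 := by decide
        rcases h01 (c z) with h | h <;> simp [h]
      refine ⟨S.filter (fun z => ∃ hz : z ∈ S, c ⟨z, hz⟩ = 1), ?_, e⟩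
      simp only [Finset.coe_filter, Finset.mem_powerset, Set.mem_setOf_eq]
      refine ⟨Finset.filter_subset _ _, (key _ (Finset.filter_subset _ _)).2 ?_⟩
      rw [e]
      exact hc
  rw [hbij, hker, ← pow_add, add_comm, hrn]

lemma jacobiSym_prod_left (T : Finset ℕ) (p : ℕ) :
    jacobiSym ((∏ z ∈ T, z : ℕ) : ℤ) p = ∏ z ∈ T, jacobiSym z p := by
  classical
  induction T using Finset.induction_on with
  | empty => simp [jacobiSym.one_left]
  | insert a s ha ih =>
    rw [Finset.prod_insert ha, Finset.prod_insert ha, Nat.cast_mul, jacobiSym.mul_left, ih]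

lemma prod_half_eq (S : Finset ℕ) (p : ℕ) :
    ∏ z ∈ S, ((1 - (jacobiSym z p : ℝ)) / 2) =
      (∑ T ∈ S.powerset, (-1 : ℝ) ^ T.card * (jacobiSym ((∏ z ∈ T, z : ℕ) : ℤ) p : ℝ)) /
        2 ^ S.card := by
  classical
  rw [Finset.prod_div_distrib, Finset.prod_const]
  congr 1
  simp only [sub_eq_add_neg]
  rw [Finset.prod_one_add]
  refine Finset.sum_congr rfl fun T _ => ?_
  rw [Finset.prod_neg, jacobiSym_prod_left]
  push_cast
  ring

open Classical in
lemma avg_prod_half (S : Finset ℕ) (hpos : ∀ z ∈ S, 0 < z)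
    (hsq : ∀ T ⊆ S, Odd T.card → ¬ IsSquare (∏ z ∈ T, z)) :
    Tendsto (fun x : ℕ => (∑ p ∈ Nat.primesLE x, ∏ z ∈ S, ((1 - (jacobiSym z p : ℝ)) / 2)) /
      (Nat.primeCounting x : ℝ)) atTop
      (𝓝 (((S.powerset.filter (fun T => IsSquare (∏ z ∈ T, z))).card : ℝ) / 2 ^ S.card)) := by
  have h1 : ∀ T ∈ S.powerset, Tendsto (fun x : ℕ => (-1 : ℝ) ^ T.card *
      ((∑ p ∈ Nat.primesLE x, (jacobiSym ((∏ z ∈ T, z : ℕ) : ℤ) p : ℝ)) /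
      (Nat.primeCounting x : ℝ))) atTop (𝓝 (if IsSquare (∏ z ∈ T, z) then 1 else 0)) := by
    intro T hT
    rw [Finset.mem_powerset] at hT
    have hp : 0 < ∏ z ∈ T, z := Finset.prod_pos fun z hz => hpos z (hT hz)
    split_ifs with hs
    · have he : Even T.card := by
        rw [← Nat.not_odd_iff_even]
        exact fun ho => hsq T hT ho hs
      rw [he.neg_one_pow]
      simpa using avg_jacobi_square hp hs
    · simpa using (avg_jacobi_nonsquare hp hs).const_mul ((-1 : ℝ) ^ T.card)
  have h2 := (tendsto_finsetSum _ h1).div_const ((2 : ℝ) ^ S.card)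
  rw [Finset.sum_boole] at h2
  refine h2.congr fun x => ?_
  simp only [prod_half_eq]
  rw [← Finset.sum_div (f := fun p : ℕ => ∑ T ∈ S.powerset,
    (-1 : ℝ) ^ T.card * (jacobiSym ((∏ z ∈ T, z : ℕ) : ℤ) p : ℝ)), Finset.sum_comm, div_right_comm]
  congr 1
  rw [Finset.sum_div]
  refine Finset.sum_congr rfl fun T _ => ?_
  rw [← Finset.mul_sum, mul_div_assoc]

/-- Theorem 5.14: if `S` is a nonempty finite set of positive integers such that the product of
the elements of every odd-cardinality subset of `S` is not a square, `A` the set of primes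
dividing some element of `S` with odd multiplicity, and `d` the GF(2)-dimension of the span of
the mod-2 multiplicity vectors of the elements of `S` in `GF(2)^A`, then the set of (odd) primes
`p` for which `S` is a set of quadratic non-residues has natural density `2 ^ (-d)` in the
primes. -/
theorem density_setOf_forall_legendreSym_eq_neg_one (S : Finset ℕ) (hS : S.Nonempty)
    (hpos : ∀ z ∈ S, 0 < z)
    (hsq : ∀ T ⊆ S, Odd T.card → ¬ IsSquare (∏ z ∈ T, z))
    (A : Finset ℕ) (hA : ∀ q : ℕ, q ∈ A ↔ q.Prime ∧ ∃ z ∈ S, Odd (Nat.factorization z q))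
    (d : ℕ)
    (hd : d = Module.finrank (ZMod 2) ↥(Submodule.span (ZMod 2)
      ((fun z : ℕ => fun q : {q : ℕ // q ∈ A} => ((Nat.factorization z q.1 : ℕ) : ZMod 2)) ''
        (S : Set ℕ)))) :
    Filter.Tendsto (fun x : ℕ =>
        (({p : ℕ | (∃ hp : Fact p.Prime, p ≠ 2 ∧ ∀ z ∈ S, @legendreSym p hp (z : ℤ) = -1) ∧
            p ≤ x}.ncard : ℝ)) / ({p : ℕ | p.Prime ∧ p ≤ x}.ncard : ℝ))
      Filter.atTop (nhds ((2 : ℝ) ^ (-(d : ℤ)))) := by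
  classical
  set good : ℕ → Prop := fun p =>
    ∃ hp : Fact p.Prime, p ≠ 2 ∧ ∀ z ∈ S, @legendreSym p hp (z : ℤ) = -1 with hgood
  have hcard := card_square_subsets S hpos A hA
  rw [← hd] at hcard
  have hlim : (((S.powerset.filter (fun T => IsSquare (∏ z ∈ T, z))).card : ℝ) / 2 ^ S.card)
      = (2 : ℝ) ^ (-(d : ℤ)) := by
    have hc : ((S.powerset.filter (fun T => IsSquare (∏ z ∈ T, z))).card : ℝ) * 2 ^ d
        = 2 ^ S.card := by
      exact_mod_cast hcard
    rw [← hc, zpow_neg, zpow_natCast]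
    have h0 : ((S.powerset.filter (fun T => IsSquare (∏ z ∈ T, z))).card : ℝ) ≠ 0 := by
      intro h0
      rw [h0, zero_mul] at hc
      exact absurd hc (by positivity)
    field_simp
  have hmain := avg_prod_half S hpos hsq
  rw [hlim] at hmain
  have hfinal := avg_congr (f := fun p => if good p then (1 : ℝ) else 0) (C := 1)
    (2 * ∏ z ∈ S, z).primeFactors ?_ ?_ hmain
  · refine hfinal.congr fun x => ?_
    have e1 : {p : ℕ | p.Prime ∧ p ≤ x}.ncard = Nat.primeCounting x := by
      rw [← Nat.primesLE_card_eq_primeCounting, ← Set.ncard_coe_finset]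
      congr 1
      ext p
      simp [Nat.mem_primesLE, and_comm]
    have e2 : {p : ℕ | good p ∧ p ≤ x}.ncard = ((Nat.primesLE x).filter good).card := by
      rw [← Set.ncard_coe_finset]
      congr 1
      ext p
      simp only [Set.mem_setOf_eq, Finset.coe_filter, Nat.mem_primesLE]
      constructor
      · rintro ⟨h1, h2⟩
        exact ⟨⟨h2, h1.choose.out⟩, h1⟩
      · rintro ⟨⟨h1, _⟩, h2⟩
        exact ⟨h2, h1⟩
    rw [e1, e2, Finset.sum_boole]
  · intro p hp hpB
    have hS0 : ∏ z ∈ S, z ≠ 0 := Finset.prod_ne_zero_iff.2 fun z hz => (hpos z hz).ne'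
    have hnd : ¬ p ∣ 2 * ∏ z ∈ S, z := fun hd' =>
      hpB (Nat.mem_primeFactors.2 ⟨hp, hd', mul_ne_zero two_ne_zero hS0⟩)
    have hp2 : p ≠ 2 := by
      rintro rfl
      exact hnd (dvd_mul_right _ _)
    have hpz : ∀ z ∈ S, ¬ p ∣ z := fun z hz hdz =>
      hnd ((hdz.trans (Finset.dvd_prod_of_mem _ hz)).mul_left 2)
    have hF : Fact p.Prime := ⟨hp⟩
    have hne : ∀ z ∈ S, ((z : ℤ) : ZMod p) ≠ 0 := by
      intro z hz h0
      rw [Int.cast_natCast, ZMod.natCast_eq_zero_iff] at h0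
      exact hpz z hz h0
    change (if good p then (1 : ℝ) else 0) = _
    split_ifs with hg
    · obtain ⟨hp', _, h⟩ := hg
      refine (Finset.prod_eq_one fun z hz => ?_).symm
      rw [← jacobiSym.legendreSym.to_jacobiSym, h z hz]
      norm_num
    · have : ∃ z ∈ S, legendreSym p z ≠ -1 := by
        by_contra! hall
        exact hg ⟨hF, hp2, hall⟩
      obtain ⟨z, hz, hz1⟩ := this
      have h1 : legendreSym p z = 1 := (legendreSym.eq_one_or_neg_one p (hne z hz)).resolve_right hz1
      refine (Finset.prod_eq_zero hz ?_).symm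
      rw [← jacobiSym.legendreSym.to_jacobiSym, h1]
      norm_num
  · intro p
    have hb : ∀ z : ℕ, 0 ≤ (1 - (jacobiSym z p : ℝ)) / 2 ∧ (1 - (jacobiSym z p : ℝ)) / 2 ≤ 1 := by
      intro z
      have := abs_le.1 (abs_jacobiSym_le (z : ℤ) p)
      constructor <;> linarith
    have h0 : 0 ≤ ∏ z ∈ S, ((1 - (jacobiSym z p : ℝ)) / 2) :=
      Finset.prod_nonneg fun z _ => (hb z).1
    have h1 : ∏ z ∈ S, ((1 - (jacobiSym z p : ℝ)) / 2) ≤ 1 :=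
      Finset.prod_le_one (fun z _ => (hb z).1) fun z _ => (hb z).2
    change |(if good p then (1 : ℝ) else 0) - _| ≤ 1
    rw [abs_le]
    split_ifs <;> constructor <;> linarith
end

section
/- Let S be a nonempty finite set of positive integers such that for every nonempty subset T of S the product ∏_{z ∈ T} z is not a perfect square, and let ε : S → {-1, 1} be any function. Then the set of odd primes p such that χ_p(z) = ε(z) for every z ∈ S has natural density 2^{-|S|} in the primes. -/
section
open MeasureTheory Filter Topology Complex

namespace PNTAP

/-- Smoothed form of the Tauberian theorem: a bounded function whose Laplace transform extends
continuously to the closed half plane has vanishing limit after smoothing. -/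
theorem smoothed_limit (g : ℝ → ℝ) (hgm : Measurable g) (M : ℝ) (hM : ∀ t, |g t| ≤ M)
    (H : ℂ → ℂ) (hH : ContinuousOn H {z | 0 ≤ z.re})
    (hgH : ∀ z : ℂ, 0 < z.re → ∫ t in Set.Ioi (0:ℝ), (g t : ℂ) * cexp (-z * t) = H z)
    (φ : ℝ → ℂ) (hφ : Continuous φ) (R : ℝ) (hφR : ∀ y, R < |y| → φ y = 0)
    (K : ℝ → ℂ) (hK : ∀ u : ℝ, K u = ∫ y : ℝ, φ y * cexp (I * u * y)) (hKi : Integrable K) :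
    Tendsto (fun T : ℝ => ∫ t in Set.Ioi (0:ℝ), (g t : ℂ) * K (T - t)) atTop (𝓝 0) := by
  have hM0 : 0 ≤ M := (abs_nonneg _).trans (hM 0)
  have hφc : HasCompactSupport φ := by
    apply HasCompactSupport.of_support_subset_isCompact (isCompact_Icc (a := -R) (b := R))
    intro y hy
    by_contra h
    apply hy
    apply hφR
    rw [lt_abs]
    simp only [Set.mem_Icc, not_and_or, not_le] at h
    rcases h with h | h
    · right; linarith
    · left; exact h
  have hφi : Integrable φ := hφ.integrable_of_hasCompactSupport hφc
  -- the identity for positive delta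
  have key : ∀ (T δ : ℝ), 0 < δ →
      ∫ t in Set.Ioi (0:ℝ), (g t : ℂ) * cexp (-(δ * t : ℝ)) * K (T - t)
        = ∫ y : ℝ, φ y * cexp (I * T * y) * H (δ + I * y) := by
    intro T δ hδ
    have hexp : IntegrableOn (fun t : ℝ => Real.exp (-δ * t)) (Set.Ioi 0) :=
      integrableOn_exp_mul_Ioi (by linarith) 0
    have hgi : IntegrableOn (fun t : ℝ => (g t : ℂ) * cexp (-(δ * t : ℝ))) (Set.Ioi 0) := by
      refine Integrable.mono' (hexp.const_mul M) ?_ ?_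
      · apply Measurable.aestronglyMeasurable
        fun_prop
      · refine Eventually.of_forall fun t => ?_
        rw [norm_mul, Complex.norm_exp]
        simp only [Complex.norm_real, Real.norm_eq_abs, neg_re, ofReal_re]
        rw [neg_mul]
        gcongr
        exact hM t
    have hprod : Integrable (fun p : ℝ × ℝ => ((g p.1 : ℂ) * cexp (-(δ * p.1 : ℝ))) * φ p.2)
        ((volume.restrict (Set.Ioi 0)).prod volume) := hgi.mul_prod hφi
    have hprod2 : Integrable (fun p : ℝ × ℝ => ((g p.1 : ℂ) * cexp (-(δ * p.1 : ℝ))) * φ p.2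
          * cexp (I * (T - p.1 : ℝ) * p.2))
        ((volume.restrict (Set.Ioi 0)).prod volume) := by
      refine hprod.mono ?_ ?_
      · refine hprod.aestronglyMeasurable.mul ?_
        apply Continuous.aestronglyMeasurable
        fun_prop
      · refine Eventually.of_forall fun p => ?_
        rw [norm_mul _ (cexp _), Complex.norm_exp]
        simp
    calc ∫ t in Set.Ioi (0:ℝ), (g t : ℂ) * cexp (-(δ * t : ℝ)) * K (T - t)
        = ∫ t in Set.Ioi (0:ℝ), ∫ y : ℝ, ((g t : ℂ) * cexp (-(δ * t : ℝ))) * φ y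
          * cexp (I * (T - t : ℝ) * y) := by
          congr 1; ext t
          rw [hK, ← integral_const_mul]
          congr 1; ext y; ring
      _ = ∫ y : ℝ, ∫ t in Set.Ioi (0:ℝ), ((g t : ℂ) * cexp (-(δ * t : ℝ))) * φ y
          * cexp (I * (T - t : ℝ) * y) := integral_integral_swap hprod2
      _ = _ := by
          congr 1; ext y
          rw [← hgH (δ + I * y) (by simpa using hδ), ← integral_const_mul]
          congr 1; ext t
          have : cexp (-((δ * t : ℝ) : ℂ)) * cexp (I * (T - t : ℝ) * y)
              = cexp (I * T * y) * cexp (-(δ + I * y) * t) := by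
            rw [← Complex.exp_add, ← Complex.exp_add]; congr 1; push_cast; ring
          linear_combination (g t * φ y : ℂ) * this
  -- the limit delta to zero
  have key0 : ∀ T : ℝ, ∫ t in Set.Ioi (0:ℝ), (g t : ℂ) * K (T - t)
        = ∫ y : ℝ, φ y * cexp (I * T * y) * H (I * y) := by
    intro T
    have hKT : Integrable (fun t : ℝ => K (T - t)) := hKi.comp_sub_left T
    have hL : Tendsto (fun δ : ℝ => ∫ t in Set.Ioi (0:ℝ), (g t : ℂ) * cexp (-(δ * t : ℝ)) * K (T - t))
        (𝓝[>] 0) (𝓝 (∫ t in Set.Ioi (0:ℝ), (g t : ℂ) * K (T - t))) := by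
      refine tendsto_integral_filter_of_dominated_convergence (fun t => M * ‖K (T - t)‖) ?_ ?_ ?_ ?_
      · refine Eventually.of_forall fun δ => ?_
        refine AEStronglyMeasurable.mul ?_ hKT.aestronglyMeasurable.restrict
        apply Measurable.aestronglyMeasurable
        fun_prop
      · filter_upwards [self_mem_nhdsWithin] with δ hδ
        filter_upwards [ae_restrict_mem measurableSet_Ioi] with t ht
        rw [norm_mul, norm_mul, Complex.norm_exp]
        simp only [Complex.norm_real, Real.norm_eq_abs, neg_re, ofReal_re]
        have h1 : Real.exp (-(δ * t)) ≤ 1 := by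
          rw [Real.exp_le_one_iff]
          have := mul_pos (Set.mem_Ioi.1 hδ) (Set.mem_Ioi.1 ht)
          linarith
        have h2 : |g t| * Real.exp (-(δ * t)) ≤ M * 1 :=
          mul_le_mul (hM t) h1 (Real.exp_pos _).le hM0
        rw [mul_one] at h2
        exact mul_le_mul_of_nonneg_right h2 (norm_nonneg _)
      · exact (hKT.norm.const_mul M).restrict
      · refine Eventually.of_forall fun t => ?_
        have : Tendsto (fun δ : ℝ => (g t : ℂ) * cexp (-(δ * t : ℝ)) * K (T - t)) (𝓝 0)
            (𝓝 ((g t : ℂ) * cexp (-((0:ℝ) * t : ℝ)) * K (T - t))) := by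
          apply Continuous.tendsto
          fun_prop
        simp only [zero_mul, ofReal_zero, neg_zero, Complex.exp_zero, mul_one] at this
        exact this.mono_left nhdsWithin_le_nhds
    have hcomp : IsCompact ((fun p : ℝ × ℝ => (p.1 + I * p.2 : ℂ)) '' (Set.Icc 0 1 ×ˢ Set.Icc (-R) R)) := by
      apply (isCompact_Icc.prod isCompact_Icc).image
      fun_prop
    obtain ⟨B, hB⟩ := hcomp.exists_bound_of_continuousOn (f := H) (hH.mono (by
      rintro _ ⟨p, ⟨hp, -⟩, rfl⟩
      simpa using hp.1))
    have hBdd : ∀ δ y : ℝ, 0 ≤ δ → δ ≤ 1 → ‖φ y * cexp (I * T * y) * H (δ + I * y)‖ ≤ B * ‖φ y‖ := by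
      intro δ y h0 h1
      have he : ‖cexp (I * T * y)‖ = 1 := by
        rw [Complex.norm_exp]; simp
      by_cases hy : R < |y|
      · simp [hφR y hy]
      · rw [norm_mul, norm_mul, he, mul_one, mul_comm]
        refine mul_le_mul_of_nonneg_right (hB _ ⟨(δ, y), ⟨⟨h0, h1⟩, ?_⟩, rfl⟩) (norm_nonneg _)
        exact abs_le.1 (not_lt.1 hy)
    have hR : Tendsto (fun δ : ℝ => ∫ y : ℝ, φ y * cexp (I * T * y) * H (δ + I * y))
        (𝓝[>] 0) (𝓝 (∫ y : ℝ, φ y * cexp (I * T * y) * H (I * y))) := by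
      refine tendsto_integral_filter_of_dominated_convergence (fun y => B * ‖φ y‖) ?_ ?_ ?_ ?_
      · filter_upwards [self_mem_nhdsWithin] with δ hδ
        apply Continuous.aestronglyMeasurable
        have : Continuous fun y : ℝ => H (δ + I * y) :=
          hH.comp_continuous (by fun_prop) (fun y => by simpa using (Set.mem_Ioi.1 hδ).le)
        exact (by fun_prop : Continuous fun y : ℝ => φ y * cexp (I * T * y)).mul this
      · filter_upwards [Ioc_mem_nhdsGT (zero_lt_one (α := ℝ))] with δ hδ
        exact Eventually.of_forall fun y => hBdd δ y hδ.1.le hδ.2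
      · exact hφi.norm.const_mul B
      · refine Eventually.of_forall fun y => ?_
        refine Tendsto.const_mul _ ?_
        have h1 : ContinuousWithinAt H {z | 0 ≤ z.re} (I * y) := hH _ (by simp)
        refine h1.tendsto.comp ?_
        refine tendsto_nhdsWithin_iff.2 ⟨?_, ?_⟩
        · have : Tendsto (fun δ : ℝ => (δ + I * y : ℂ)) (𝓝 0) (𝓝 ((0:ℝ) + I * y)) := by
            apply Continuous.tendsto (f := fun δ : ℝ => (δ + I * y : ℂ))
            fun_prop
          simp only [ofReal_zero, zero_add] at this
          exact this.mono_left nhdsWithin_le_nhds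
        · filter_upwards [self_mem_nhdsWithin] with δ hδ
          simpa using (Set.mem_Ioi.1 hδ).le
    refine tendsto_nhds_unique (hL.congr' ?_) hR
    filter_upwards [self_mem_nhdsWithin] with δ hδ
    exact key T δ hδ
  simp_rw [key0]
  -- Riemann-Lebesgue
  have hRL := Real.tendsto_integral_exp_smul_cocompact (fun y : ℝ => φ y * H (I * y))
  have hT : Tendsto (fun T : ℝ => T * (-(2 * Real.pi)⁻¹)) atTop (cocompact ℝ) := by
    refine Tendsto.mono_right ?_ atBot_le_cocompact
    exact tendsto_id.atTop_mul_const_of_neg (by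
      have := Real.pi_pos
      simp; positivity)
  refine (hRL.comp hT).congr fun T => ?_
  simp only [Function.comp]
  congr 1; ext y
  rw [Circle.smul_def, Real.fourierChar_apply, smul_eq_mul]
  have : cexp (2 * Real.pi * (-(y * (T * -(2 * Real.pi)⁻¹)) : ℝ) * I) = cexp (I * T * y) := by
    congr 1
    have := Real.pi_ne_zero
    push_cast
    field_simp
  push_cast at this ⊢
  rw [this]; ring

end PNTAP
end

section
open MeasureTheory Filter Topology Complex

namespace PNTAP

/-- The triangle function. -/
noncomputable def tri (y : ℝ) : ℝ := max 0 (1 - |y|)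

/-- The Fejer kernel. -/
noncomputable def fej (u : ℝ) : ℝ := Real.sinc (u / 2) ^ 2

lemma tri_continuous : Continuous tri := by unfold tri; fun_prop

lemma fej_continuous : Continuous fej := by
  unfold fej
  exact (Real.continuous_sinc.comp (by fun_prop)).pow 2

lemma fej_nonneg (u : ℝ) : 0 ≤ fej u := sq_nonneg _

lemma tri_zero {y : ℝ} (h : 1 < |y|) : tri y = 0 := by
  unfold tri; apply max_eq_left; linarith

lemma fej_le (u : ℝ) : fej u ≤ 5 * (1 + u ^ 2)⁻¹ := by
  rw [← div_eq_mul_inv, le_div_iff₀ (by positivity)]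
  have h1 : fej u ≤ 1 := by
    unfold fej
    rw [sq_le_one_iff_abs_le_one]
    exact Real.abs_sinc_le_one _
  have h2 : fej u * u ^ 2 ≤ 4 := by
    rcases eq_or_ne u 0 with rfl | hu
    · simp
    · unfold fej
      rw [Real.sinc_of_ne_zero (by simpa using hu), div_pow, div_pow, div_div_eq_mul_div, div_mul_cancel₀ _ (by positivity)]
      nlinarith [Real.sin_sq_le_one (u / 2)]
  nlinarith

lemma fej_integrable : Integrable fej := by
  refine Integrable.mono' (integrable_inv_one_add_sq.const_mul 5) fej_continuous.aestronglyMeasurable ?_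
  refine Eventually.of_forall fun u => ?_
  rw [Real.norm_of_nonneg (fej_nonneg u)]
  exact fej_le u

lemma fej_integral_pos : 0 < ∫ u, fej u := by
  refine integral_pos_of_integrable_nonneg_nonzero fej_continuous fej_integrable fej_nonneg (x := 0) ?_
  simp [fej]

lemma fourier_tri (u : ℝ) : (fej u : ℂ) = ∫ y : ℝ, (tri y : ℂ) * cexp (I * u * y) := by
  have hsupp : ∫ y : ℝ, (tri y : ℂ) * cexp (I * u * y)
      = ∫ y in (-1 : ℝ)..1, (tri y : ℂ) * cexp (I * u * y) := by
    rw [intervalIntegral.integral_of_le (by norm_num), ← integral_Icc_eq_integral_Ioc]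
    symm
    apply setIntegral_eq_integral_of_forall_compl_eq_zero
    intro y hy
    rw [tri_zero]
    · simp
    · by_contra h
      exact hy (abs_le.1 (not_lt.1 h))
  have hc : Continuous fun y : ℝ => (tri y : ℂ) * cexp (I * u * y) := by
    have := tri_continuous
    fun_prop
  rw [hsupp, ← intervalIntegral.integral_add_adjacent_intervals (b := 0)
    (hc.intervalIntegrable _ _) (hc.intervalIntegrable _ _)]
  have e1 : ∫ y in (-1 : ℝ)..0, (tri y : ℂ) * cexp (I * u * y)
      = ∫ y in (-1 : ℝ)..0, (1 + y : ℂ) * cexp (I * u * y) := by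
    apply intervalIntegral.integral_congr
    intro y hy
    rw [Set.uIcc_of_le (by norm_num)] at hy
    have : tri y = 1 + y := by
      unfold tri; rw [abs_of_nonpos hy.2, max_eq_right] <;> linarith [hy.1]
    simp [this]
  have e2 : ∫ y in (0 : ℝ)..1, (tri y : ℂ) * cexp (I * u * y)
      = ∫ y in (0 : ℝ)..1, (1 - y : ℂ) * cexp (I * u * y) := by
    apply intervalIntegral.integral_congr
    intro y hy
    rw [Set.uIcc_of_le (by norm_num)] at hy
    have : tri y = 1 - y := by
      unfold tri; rw [abs_of_nonneg hy.1, max_eq_right]; linarith [hy.2]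
    simp [this]
  rw [e1, e2]
  rcases eq_or_ne u 0 with rfl | hu
  · have a1 : ∫ y in (-1 : ℝ)..0, (1 + y : ℂ) * cexp (I * (0:ℝ) * y) = ((∫ y in (-1 : ℝ)..0, (1 + y) : ℝ) : ℂ) := by
      rw [← intervalIntegral.integral_ofReal]; simp
    have a2 : ∫ y in (0 : ℝ)..1, (1 - y : ℂ) * cexp (I * (0:ℝ) * y) = ((∫ y in (0 : ℝ)..1, (1 - y) : ℝ) : ℂ) := by
      rw [← intervalIntegral.integral_ofReal]; simp
    rw [a1, a2]
    rw [intervalIntegral.integral_add (by simp) (by simp), intervalIntegral.integral_sub (by simp) (by simp)]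
    simp [fej]
    norm_num
  · have hu' : (u : ℂ) ≠ 0 := by exact_mod_cast hu
    have hw : I * (u : ℂ) ≠ 0 := mul_ne_zero I_ne_zero hu'
    set w : ℂ := I * u with hwdef
    have hder : ∀ y : ℝ, HasDerivAt (fun y : ℝ => cexp (w * y)) (cexp (w * y) * w) y := by
      intro y
      have := ((hasDerivAt_id (y : ℂ)).const_mul w).cexp.comp_ofReal
      simpa using this
    have hid : ∀ y : ℝ, HasDerivAt (fun y : ℝ => (y : ℂ)) 1 y := fun y => ofRealCLM.hasDerivAt
    have i1 : ∫ y in (-1 : ℝ)..0, (1 + y : ℂ) * cexp (w * y)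
        = ((1 + (0:ℝ)) * cexp (w * (0:ℝ)) / w - cexp (w * (0:ℝ)) / w ^ 2)
          - ((1 + (-1:ℝ)) * cexp (w * (-1:ℝ)) / w - cexp (w * (-1:ℝ)) / w ^ 2) := by
      rw [intervalIntegral.integral_eq_sub_of_hasDerivAt (f := fun y : ℝ => (1 + y : ℂ) * cexp (w * y) / w - cexp (w * y) / w ^ 2)]
      · intro y _
        convert! ((((hid y).const_add 1).mul (hder y)).div_const w).sub ((hder y).div_const (w ^ 2)) using 1
        field_simp
        ring
      · apply Continuous.intervalIntegrable; fun_prop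
    have i2 : ∫ y in (0 : ℝ)..1, (1 - y : ℂ) * cexp (w * y)
        = ((1 - (1:ℝ)) * cexp (w * (1:ℝ)) / w + cexp (w * (1:ℝ)) / w ^ 2)
          - ((1 - (0:ℝ)) * cexp (w * (0:ℝ)) / w + cexp (w * (0:ℝ)) / w ^ 2) := by
      rw [intervalIntegral.integral_eq_sub_of_hasDerivAt (f := fun y : ℝ => (1 - y : ℂ) * cexp (w * y) / w + cexp (w * y) / w ^ 2)]
      · intro y _
        convert! ((((hid y).const_sub 1).mul (hder y)).div_const w).add ((hder y).div_const (w ^ 2)) using 1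
        field_simp
        ring
      · apply Continuous.intervalIntegrable; fun_prop
    rw [i1, i2]
    have hk : (fej u : ℂ) = (2 - 2 * Complex.cos u) / u ^ 2 := by
      unfold fej
      rw [Real.sinc_of_ne_zero (by simpa using hu)]
      have h1 : Real.cos u = 1 - 2 * Real.sin (u / 2) ^ 2 := by
        have := Real.cos_two_mul (u / 2)
        have h2 := Real.sin_sq_add_cos_sq (u / 2)
        rw [show 2 * (u / 2) = u by ring] at this
        linarith
      rw [← Complex.ofReal_cos, h1]
      push_cast
      field_simp
      ring
    rw [hk, Complex.cos]
    have hw2 : w ^ 2 = - u ^ 2 := by rw [hwdef, mul_pow, I_sq]; ring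
    rw [hw2, show (u : ℂ) * I = w by rw [hwdef]; ring, show -(u : ℂ) * I = -w by rw [hwdef]; ring]
    push_cast
    simp only [mul_zero, mul_one, mul_neg, Complex.exp_zero]
    field_simp
    ring

/-- Scaled Fejer kernel. -/
noncomputable def fejs (l : ℝ) (u : ℝ) : ℝ := l * fej (l * u)

lemma fejs_nonneg {l : ℝ} (hl : 0 < l) (u : ℝ) : 0 ≤ fejs l u :=
  mul_nonneg hl.le (fej_nonneg _)

lemma fejs_integrable {l : ℝ} (hl : 0 < l) : Integrable (fejs l) :=
  (fej_integrable.comp_mul_left' hl.ne').const_mul l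

lemma fejs_integral {l : ℝ} (hl : 0 < l) : ∫ u, fejs l u = ∫ u, fej u := by
  unfold fejs
  rw [integral_const_mul, Measure.integral_comp_mul_left, abs_of_pos (by positivity), smul_eq_mul]
  field_simp

lemma fejs_setIntegral {l : ℝ} (hl : 0 < l) (η : ℝ) (hη : 0 < η) :
    ∫ u in Set.Icc (-η) η, fejs l u = ∫ u in Set.Icc (-(l * η)) (l * η), fej u := by
  rw [integral_Icc_eq_integral_Ioc, integral_Icc_eq_integral_Ioc,
    ← intervalIntegral.integral_of_le (by linarith),
    ← intervalIntegral.integral_of_le (by have := mul_pos hl hη; linarith)]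
  unfold fejs
  rw [intervalIntegral.integral_const_mul, intervalIntegral.mul_integral_comp_mul_left]
  simp

lemma fourier_tri_scaled {l : ℝ} (hl : 0 < l) (u : ℝ) :
    (fejs l u : ℂ) = ∫ y : ℝ, (tri (y / l) : ℂ) * cexp (I * u * y) := by
  unfold fejs
  rw [ofReal_mul, fourier_tri]
  have := Measure.integral_comp_div (fun y : ℝ => (tri y : ℂ) * cexp (I * (l * u : ℝ) * y)) l
  rw [abs_of_pos hl] at this
  rw [Complex.real_smul] at this
  rw [← this]
  congr 1; ext y
  congr 2
  have : (l : ℂ) ≠ 0 := by exact_mod_cast hl.ne'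
  push_cast
  field_simp

end PNTAP
end

section
open MeasureTheory Filter Topology Complex

namespace PNTAP

lemma smoothed_real (f : ℝ → ℝ) (hfm : Measurable f) (M : ℝ) (hM : ∀ t, f t ≤ M)
    (hf0 : ∀ t, 0 ≤ f t) (hfz : ∀ t ≤ 0, f t = 0) (c : ℝ)
    (H : ℂ → ℂ) (hH : ContinuousOn H {z | 0 ≤ z.re})
    (hgH : ∀ z : ℂ, 0 < z.re →
      ∫ t in Set.Ioi (0:ℝ), ((f t - c : ℝ) : ℂ) * cexp (-z * t) = H z)
    (l : ℝ) (hl : 0 < l) :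
    Tendsto (fun T : ℝ => ∫ u, f (T - u) * fejs l u) atTop (𝓝 (c * ∫ u, fej u)) := by
  have hbd : ∀ t, |f t - c| ≤ M + |c| := fun t => by
    refine (abs_sub _ _).trans ?_
    rw [abs_of_nonneg (hf0 t)]
    linarith [hM t]
  have hKi : Integrable (fejs l) := fejs_integrable hl
  have h := smoothed_limit (fun t => f t - c) (by fun_prop) (M + |c|) hbd H hH hgH
    (fun y => (tri (y / l) : ℂ)) (by have := tri_continuous; fun_prop) l
    (fun y hy => by
      rw [tri_zero]
      · simp
      · rw [abs_div, abs_of_pos hl, lt_div_iff₀ hl]; linarith)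
    (fun u => (fejs l u : ℂ)) (fun u => fourier_tri_scaled hl u) hKi.ofReal
  have h' : Tendsto (fun T : ℝ => ∫ t in Set.Ioi (0:ℝ), (f t - c) * fejs l (T - t)) atTop (𝓝 0) := by
    have := (Complex.continuous_re.tendsto _).comp h
    simp only [zero_re] at this
    refine this.congr fun T => ?_
    simp only [Function.comp]
    rw [← Complex.ofReal_re (∫ t in Set.Ioi (0:ℝ), (f t - c) * fejs l (T - t)), ← integral_complex_ofReal]
    simp
  have hInt : ∀ T, Integrable (fun t => f t * fejs l (T - t)) := fun T =>
    (hKi.comp_sub_left T).bdd_mul (c := M) hfm.aestronglyMeasurable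
      (Eventually.of_forall fun t => by rw [Real.norm_of_nonneg (hf0 t)]; exact hM t)
  have h2 : Tendsto (fun T : ℝ => ∫ t in Set.Ioi (0:ℝ), fejs l (T - t)) atTop (𝓝 (∫ u, fej u)) := by
    rw [← fejs_integral hl]
    have e : ∀ T : ℝ, ∫ t in Set.Ioi (0:ℝ), fejs l (T - t) = ∫ u in Set.Iio T, fejs l u := by
      intro T
      rw [← integral_indicator measurableSet_Ioi, ← integral_indicator measurableSet_Iio,
        ← integral_sub_left_eq_self _ _ T]
      congr 1; ext t
      simp [Set.indicator_apply]
    simp_rw [e]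
    have : Tendsto (fun T : ℝ => ∫ u in Set.Iic T, fejs l u) atTop (𝓝 (∫ u in Set.univ, fejs l u)) := by
      have := tendsto_setIntegral_of_monotone (μ := volume) (f := fejs l) (s := fun T : ℝ => Set.Iic T)
        (fun _ => measurableSet_Iic) (fun a b hab => Set.Iic_subset_Iic.2 hab)
        hKi.integrableOn
      rwa [Set.iUnion_Iic] at this
    simpa [integral_Iic_eq_integral_Iio] using this
  have h3 : ∀ T, ∫ u, f (T - u) * fejs l u
      = (∫ t in Set.Ioi (0:ℝ), (f t - c) * fejs l (T - t)) + c * ∫ t in Set.Ioi (0:ℝ), fejs l (T - t) := by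
    intro T
    have e1 : ∫ u, f (T - u) * fejs l u = ∫ t, f t * fejs l (T - t) := by
      rw [← integral_sub_left_eq_self _ _ T]
      simp
    have e2 : ∫ t, f t * fejs l (T - t) = ∫ t in Set.Ioi (0:ℝ), f t * fejs l (T - t) := by
      symm
      apply setIntegral_eq_integral_of_forall_compl_eq_zero
      intro t ht
      rw [hfz t (not_lt.1 ht), zero_mul]
    rw [e1, e2, ← integral_const_mul, ← integral_add]
    · congr 1; ext t; ring
    · refine (((hInt T).sub ((hKi.comp_sub_left T).const_mul c)).restrict).congr ?_
      exact Eventually.of_forall fun t => by simp; ring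
    · exact ((hKi.comp_sub_left T).const_mul c).restrict
  simp_rw [h3]
  simpa using h'.add (h2.const_mul c)

theorem tauberian (f : ℝ → ℝ) (hfm : Measurable f) (M : ℝ) (hM : ∀ t, f t ≤ M)
    (hf0 : ∀ t, 0 ≤ f t) (hfz : ∀ t ≤ 0, f t = 0)
    (hfmono : ∀ t u, 0 ≤ u → f t * Real.exp (-u) ≤ f (t + u)) (c : ℝ)
    (H : ℂ → ℂ) (hH : ContinuousOn H {z | 0 ≤ z.re})
    (hgH : ∀ z : ℂ, 0 < z.re →
      ∫ t in Set.Ioi (0:ℝ), ((f t - c : ℝ) : ℂ) * cexp (-z * t) = H z) :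
    Tendsto f atTop (𝓝 c) := by
  set J : ℝ := ∫ u, fej u with hJ
  have hJpos : 0 < J := fej_integral_pos
  have hM0 : 0 ≤ M := (hf0 0).trans (hM 0)
  have hsm := smoothed_real f hfm M hM hf0 hfz c H hH hgH
  let Iη : ℝ → ℝ := fun η => ∫ u in Set.Icc (-η⁻¹) (η⁻¹), fej u
  have hIlim : Tendsto Iη (𝓝[>] 0) (𝓝 J) := by
    have : Tendsto (fun R : ℝ => ∫ u in Set.Icc (-R) R, fej u) atTop (𝓝 (∫ u in Set.univ, fej u)) := by
      have := tendsto_setIntegral_of_monotone (μ := volume) (f := fej) (s := fun T : ℝ => Set.Icc (-T) T)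
        (fun _ => measurableSet_Icc) (fun a b hab => Set.Icc_subset_Icc (by linarith) hab)
        fej_integrable.integrableOn
      have hu : (⋃ T : ℝ, Set.Icc (-T) T) = Set.univ := by
        rw [Set.eq_univ_iff_forall]
        intro x
        rw [Set.mem_iUnion]
        exact ⟨|x|, abs_le.1 le_rfl⟩
      rwa [hu] at this
    rw [Measure.restrict_univ] at this
    exact this.comp tendsto_inv_nhdsGT_zero
  have hscale : ∀ η : ℝ, 0 < η → ∫ u in Set.Icc (-η) η, fejs (η⁻¹ ^ 2) u = Iη η := by
    intro η hη
    rw [fejs_setIntegral (by positivity) η hη]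
    have : η⁻¹ ^ 2 * η = η⁻¹ := by field_simp
    rw [this]
  have hIntF : ∀ (l : ℝ), 0 < l → ∀ T, Integrable (fun u => f (T - u) * fejs l u) := fun l hl T =>
    (fejs_integrable hl).bdd_mul (c := M)
      (hfm.comp (measurable_const.sub measurable_id)).aestronglyMeasurable
      (Eventually.of_forall fun t => by rw [Real.norm_of_nonneg (hf0 _)]; exact hM _)
  -- upper bound
  have hup : ∀ η : ℝ, 0 < η → ∀ T, f T * Real.exp (-(2 * η)) * Iη η
      ≤ ∫ u, f (T + η - u) * fejs (η⁻¹ ^ 2) u := by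
    intro η hη T
    have hl : 0 < η⁻¹ ^ 2 := by positivity
    rw [← hscale η hη, ← integral_const_mul, ← integral_indicator measurableSet_Icc]
    refine integral_mono (((fejs_integrable hl).const_mul _).indicator measurableSet_Icc)
      (hIntF _ hl _) fun u => ?_
    by_cases hu : u ∈ Set.Icc (-η) η
    · simp only [Set.indicator_of_mem hu]
      refine mul_le_mul_of_nonneg_right ?_ (fejs_nonneg hl u)
      have := hfmono T (η - u) (by linarith [hu.2])
      rw [← add_sub_assoc] at this
      refine le_trans ?_ this
      refine mul_le_mul_of_nonneg_left (Real.exp_le_exp.2 ?_) (hf0 T)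
      linarith [hu.1]
    · simp only [Set.indicator_of_notMem hu]
      exact mul_nonneg (hf0 _) (fejs_nonneg hl u)
  -- lower bound
  have hlo : ∀ η : ℝ, 0 < η → ∀ T, ∫ u, f (T - η - u) * fejs (η⁻¹ ^ 2) u
      ≤ f T * Real.exp (2 * η) * J + M * (J - Iη η) := by
    intro η hη T
    have hl : 0 < η⁻¹ ^ 2 := by positivity
    have hki := fejs_integrable hl
    have e : f T * Real.exp (2 * η) * J + M * (J - Iη η)
        = ∫ u, (f T * Real.exp (2 * η) * fejs (η⁻¹ ^ 2) u
          + M * (fejs (η⁻¹ ^ 2) u - (Set.Icc (-η) η).indicator (fejs (η⁻¹ ^ 2)) u)) := by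
      have hi2 : Integrable (fun u => M * (fejs (η⁻¹ ^ 2) u
          - (Set.Icc (-η) η).indicator (fejs (η⁻¹ ^ 2)) u)) :=
        (hki.sub (hki.indicator measurableSet_Icc)).const_mul _
      rw [integral_add (hki.const_mul _) hi2,
        integral_const_mul, integral_const_mul, integral_sub hki (hki.indicator measurableSet_Icc),
        integral_indicator measurableSet_Icc, hscale η hη, fejs_integral hl]
    rw [e]
    refine integral_mono (hIntF _ hl _) ((hki.const_mul _).add
      ((hki.sub (hki.indicator measurableSet_Icc)).const_mul _)) fun u => ?_
    have hk := fejs_nonneg hl u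
    by_cases hu : u ∈ Set.Icc (-η) η
    · simp only [Set.indicator_of_mem hu, sub_self, mul_zero, add_zero]
      refine mul_le_mul_of_nonneg_right ?_ hk
      have := hfmono (T - η - u) (η + u) (by linarith [hu.1])
      rw [show T - η - u + (η + u) = T by ring] at this
      have h2 : f (T - η - u) ≤ f T * Real.exp (η + u) := by
        rw [Real.exp_neg, ← div_eq_mul_inv, div_le_iff₀ (Real.exp_pos _)] at this
        exact this
      refine h2.trans ?_
      refine mul_le_mul_of_nonneg_left (Real.exp_le_exp.2 ?_) (hf0 T)
      linarith [hu.2]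
    · simp only [Set.indicator_of_notMem hu, sub_zero]
      have h1 : f (T - η - u) * fejs (η⁻¹ ^ 2) u ≤ M * fejs (η⁻¹ ^ 2) u :=
        mul_le_mul_of_nonneg_right (hM _) hk
      have h2 : 0 ≤ f T * Real.exp (2 * η) * fejs (η⁻¹ ^ 2) u :=
        mul_nonneg (mul_nonneg (hf0 T) (Real.exp_pos _).le) hk
      linarith
  have hid : Tendsto (fun η : ℝ => η) (𝓝[>] 0) (𝓝 0) := tendsto_id.mono_left nhdsWithin_le_nhds
  have hexp : Tendsto (fun η : ℝ => Real.exp (2 * η)) (𝓝[>] 0) (𝓝 1) := by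
    have := (Real.continuous_exp.tendsto _).comp (hid.const_mul 2)
    simpa [Function.comp_def] using this
  rw [tendsto_order]
  constructor
  · intro a ha
    have hlim : Tendsto (fun η : ℝ => (c * J - η - M * (J - Iη η)) / (Real.exp (2 * η) * J))
        (𝓝[>] 0) (𝓝 ((c * J - 0 - M * (J - J)) / (1 * J))) :=
      ((hid.const_sub _).sub ((hIlim.const_sub J).const_mul M)).div (hexp.mul_const J) (by positivity)
    have : (c * J - 0 - M * (J - J)) / (1 * J) = c := by field_simp; ring
    rw [this] at hlim
    obtain ⟨η, hη1, hη⟩ := ((hlim.eventually_const_lt ha).and self_mem_nhdsWithin).exists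
    have hη : 0 < η := hη
    have hev := (((hsm (η⁻¹ ^ 2) (by positivity)).comp
      (tendsto_atTop_add_const_right atTop (-η) tendsto_id)).eventually_const_lt
        (show c * J - η < c * J by linarith))
    filter_upwards [hev] with T hT
    have := hlo η hη T
    simp only [Function.comp, id, ← sub_eq_add_neg] at hT
    refine hη1.trans_le ?_
    rw [div_le_iff₀ (by positivity)]
    linarith
  · intro b hb
    have hlim : Tendsto (fun η : ℝ => (c * J + η) / (Real.exp (-(2 * η)) * Iη η))
        (𝓝[>] 0) (𝓝 ((c * J + 0) / (1⁻¹ * J))) := by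
      simp_rw [Real.exp_neg]
      exact (hid.const_add _).div ((hexp.inv₀ one_ne_zero).mul hIlim) (by positivity)
    have : (c * J + 0) / (1⁻¹ * J) = c := by field_simp; ring
    rw [this] at hlim
    obtain ⟨η, ⟨hη1, hI⟩, hη⟩ := (((hlim.eventually_lt_const hb).and
      (hIlim.eventually_const_lt hJpos)).and self_mem_nhdsWithin).exists
    have hη : 0 < η := hη
    have hev := (((hsm (η⁻¹ ^ 2) (by positivity)).comp
      (tendsto_atTop_add_const_right atTop η tendsto_id)).eventually_lt_const
        (show c * J < c * J + η by linarith))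
    filter_upwards [hev] with T hT
    have := hup η hη T
    simp only [Function.comp, id] at hT
    refine lt_of_le_of_lt ?_ hη1
    rw [le_div_iff₀ (mul_pos (Real.exp_pos _) hI)]
    linarith

end PNTAP
end

section
open MeasureTheory Filter Topology Complex ArithmeticFunction

namespace PNTAP

open ArithmeticFunction.vonMangoldt in
/-- Weighted count of prime powers in a residue class. -/
noncomputable def psiRC {q : ℕ} (a : ZMod q) (x : ℝ) : ℝ :=
  ∑ k ∈ Finset.Icc 1 ⌊x⌋₊, residueClass a k

section
open ArithmeticFunction.vonMangoldt
variable {q : ℕ} (a : ZMod q)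

lemma psiRC_nonneg (x : ℝ) : 0 ≤ psiRC a x :=
  Finset.sum_nonneg fun _ _ => residueClass_nonneg a _

lemma psiRC_mono : Monotone (psiRC a) := by
  intro x y hxy
  refine Finset.sum_le_sum_of_subset_of_nonneg ?_ fun _ _ _ => residueClass_nonneg a _
  exact Finset.Icc_subset_Icc le_rfl (Nat.floor_mono hxy)

lemma psiRC_le (x : ℝ) (hx : 0 ≤ x) : psiRC a x ≤ (Real.log 4 + 4) * x := by
  refine le_trans ?_ (Chebyshev.psi_le_const_mul_self hx)
  unfold psiRC Chebyshev.psi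
  exact Finset.sum_le_sum fun k _ => residueClass_le a k

lemma psiRC_zero (x : ℝ) (hx : x ≤ 1) : psiRC a x = 0 := by
  refine le_antisymm ?_ (psiRC_nonneg a x)
  rw [← Chebyshev.psi_eq_zero_of_le_one hx]
  unfold psiRC Chebyshev.psi
  exact Finset.sum_le_sum fun k _ => residueClass_le a k

theorem psiRC_tendsto [NeZero q] {a : ZMod q} (ha : IsUnit a) :
    Tendsto (fun t : ℝ => Real.exp (-t) * psiRC a (Real.exp t)) atTop (𝓝 ((q.totient : ℝ)⁻¹)) := by
  set c : ℝ := (q.totient : ℝ)⁻¹ with hc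
  have hmeas : Measurable (psiRC a) := (psiRC_mono a).measurable
  have hfm : Measurable (fun t : ℝ => Real.exp (-t) * psiRC a (Real.exp t)) := by fun_prop
  have hf0 : ∀ t : ℝ, 0 ≤ Real.exp (-t) * psiRC a (Real.exp t) := fun t =>
    mul_nonneg (Real.exp_pos _).le (psiRC_nonneg a _)
  have hfM : ∀ t : ℝ, Real.exp (-t) * psiRC a (Real.exp t) ≤ Real.log 4 + 4 := fun t => by
    have := psiRC_le a (Real.exp t) (Real.exp_pos t).le
    rw [Real.exp_neg, inv_mul_le_iff₀ (Real.exp_pos t)]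
    linarith
  refine tauberian (fun t : ℝ => Real.exp (-t) * psiRC a (Real.exp t)) hfm (Real.log 4 + 4) hfM hf0
    ?_ ?_ c (fun z => (LFunctionResidueClassAux a (1 + z) - c) / (1 + z)) ?_ ?_
  · intro t ht
    rw [psiRC_zero a _ (Real.exp_le_one_iff.2 ht), mul_zero]
  · intro t u hu
    have h1 := psiRC_mono a (Real.exp_le_exp.2 (show t ≤ t + u by linarith))
    have h2 : Real.exp (-(t + u)) = Real.exp (-t) * Real.exp (-u) := by
      rw [← Real.exp_add]; congr 1; ring
    rw [h2]
    have := mul_le_mul_of_nonneg_left h1 (mul_pos (Real.exp_pos (-t)) (Real.exp_pos (-u))).le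
    linarith
  · refine ContinuousOn.div (ContinuousOn.sub ?_ continuousOn_const) (by fun_prop) ?_
    · refine (continuousOn_LFunctionResidueClassAux a).comp (by fun_prop) ?_
      intro z hz
      simpa using hz
    · intro z hz h
      have := congrArg Complex.re h
      have hz' : 0 ≤ z.re := hz
      simp at this
      linarith
  · intro z hz
    have hz0 : z ≠ 0 := fun h => by simp [h] at hz
    have hz1 : 1 + z ≠ 0 := fun h => by
      have := congrArg Complex.re h
      simp at this
      linarith
    have hre : 1 < (1 + z).re := by simpa using hz
    have hG := eqOn_LFunctionResidueClassAux ha (show (1 + z) ∈ {s : ℂ | 1 < s.re} from hre)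
    have hO : (fun n : ℕ ↦ ∑ k ∈ Finset.Icc 1 n, residueClass a k) =O[atTop] fun n ↦ (n : ℝ) ^ (1:ℝ) := by
      refine Asymptotics.IsBigO.of_bound (Real.log 4 + 4) (Eventually.of_forall fun n => ?_)
      have h1 := psiRC_le a n n.cast_nonneg
      have h2 := psiRC_nonneg a n
      unfold psiRC at h1 h2
      rw [Nat.floor_natCast] at h1 h2
      rw [Real.norm_of_nonneg h2]
      simpa using h1
    have hL := LSeries_eq_mul_integral_of_nonneg (fun n => residueClass a n) zero_le_one hre hO
      (residueClass_nonneg a)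
    have hcv : ∫ t in Set.Ioi (1 : ℝ), (∑ k ∈ Finset.Icc 1 ⌊t⌋₊, ((residueClass a k : ℝ) : ℂ)) * t ^ (-((1 + z) + 1))
        = ∫ t in Set.Ioi (0 : ℝ), ((Real.exp (-t) * psiRC a (Real.exp t) : ℝ) : ℂ) * cexp (-z * t) := by
      have := integral_comp_exp_Ioi (fun t : ℝ => (∑ k ∈ Finset.Icc 1 ⌊t⌋₊, ((residueClass a k : ℝ) : ℂ)) * (t : ℂ) ^ (-((1 + z) + 1))) 0
      rw [Real.exp_zero] at this
      rw [← this]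
      congr 1; ext t
      unfold psiRC
      rw [Complex.real_smul, Complex.cpow_def_of_ne_zero (by exact_mod_cast (Real.exp_pos t).ne'),
        ← Complex.ofReal_log (Real.exp_pos t).le, Real.log_exp]
      push_cast
      have : cexp t * cexp (t * (-((1 + z) + 1))) = cexp (-t) * cexp (-z * t) := by
        rw [← Complex.exp_add, ← Complex.exp_add]; congr 1; ring
      linear_combination (∑ k ∈ Finset.Icc 1 ⌊Real.exp t⌋₊, ((residueClass a k : ℝ) : ℂ)) * this
    rw [hcv] at hL
    have hei : IntegrableOn (fun t : ℝ => cexp (-z * t)) (Set.Ioi 0) :=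
      integrableOn_exp_mul_complex_Ioi (by simpa using hz) 0
    have hfi : IntegrableOn (fun t : ℝ => ((Real.exp (-t) * psiRC a (Real.exp t) : ℝ) : ℂ) * cexp (-z * t)) (Set.Ioi 0) :=
      hei.bdd_mul (c := Real.log 4 + 4) (by
        apply Measurable.aestronglyMeasurable
        fun_prop) (Eventually.of_forall fun t => by
          rw [Complex.norm_real, Real.norm_of_nonneg (hf0 t)]
          exact hfM t)
    have hce : ∫ t in Set.Ioi (0:ℝ), cexp (-z * t) = 1 / z := by
      rw [integral_exp_mul_complex_Ioi (by simpa using hz)]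
      simp
    have hsub : ∫ t in Set.Ioi (0:ℝ), ((Real.exp (-t) * psiRC a (Real.exp t) - c : ℝ) : ℂ) * cexp (-z * t)
        = (∫ t in Set.Ioi (0:ℝ), ((Real.exp (-t) * psiRC a (Real.exp t) : ℝ) : ℂ) * cexp (-z * t))
          - c * (1 / z) := by
      rw [← hce, ← integral_const_mul, ← integral_sub hfi (hei.const_mul _)]
      congr 1; ext t
      push_cast; ring
    rw [hsub]
    simp only [add_sub_cancel_left] at hG
    rw [hG, hL, hc]
    push_cast
    field_simp
    ring_nf

end

end PNTAP
end

section
open Filter Topology ArithmeticFunction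

namespace PNTAP

section
open ArithmeticFunction.vonMangoldt
open scoped Classical

/-- Primes up to `n` in a residue class. -/
noncomputable def primesRC {q : ℕ} (a : ZMod q) (n : ℕ) : Finset ℕ :=
  (Finset.Icc 1 n).filter fun p => p.Prime ∧ (p : ZMod q) = a

/-- Log-weighted count of the primes in a residue class. -/
noncomputable def thetaRC {q : ℕ} (a : ZMod q) (n : ℕ) : ℝ := ∑ p ∈ primesRC a n, Real.log p

variable {q : ℕ}

lemma psiRC_sub_thetaRC (a : ZMod q) (n : ℕ) :
    psiRC a n - thetaRC a n = ∑ k ∈ (Finset.Icc 1 n).filter (fun k => ¬ k.Prime), residueClass a k := by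
  unfold psiRC thetaRC primesRC
  rw [Nat.floor_natCast, ← Finset.sum_filter_add_sum_filter_not _ (fun k => Nat.Prime k),
    ← Finset.filter_filter]
  have : ∑ k ∈ (Finset.Icc 1 n).filter (fun k => k.Prime), residueClass a k
      = ∑ p ∈ (Finset.Icc 1 n).filter (fun k => k.Prime), if (p : ZMod q) = a then Real.log p else 0 := by
    refine Finset.sum_congr rfl fun k hk => ?_
    have hk' := (Finset.mem_filter.1 hk).2
    simp [residueClass, Set.indicator_apply, vonMangoldt_apply_prime hk']
  rw [this, Finset.sum_filter (fun p : ℕ => (p : ZMod q) = a)]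
  ring

lemma psiRC_sub_thetaRC_bounds (a : ZMod q) (n : ℕ) (hn : 1 ≤ n) :
    0 ≤ psiRC a n - thetaRC a n ∧ psiRC a n - thetaRC a n ≤ 2 * √n * Real.log n := by
  rw [psiRC_sub_thetaRC]
  refine ⟨Finset.sum_nonneg fun _ _ => residueClass_nonneg a _, ?_⟩
  refine le_trans ?_ (Chebyshev.psi_sub_theta_le (x := n) (by exact_mod_cast hn))
  rw [Chebyshev.psi_sub_theta_eq_sum_not_prime, Nat.floor_natCast]
  refine Finset.sum_le_sum fun k _ => residueClass_le a k

lemma psiRC_div_tendsto [NeZero q] {a : ZMod q} (ha : IsUnit a) :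
    Tendsto (fun n : ℕ => psiRC a n / n) atTop (𝓝 ((q.totient : ℝ)⁻¹)) := by
  have h := (psiRC_tendsto ha).comp (Real.tendsto_log_atTop.comp tendsto_natCast_atTop_atTop)
  refine h.congr' ?_
  filter_upwards [eventually_gt_atTop 0] with n hn
  have : (0 : ℝ) < n := by exact_mod_cast hn
  simp only [Function.comp]
  rw [Real.exp_neg, Real.exp_log this]
  field_simp

lemma log_div_rpow_tendsto {s : ℝ} (hs : 0 < s) :
    Tendsto (fun n : ℕ => Real.log n / (n : ℝ) ^ s) atTop (𝓝 0) :=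
  ((isLittleO_log_rpow_atTop hs).tendsto_div_nhds_zero).comp tendsto_natCast_atTop_atTop

lemma thetaRC_div_tendsto [NeZero q] {a : ZMod q} (ha : IsUnit a) :
    Tendsto (fun n : ℕ => thetaRC a n / n) atTop (𝓝 ((q.totient : ℝ)⁻¹)) := by
  have h0 : Tendsto (fun n : ℕ => (psiRC a n - thetaRC a n) / n) atTop (𝓝 0) := by
    have h1 : Tendsto (fun n : ℕ => 2 * (Real.log n / (n : ℝ) ^ (1 / 2 : ℝ))) atTop (𝓝 0) := by
      simpa using (log_div_rpow_tendsto (s := 1 / 2) (by norm_num)).const_mul 2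
    refine tendsto_of_tendsto_of_tendsto_of_le_of_le' tendsto_const_nhds h1 ?_ ?_
    · filter_upwards [eventually_ge_atTop 1] with n hn
      exact div_nonneg (psiRC_sub_thetaRC_bounds a n hn).1 n.cast_nonneg
    · filter_upwards [eventually_ge_atTop 1] with n hn
      have hn' : (0 : ℝ) < n := by exact_mod_cast hn
      have hs : (0 : ℝ) < √n := Real.sqrt_pos.2 hn'
      rw [← Real.sqrt_eq_rpow, div_le_iff₀ hn']
      refine (psiRC_sub_thetaRC_bounds a n hn).2.trans (le_of_eq ?_)
      have : (n : ℝ) = √n * √n := (Real.mul_self_sqrt hn'.le).symm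
      rw [mul_div_assoc', div_mul_eq_mul_div, eq_div_iff hs.ne']
      linear_combination (-2 * Real.log n) * this
  have := (psiRC_div_tendsto ha).sub h0
  simp only [sub_zero] at this
  refine this.congr fun n => ?_
  ring

theorem piRC_tendsto [NeZero q] {a : ZMod q} (ha : IsUnit a) :
    Tendsto (fun n : ℕ => ((primesRC a n).card : ℝ) * Real.log n / n) atTop
      (𝓝 ((q.totient : ℝ)⁻¹)) := by
  set c := (q.totient : ℝ)⁻¹
  have hth := thetaRC_div_tendsto ha
  rw [tendsto_order]
  constructor
  · intro b hb
    filter_upwards [hth.eventually_const_lt hb] with n hn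
    refine hn.trans_le (div_le_div_of_nonneg_right ?_ n.cast_nonneg)
    unfold thetaRC
    rw [← nsmul_eq_mul]
    refine Finset.sum_le_card_nsmul _ _ _ fun p hp => ?_
    have hp := (Finset.mem_filter.1 hp).1
    rw [Finset.mem_Icc] at hp
    exact Real.log_le_log (by exact_mod_cast hp.1) (by exact_mod_cast hp.2)
  · intro b hb
    have hlim : Tendsto (fun δ : ℝ => c / (1 - δ)) (𝓝[>] 0) (𝓝 (c / (1 - 0))) := by
      refine tendsto_const_nhds.div (tendsto_const_nhds.sub ?_) (by norm_num)
      exact tendsto_id.mono_left nhdsWithin_le_nhds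
    rw [sub_zero, div_one] at hlim
    obtain ⟨δ, hδ1, hδ⟩ := ((hlim.eventually_lt_const hb).and
      (Ioo_mem_nhdsGT (zero_lt_one (α := ℝ)))).exists
    have hδ0 : 0 < δ := hδ.1
    have hδ2 : 0 < 1 - δ := by linarith [hδ.2]
    have hlim2 : Tendsto (fun n : ℕ => thetaRC a n / n / (1 - δ) + Real.log n / (n : ℝ) ^ δ)
        atTop (𝓝 (c / (1 - δ) + 0)) := (hth.div_const _).add (log_div_rpow_tendsto hδ0)
    rw [add_zero] at hlim2
    filter_upwards [hlim2.eventually_lt_const hδ1, eventually_ge_atTop 1] with n hn hn1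
    refine lt_of_le_of_lt ?_ hn
    have hnp : (0 : ℝ) < n := by exact_mod_cast hn1
    have hlog : 0 ≤ Real.log n := Real.log_nonneg (by exact_mod_cast hn1)
    set y : ℝ := (n : ℝ) ^ (1 - δ) with hy
    have hypos : 0 < y := Real.rpow_pos_of_pos hnp _
    -- split
    have hsplit : ((primesRC a n).card : ℝ) ≤ y + ((primesRC a n).filter (fun p : ℕ => y < p)).card := by
      have h1 := Finset.card_filter_add_card_filter_not (s := primesRC a n) (fun p : ℕ => y < p)
      have h2 : ((primesRC a n).filter (fun p : ℕ => ¬ y < p)).card ≤ ⌊y⌋₊ := by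
        have : (primesRC a n).filter (fun p : ℕ => ¬ y < p) ⊆ Finset.Icc 1 ⌊y⌋₊ := by
          intro p hp
          rw [Finset.mem_filter] at hp
          have hp1 := (Finset.mem_filter.1 hp.1).1
          rw [Finset.mem_Icc] at hp1 ⊢
          exact ⟨hp1.1, Nat.le_floor (not_lt.1 hp.2)⟩
        simpa using Finset.card_le_card this
      have h3 : (⌊y⌋₊ : ℝ) ≤ y := Nat.floor_le hypos.le
      have h4 : (((primesRC a n).filter (fun p : ℕ => ¬ y < p)).card : ℝ) ≤ ⌊y⌋₊ := by exact_mod_cast h2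
      have h5 : ((primesRC a n).card : ℝ) = ((primesRC a n).filter (fun p : ℕ => y < p)).card
        + ((primesRC a n).filter (fun p : ℕ => ¬ y < p)).card := by exact_mod_cast h1.symm
      linarith
    have hth2 : (((primesRC a n).filter (fun p : ℕ => y < p)).card : ℝ) * ((1 - δ) * Real.log n)
        ≤ thetaRC a n := by
      unfold thetaRC
      rw [← nsmul_eq_mul]
      refine le_trans (Finset.card_nsmul_le_sum _ (fun p : ℕ => Real.log p) _ fun p hp => ?_)
        (Finset.sum_le_sum_of_subset_of_nonneg (Finset.filter_subset _ _) fun p _ _ => Real.log_natCast_nonneg p)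
      rw [← Real.log_rpow hnp]
      exact Real.log_le_log hypos (Finset.mem_filter.1 hp).2.le
    have hyd : y / n = 1 / (n : ℝ) ^ δ := by
      rw [hy, Real.rpow_sub hnp, Real.rpow_one]
      field_simp
    calc ((primesRC a n).card : ℝ) * Real.log n / n
        ≤ (y + ((primesRC a n).filter (fun p : ℕ => y < p)).card) * Real.log n / n := by gcongr
      _ = (((primesRC a n).filter (fun p : ℕ => y < p)).card : ℝ) * ((1 - δ) * Real.log n) / n / (1 - δ)
          + Real.log n * (y / n) := by field_simp; ring
      _ ≤ thetaRC a n / n / (1 - δ) + Real.log n * (y / n) := by gcongr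
      _ = _ := by rw [hyd]; ring

end

end PNTAP
end

section
namespace PNTAP

section
open scoped NumberTheorySymbols

lemma jacobi_val {N q b : ℕ} [NeZero q] (h : 4 * N ∣ q) (h2 : 2 ∣ q) (hb : Odd b) :
    J((N : ℤ) | (b : ZMod q).val) = J((N : ℤ) | b) := by
  have hb' : Odd (b % q) := hb.mod_even (even_iff_two_dvd.2 h2)
  rw [ZMod.val_natCast, jacobiSym.mod_right' N hb', jacobiSym.mod_right' N hb, Nat.mod_mod_of_dvd _ h]

lemma odd_unit_val {q : ℕ} (h2 : 2 ∣ q) (u : (ZMod q)ˣ) : Odd (u : ZMod q).val := by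
  have h := ZMod.val_coe_unit_coprime u
  have h' := h.coprime_dvd_right h2
  exact Nat.coprime_two_right.1 h'

lemma exists_jacobi_neg_one {N q : ℕ} (hN : ¬ IsSquare N) (hq : q ≠ 0) (hNq : N ∣ q) :
    ∃ b : ℕ, b.Coprime q ∧ Odd b ∧ J((N : ℤ) | b) = -1 := by
  obtain ⟨s, m, hm, hs⟩ := Nat.sq_mul_squarefree N
  have hs1 : s ≠ 1 := by
    rintro rfl
    exact hN ⟨m, by rw [← hm]; ring⟩
  have hmq : m ∣ q := (Dvd.intro _ (by rw [← hm]; ring : m * (m * s) = N)).trans hNq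
  have hsq : s ∣ q := (Dvd.intro_left _ hm).trans hNq
  suffices h : ∃ b : ℕ, b.Coprime q ∧ Odd b ∧ J((s : ℤ) | b) = -1 by
    obtain ⟨b, hb1, hb2, hb3⟩ := h
    refine ⟨b, hb1, hb2, ?_⟩
    rw [← hm]
    push_cast
    rw [jacobiSym.mul_left, hb3, jacobiSym.sq_one', one_mul]
    rw [Int.gcd_natCast_natCast]
    exact (hb1.coprime_dvd_right hmq).symm
  by_cases hr : ∃ r : ℕ, r.Prime ∧ r ≠ 2 ∧ r ∣ s
  · obtain ⟨r, hrp, hr2, s', rfl⟩ := hr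
    haveI := Fact.mk hrp
    have hrsz : r.Coprime s' := Nat.coprime_of_squarefree_mul hs
    obtain ⟨w, Q, hQr, hQ⟩ := Nat.exists_eq_pow_mul_and_not_dvd hq r hrp.ne_one
    have hrQ : r.Coprime (8 * Q) := by
      refine Nat.Coprime.mul_right ?_ ((Nat.Prime.coprime_iff_not_dvd hrp).2 hQr)
      rw [show 8 = 2 ^ 3 by norm_num]
      exact Nat.Coprime.pow_right _ ((Nat.coprime_primes hrp Nat.prime_two).2 hr2)
    have hszQ : s' ∣ Q := by
      have : s' ∣ r ^ w * Q := hQ ▸ (Dvd.intro_left r rfl).trans hsq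
      exact (Nat.Coprime.pow_right w hrsz.symm).dvd_of_dvd_mul_left this
    obtain ⟨g, hg⟩ := FiniteField.exists_nonsquare (F := ZMod r) (by rwa [ZMod.ringChar_zmod_n])
    obtain ⟨b, hbr, hbQ⟩ := Nat.chineseRemainder hrQ g.val 1
    have hb8 : b ≡ 1 [MOD 8] := hbQ.of_mul_right Q
    have hbodd : Odd b := Nat.odd_iff.2 (hb8.of_dvd (by norm_num : 2 ∣ 8))
    have hb4 : b % 4 = 1 := hb8.of_dvd (by norm_num : 4 ∣ 8)
    have hbg : ((b : ℤ) : ZMod r) = g := by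
      have := (ZMod.natCast_eq_natCast_iff b g.val r).2 hbr
      rw [Int.cast_natCast, this, ZMod.natCast_zmod_val]
    have hbJ : J((b : ℤ) | r) = -1 := by
      rw [ZMod.nonsquare_iff_jacobiSym_eq_neg_one, hbg]
      exact hg
    refine ⟨b, ?_, hbodd, ?_⟩
    · rw [hQ]
      refine Nat.Coprime.mul_right (Nat.Coprime.pow_right _ ?_) ?_
      · have h0 : J((b : ℤ) | r) ≠ 0 := by rw [hbJ]; norm_num
        by_contra hc
        exact h0 (jacobiSym.eq_zero_iff.2 ⟨hrp.ne_zero, by rwa [Int.gcd_natCast_natCast]⟩)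
      · have : b ≡ 1 [MOD Q] := hbQ.of_mul_left 8
        rw [Nat.coprime_iff_gcd_eq_one, this.gcd_eq, Nat.gcd_one_left]
    · push_cast
      rw [jacobiSym.mul_left,
        jacobiSym.quadratic_reciprocity_one_mod_four' (hrp.odd_of_ne_two hr2) hb4, hbJ,
        jacobiSym.mod_right' s' hbodd]
      have h1 : b ≡ 1 [MOD 4 * s'] := hbQ.of_dvd (Nat.mul_dvd_mul (by norm_num) hszQ)
      have hsz : s' ≠ 0 := by rintro rfl; simp at hs
      have h2 : b % (4 * s') = 1 := by
        rw [h1]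
        exact Nat.mod_eq_of_lt (by omega)
      rw [h2, jacobiSym.one_right]; norm_num
  · push Not at hr
    have hs2 : s = 2 := by
      obtain ⟨r, hrp, hrs⟩ := Nat.exists_prime_and_dvd hs1
      have h2 : r = 2 := by
        by_contra h
        exact hr r hrp h hrs
      subst h2
      obtain ⟨t, rfl⟩ := hrs
      by_cases ht : t = 1
      · rw [ht]
      · obtain ⟨r, hrp, hrt⟩ := Nat.exists_prime_and_dvd ht
        have h2 : r = 2 := by
          by_contra h
          exact hr r hrp h (hrt.trans (Dvd.intro_left 2 rfl))
        subst h2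
        have := Nat.coprime_of_squarefree_mul hs
        rw [Nat.Prime.coprime_iff_not_dvd hrp] at this
        exact absurd hrt this
    subst hs2
    obtain ⟨w, Q, hQr, hQ⟩ := Nat.exists_eq_pow_mul_and_not_dvd hq 2 (by norm_num)
    have h2Q : Nat.Coprime 2 Q := (Nat.Prime.coprime_iff_not_dvd Nat.prime_two).2 hQr
    have h8Q : Nat.Coprime 8 Q := by
      rw [show 8 = 2 ^ 3 by norm_num]
      exact Nat.Coprime.pow_left _ h2Q
    obtain ⟨b, hb8, hbQ⟩ := Nat.chineseRemainder h8Q 5 1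
    have hbodd : Odd b := Nat.odd_iff.2 (hb8.of_dvd (by norm_num : 2 ∣ 8))
    refine ⟨b, ?_, hbodd, ?_⟩
    · rw [hQ]
      refine Nat.Coprime.mul_right (Nat.Coprime.pow_right _ ?_) ?_
      · exact Nat.coprime_two_right.2 hbodd
      · rw [Nat.coprime_iff_gcd_eq_one, hbQ.gcd_eq, Nat.gcd_one_left]
    · push_cast
      rw [jacobiSym.at_two hbodd, (ZMod.natCast_eq_natCast_iff b 5 8).2 hb8]
      decide

lemma sum_jacobi_eq_zero {N q : ℕ} [NeZero q] (hN : ¬ IsSquare N) (h : 4 * N ∣ q) :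
    ∑ u : (ZMod q)ˣ, J((N : ℤ) | (u : ZMod q).val) = 0 := by
  have h2 : 2 ∣ q := (Dvd.intro _ (by ring : 2 * (2 * N) = 4 * N)).trans h
  obtain ⟨b, hbq, hbodd, hbJ⟩ := exists_jacobi_neg_one hN (NeZero.ne q)
    ((Dvd.intro_left 4 rfl).trans h)
  have key : ∀ u : (ZMod q)ˣ, J((N : ℤ) | ((ZMod.unitOfCoprime b hbq * u : (ZMod q)ˣ) : ZMod q).val)
      = - J((N : ℤ) | (u : ZMod q).val) := by
    intro u
    have hu := odd_unit_val h2 u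
    have e : ((ZMod.unitOfCoprime b hbq * u : (ZMod q)ˣ) : ZMod q)
        = ((b * (u : ZMod q).val : ℕ) : ZMod q) := by
      push_cast
      rw [ZMod.natCast_zmod_val, ZMod.coe_unitOfCoprime]
    rw [e, jacobi_val h h2 (hbodd.mul hu), jacobiSym.mul_right' _ hbodd.pos.ne' hu.pos.ne', hbJ]
    ring
  have h3 := Equiv.sum_comp (Equiv.mulLeft (ZMod.unitOfCoprime b hbq))
    (fun u : (ZMod q)ˣ => J((N : ℤ) | (u : ZMod q).val))
  simp only [Equiv.coe_mulLeft, key, Finset.sum_neg_distrib] at h3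
  omega

lemma jacobi_prod (T : Finset ℕ) (b : ℕ) :
    J(((∏ z ∈ T, z : ℕ) : ℤ) | b) = ∏ z ∈ T, J((z : ℤ) | b) := by
  classical
  induction T using Finset.induction_on with
  | empty => simp
  | insert a s ha ih =>
    rw [Finset.prod_insert ha, Finset.prod_insert ha]
    push_cast at ih ⊢
    rw [jacobiSym.mul_left, ih]

/-- Units with the prescribed sign pattern. -/
noncomputable def goodUnits (S : Finset ℕ) (ε : ℕ → ℤ) (q : ℕ) [NeZero q] : Finset (ZMod q)ˣ :=
  Finset.univ.filter fun u => ∀ z ∈ S, J((z : ℤ) | (u : ZMod q).val) = ε z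

lemma card_goodUnits (S : Finset ℕ) (hpos : ∀ z ∈ S, 0 < z)
    (hsq : ∀ T ⊆ S, T.Nonempty → ¬ IsSquare (∏ z ∈ T, z))
    (ε : ℕ → ℤ) (hε : ∀ z ∈ S, ε z = 1 ∨ ε z = -1) (q : ℕ) [NeZero q]
    (hq : q = 4 * ∏ z ∈ S, z) :
    (goodUnits S ε q).card * 2 ^ S.card = q.totient := by
  classical
  have hcop : ∀ (u : (ZMod q)ˣ), ∀ z ∈ S, J((z : ℤ) | (u : ZMod q).val) = 1 ∨
      J((z : ℤ) | (u : ZMod q).val) = -1 := by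
    intro u z hz
    apply jacobiSym.eq_one_or_neg_one
    rw [Int.gcd_natCast_natCast]
    refine ((ZMod.val_coe_unit_coprime u).coprime_dvd_right ?_).symm
    rw [hq]
    exact (Finset.dvd_prod_of_mem _ hz).mul_left 4
  have h1 : ∑ u : (ZMod q)ˣ, ∏ z ∈ S, (1 + ε z * J((z : ℤ) | (u : ZMod q).val))
      = (goodUnits S ε q).card * 2 ^ S.card := by
    unfold goodUnits
    rw [Finset.card_filter]
    push_cast
    rw [Finset.sum_mul]
    refine Finset.sum_congr rfl fun u _ => ?_
    split_ifs with hu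
    · rw [one_mul, ← Finset.prod_const]
      refine Finset.prod_congr rfl fun z hz => ?_
      rw [hu z hz]
      rcases hε z hz with h | h <;> rw [h] <;> norm_num
    · push Not at hu
      obtain ⟨z, hz, hne⟩ := hu
      rw [zero_mul]
      refine Finset.prod_eq_zero hz ?_
      rcases hε z hz with h | h <;> rcases hcop u z hz with h' | h' <;> rw [h, h'] at hne ⊢ <;> simp_all
  have h2 : ∑ u : (ZMod q)ˣ, ∏ z ∈ S, (1 + ε z * J((z : ℤ) | (u : ZMod q).val)) = q.totient := by
    simp_rw [Finset.prod_one_add]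
    rw [Finset.sum_comm, Finset.sum_eq_single ∅]
    · simp [ZMod.card_units_eq_totient]
    · intro T hT hne
      have hTS := Finset.mem_powerset.1 hT
      simp_rw [Finset.prod_mul_distrib, ← jacobi_prod]
      rw [← Finset.mul_sum, sum_jacobi_eq_zero (hsq T hTS (Finset.nonempty_iff_ne_empty.2 hne)),
        mul_zero]
      rw [hq]
      exact Nat.mul_dvd_mul_left 4 (Finset.prod_dvd_prod_of_subset _ _ _ hTS)
    · intro h
      exact absurd (Finset.empty_mem_powerset S) h
  exact_mod_cast h1.symm.trans h2

lemma pattern_iff (S : Finset ℕ) (ε : ℕ → ℤ) (hε : ∀ z ∈ S, ε z = 1 ∨ ε z = -1) (q : ℕ) [NeZero q]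
    (hq : q = 4 * ∏ z ∈ S, z) (p : ℕ) :
    (∃ hp : Fact p.Prime, p ≠ 2 ∧ ∀ z ∈ S, @legendreSym p hp (z : ℤ) = ε z) ↔
      p.Prime ∧ ∃ u ∈ goodUnits S ε q, (p : ZMod q) = u := by
  have h2 : 2 ∣ q := by rw [hq]; omega
  have h4 : ∀ z ∈ S, 4 * z ∣ q := fun z hz => by
    rw [hq]; exact Nat.mul_dvd_mul_left 4 (Finset.dvd_prod_of_mem _ hz)
  constructor
  · rintro ⟨hp, hp2, h⟩
    refine ⟨hp.1, ?_⟩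
    have hodd := hp.1.odd_of_ne_two hp2
    have hcop : p.Coprime q := by
      rw [hq]
      refine Nat.Coprime.mul_right ?_ (Nat.Coprime.prod_right fun z hz => ?_)
      · rw [show 4 = 2 ^ 2 by norm_num]
        exact Nat.Coprime.pow_right _ (Nat.coprime_two_right.2 hodd)
      · have h0 : J((z : ℤ) | p) ≠ 0 := by
          rw [← jacobiSym.legendreSym.to_jacobiSym, h z hz]
          rcases hε z hz with h | h <;> rw [h] <;> norm_num
        by_contra hc
        exact h0 (jacobiSym.eq_zero_iff.2 ⟨hp.1.ne_zero, by
          rw [Int.gcd_natCast_natCast, Nat.gcd_comm]; exact hc⟩)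
    refine ⟨ZMod.unitOfCoprime p hcop, ?_, (ZMod.coe_unitOfCoprime p hcop).symm⟩
    refine Finset.mem_filter.2 ⟨Finset.mem_univ _, fun z hz => ?_⟩
    rw [ZMod.coe_unitOfCoprime, jacobi_val (h4 z hz) h2 hodd, ← jacobiSym.legendreSym.to_jacobiSym, h z hz]
  · rintro ⟨hp, u, hu, hpu⟩
    have hcop : p.Coprime q := (ZMod.isUnit_iff_coprime p q).1 (hpu ▸ u.isUnit)
    have hodd : Odd p := Nat.coprime_two_right.1 (hcop.coprime_dvd_right h2)
    refine ⟨⟨hp⟩, ?_, fun z hz => ?_⟩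
    · rintro rfl
      exact absurd hodd (by decide)
    · haveI := Fact.mk hp
      rw [jacobiSym.legendreSym.to_jacobiSym, ← jacobi_val (h4 z hz) h2 hodd, hpu]
      exact (Finset.mem_filter.1 hu).2 z hz

end

section
open Filter Topology

lemma num_eq (S : Finset ℕ) (ε : ℕ → ℤ) (hε : ∀ z ∈ S, ε z = 1 ∨ ε z = -1) (q : ℕ) [NeZero q]
    (hq : q = 4 * ∏ z ∈ S, z) (x : ℕ) :
    {p : ℕ | (∃ hp : Fact p.Prime, p ≠ 2 ∧ ∀ z ∈ S, @legendreSym p hp (z : ℤ) = ε z) ∧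
      p ≤ x}.ncard = ∑ u ∈ goodUnits S ε q, (primesRC (u : ZMod q) x).card := by
  classical
  rw [← Finset.card_biUnion, ← Set.ncard_coe_finset]
  · congr 1
    ext p
    simp only [Set.mem_setOf_eq, pattern_iff S ε hε q hq p, Finset.coe_biUnion, Set.mem_iUnion,
      primesRC, Finset.coe_filter, Finset.mem_Icc, Finset.mem_coe]
    constructor
    · rintro ⟨⟨hp, u, hu, e⟩, hx⟩
      exact ⟨u, hu, ⟨hp.one_le, hx⟩, hp, e⟩
    · rintro ⟨u, hu, ⟨_, hx⟩, hp, e⟩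
      exact ⟨⟨hp, u, hu, e⟩, hx⟩
  · intro u _ v _ huv
    refine Finset.disjoint_left.2 fun p hp hp' => huv ?_
    have h1 := (Finset.mem_filter.1 hp).2.2
    have h2 := (Finset.mem_filter.1 hp').2.2
    exact Units.ext (h1.symm.trans h2)

lemma den_eq (x : ℕ) :
    {p : ℕ | p.Prime ∧ p ≤ x}.ncard = (primesRC (1 : ZMod 1) x).card := by
  rw [← Set.ncard_coe_finset]
  congr 1
  ext p
  simp only [Set.mem_setOf_eq, primesRC, Finset.coe_filter, Finset.mem_Icc]
  constructor
  · rintro ⟨hp, hx⟩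
    exact ⟨⟨hp.one_le, hx⟩, hp, Subsingleton.elim _ _⟩
  · rintro ⟨⟨_, hx⟩, hp, _⟩
    exact ⟨hp, hx⟩

theorem main (S : Finset ℕ) 
    (hpos : ∀ z ∈ S, 0 < z)
    (hsq : ∀ T ⊆ S, T.Nonempty → ¬ IsSquare (∏ z ∈ T, z))
    (ε : ℕ → ℤ) (hε : ∀ z ∈ S, ε z = 1 ∨ ε z = -1) :
    Tendsto (fun x : ℕ =>
        (({p : ℕ | (∃ hp : Fact p.Prime, p ≠ 2 ∧ ∀ z ∈ S, @legendreSym p hp (z : ℤ) = ε z) ∧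
            p ≤ x}.ncard : ℝ)) / ({p : ℕ | p.Prime ∧ p ≤ x}.ncard : ℝ))
      atTop (𝓝 ((2 : ℝ) ^ (-(S.card : ℤ)))) := by
  obtain ⟨q, hq⟩ : ∃ q, q = 4 * ∏ z ∈ S, z := ⟨_, rfl⟩
  have hq0 : q ≠ 0 := by
    rw [hq]
    exact mul_ne_zero (by norm_num) (Finset.prod_ne_zero_iff.2 fun z hz => (hpos z hz).ne')
  haveI : NeZero q := ⟨hq0⟩
  have hden := piRC_tendsto (q := 1) (a := 1) isUnit_one
  have hnum : Tendsto (fun n : ℕ => ∑ u ∈ goodUnits S ε q,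
      ((primesRC (u : ZMod q) n).card : ℝ) * Real.log n / n) atTop
      (𝓝 (∑ u ∈ goodUnits S ε q, (q.totient : ℝ)⁻¹)) :=
    tendsto_finsetSum _ fun u _ => piRC_tendsto u.isUnit
  have h := hnum.div hden (by simp)
  have hlim : (∑ u ∈ goodUnits S ε q, (q.totient : ℝ)⁻¹) / ((Nat.totient 1 : ℝ)⁻¹)
      = (2 : ℝ) ^ (-(S.card : ℤ)) := by
    have hc := card_goodUnits S hpos hsq ε hε q hq
    have hc' : ((goodUnits S ε q).card : ℝ) * 2 ^ S.card = q.totient := by exact_mod_cast hc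
    have ht : (q.totient : ℝ) ≠ 0 := by
      exact_mod_cast (Nat.totient_pos.2 (Nat.pos_of_ne_zero hq0)).ne'
    rw [Finset.sum_const, nsmul_eq_mul, zpow_neg, zpow_natCast, Nat.totient_one, Nat.cast_one,
      inv_one, div_one]
    field_simp
    exact hc'
  rw [hlim] at h
  refine h.congr' ?_
  filter_upwards [eventually_ge_atTop 2] with n hn
  have hn0 : (n : ℝ) ≠ 0 := by positivity
  have hl : Real.log n ≠ 0 := (Real.log_pos (by exact_mod_cast hn)).ne'
  simp only [Pi.div_apply]
  rw [num_eq S ε hε q hq, den_eq, ← Finset.sum_div, ← Finset.sum_mul, Nat.cast_sum]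
  rw [div_div_div_cancel_right₀ hn0, mul_div_mul_right _ _ hl]

end

end PNTAP
end

/-- Theorem 5.15 (Filaseta–Richman): if `S` is a nonempty finite set of positive integers such
that the product of the elements of every nonempty subset of `S` is not a square, and `ε` is any
choice of signs on `S`, then the set of (odd) primes `p` with `χ_p ≡ ε` on `S` has natural
density `2 ^ (-|S|)` in the primes. -/
theorem density_setOf_legendreSym_pattern (S : Finset ℕ) (hS : S.Nonempty)
    (hpos : ∀ z ∈ S, 0 < z)
    (hsq : ∀ T ⊆ S, T.Nonempty → ¬ IsSquare (∏ z ∈ T, z))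
    (ε : ℕ → ℤ) (hε : ∀ z ∈ S, ε z = 1 ∨ ε z = -1) :
    Filter.Tendsto (fun x : ℕ =>
        (({p : ℕ | (∃ hp : Fact p.Prime, p ≠ 2 ∧ ∀ z ∈ S, @legendreSym p hp (z : ℤ) = ε z) ∧
            p ≤ x}.ncard : ℝ)) / ({p : ℕ | p.Prime ∧ p ≤ x}.ncard : ℝ))
      Filter.atTop (nhds ((2 : ℝ) ^ (-(S.card : ℤ)))) := by
  exact PNTAP.main S hpos hsq ε hε
end
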